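/- Let f be a homeomorphism of the open annulus 𝔸 isotopic to the identity and satisfying the intersection property, and let F be a lift of f to ℝ². Suppose that there exist two positively recurrent points z₁ and z₂ of f such that −∞ ≤ ρ^−(F;z₁) < ρ^+(F;z₂) ≤ +∞. Then for any rational number p/q ∈ ]ρ^−(F;z₁), ρ^+(F;z₂)[ written in irreducible form with q ≥ 1, there exists a periodic point z of f of period q whose rotation number is p/q, i.e. a point z with f^q(z) = z and F^q(z̃) = T^p(z̃) for z̃ ∈ π^{−1}(z). -/

import Mathlib

open Filter Topology Set

noncomputable section

/-- The plane ℝ². -/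
abbrev Plane := ℝ × ℝ

/-- The open annulus 𝔸 = ℝ/ℤ × ℝ. -/
abbrev Ann := AddCircle (1 : ℝ) × ℝ

/-- The covering map π : ℝ² → 𝔸, (x,y) ↦ (x + ℤ, y). -/
def prj : Plane → Ann := fun p => ((p.1 : AddCircle (1 : ℝ)), p.2)

/-- The deck transformation T^k : ℝ² → ℝ², (x,y) ↦ (x + k, y). -/
def Tr (k : ℤ) : Plane → Plane := fun p => (p.1 + (k : ℝ), p.2)

/-- `F` is a lift of `f` to the universal cover ℝ² of the annulus. -/
def IsLift (f : Ann ≃ₜ Ann) (F : Plane ≃ₜ Plane) : Prop :=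
  ∀ p : Plane, prj (F p) = f (prj p)

/-- `f` is isotopic to the identity: there is a continuous family of homeomorphisms
joining the identity to `f`. -/
def IsotopicToId (f : Ann ≃ₜ Ann) : Prop :=
  ∃ H : ℝ → Ann → Ann,
    Continuous (fun q : ℝ × Ann => H q.1 q.2) ∧
    (∀ t : ℝ, ∃ h : Ann ≃ₜ Ann, ∀ z, H t z = h z) ∧
    (∀ z, H 0 z = z) ∧ (∀ z, H 1 z = f z)

/-- An essential circle in 𝔸: a simple closed curve which is not null-homotopic. -/
def IsEssentialCircle (c : Set Ann) : Prop :=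
  ∃ φ : C(AddCircle (1 : ℝ), Ann), Function.Injective φ ∧ Set.range φ = c ∧
    ¬ ∃ pt : Ann, φ.Homotopic (ContinuousMap.const _ pt)

/-- `f` has the intersection property: every essential circle meets its image. -/
def IntersectionProperty (f : Ann → Ann) : Prop :=
  ∀ c : Set Ann, IsEssentialCircle c → (c ∩ f '' c).Nonempty

/-- `z` is a positively recurrent point of `g`: some subsequence of the forward orbit
of `z` converges to `z`. -/
def PosRec {X : Type*} [TopologicalSpace X] (g : X → X) (z : X) : Prop :=
  ∃ φ : ℕ → ℕ, StrictMono φ ∧ Tendsto (fun k => g^[φ k] z) atTop (𝓝 z)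

/-- The positively recurrent point `z` has rotation number `ρ` for the lift `F` of `f`. -/
def HasRotNum (f : Ann → Ann) (F : Plane → Plane) (z : Ann) (ρ : ℝ) : Prop :=
  PosRec f z ∧
    ∀ zt : Plane, prj zt = z →
      ∀ φ : ℕ → ℕ, StrictMono φ →
        Tendsto (fun k => f^[φ k] z) atTop (𝓝 z) →
        Tendsto (fun k => ((F^[φ k] zt).1 - zt.1) / (φ k : ℝ)) atTop (𝓝 ρ)

/-- The rotation set Rot(F): the set of rotation numbers of positively recurrent
points of `f`. -/
def Rot (f : Ann → Ann) (F : Plane → Plane) : Set ℝ := {ρ | ∃ z, HasRotNum f F z ρ}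

/-- The region `L(Γ)` of the plane on the left (west) of a line `Γ` (as a subset of ℝ²):
points lying in the connected component of the complement of `Γ` containing all far-west
points of the horizontal axis. -/
def Lset (Γ : Set Plane) : Set Plane :=
  {p | ∃ s : ℝ, ∀ x ≤ s, p ∈ connectedComponentIn Γᶜ ((x, 0) : Plane)}

/-- The region `R(Γ)` of the plane on the right (east) of a line `Γ`. -/
def Rset (Γ : Set Plane) : Set Plane :=
  {p | ∃ s : ℝ, ∀ x ≥ s, p ∈ connectedComponentIn Γᶜ ((x, 0) : Plane)}

/-- The relation `Γ₁ < Γ₂` on (essential, oriented from south to north) lines: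
`Cl(L(Γ₁)) ⊆ L(Γ₂)`. -/
def lineLT (Γ₁ Γ₂ : Set Plane) : Prop := closure (Lset Γ₁) ⊆ Lset Γ₂

/-- An essential line in ℝ², oriented from south to north: a properly embedded copy of ℝ
whose second coordinate tends to ±∞ at ±∞. -/
def IsEssLinePlane (Γ : ℝ → Plane) : Prop :=
  Continuous Γ ∧ Function.Injective Γ ∧ IsProperMap Γ ∧
    Tendsto (fun t => (Γ t).2) atTop atTop ∧ Tendsto (fun t => (Γ t).2) atBot atBot

/-- An essential line in the annulus 𝔸: a properly embedded simple path joining one end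
to the other. -/
def IsEssLineAnn (γ : ℝ → Ann) : Prop :=
  Continuous γ ∧ Function.Injective γ ∧ IsProperMap γ ∧
    ((Tendsto (fun t => (γ t).2) atTop atTop ∧ Tendsto (fun t => (γ t).2) atBot atBot) ∨
     (Tendsto (fun t => (γ t).2) atTop atBot ∧ Tendsto (fun t => (γ t).2) atBot atTop))

/-- An oriented essential line in 𝔸 joining the lower end S to the upper end N. -/
def IsEssLineAnnSN (γ : ℝ → Ann) : Prop :=
  Continuous γ ∧ Function.Injective γ ∧ IsProperMap γ ∧
    Tendsto (fun t => (γ t).2) atTop atTop ∧ Tendsto (fun t => (γ t).2) atBot atBot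

/-- The set ℰ(z) ⊆ [-∞,+∞] of asymptotic rotation speeds along subsequences of positive
integers for which the orbit of `z` returns to `z`. -/
def ESet (f : Ann → Ann) (F : Plane → Plane) (z : Ann) (zt : Plane) : Set EReal :=
  {ρ | ∃ φ : ℕ → ℕ, StrictMono φ ∧ (∀ k, 0 < φ k) ∧
      Tendsto (fun k => f^[φ k] z) atTop (𝓝 z) ∧
      Tendsto (fun k => ((((F^[φ k] zt).1 - zt.1) / (φ k : ℝ) : ℝ) : EReal)) atTop (𝓝 ρ)}

/-!
Suppose that `G = T^(-p) F^q` has no fixed point. Brouwer's lemma forbids periodic points: pushing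
along two free discs turns an orbit of period `n ≥ 3` of a fixed point free map into an orbit of
period `n - 1` of another one, and a 2-cycle `{x, G x}` is excluded by following the direction of
`Φ t (G y) - Φ t y` along an isotopy `Φ` from the identity to `G`. Pushing along the links of a
chain gives Franks' lemma: when the plane is cut into free bricks, no brick can be reached from
itself by a chain of bricks each of which meets the image of the preceding one.

Cut the plane into free bricks periodically under some `T^N`, and let `b₁`, `b₂` be the bricks
containing translates of lifts of `z₁`, `z₂`. As `z₁` returns at speeds less than `p/q`, `b₁`
reaches one of its translates to the left, and in the same way `b₂` reaches one to the right. If no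
translate of `b₂` could be reached from `b₁`, the bricks reachable from `b₁` would form an attractor
and those leading to `b₂` a repeller disjoint from it, both going around the annulus. This yields an
attractor which separates the two ends of the annulus, and an essential circle close to its boundary
is disjoint from its image, against the intersection property. So translates of `b₁` and `b₂` reach
each other, and enough turns to the right at `b₂` bring `b₁` to one of its translates to the right.
Together with the translate to the left this closes up a chain from `b₁` to itself.
-/

/-! ### Isotopies through injective maps -/

section InjIsotopic

variable {X : Type*} [TopologicalSpace X]

/-- `G` is joined to the identity by a continuous family of injective maps. This is the only trace
of an isotopy that Brouwer's lemma needs, and unlike homeomorphy of each stage it is stable under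
the elementary operations below without any work on inverses. -/
def InjIsotopic (G : X → X) : Prop :=
  ∃ Φ : ℝ → X → X, Continuous (fun q : ℝ × X ↦ Φ q.1 q.2) ∧
    (∀ t, Function.Injective (Φ t)) ∧ (∀ x, Φ 0 x = x) ∧ ∀ x, Φ 1 x = G x

namespace InjIsotopic

protected lemma id : InjIsotopic (id : X → X) :=
  ⟨fun _ x ↦ x, continuous_snd, fun _ ↦ Function.injective_id, fun _ ↦ rfl, fun _ ↦ rfl⟩

lemma comp {G H : X → X} (hG : InjIsotopic G) (hH : InjIsotopic H) : InjIsotopic (G ∘ H) := by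
  obtain ⟨Φ, hΦ, hΦinj, hΦ₀, hΦ₁⟩ := hG
  obtain ⟨Ψ, hΨ, hΨinj, hΨ₀, hΨ₁⟩ := hH
  exact ⟨fun t x ↦ Φ t (Ψ t x), hΦ.comp (continuous_fst.prodMk hΨ),
    fun t ↦ (hΦinj t).comp (hΨinj t), fun x ↦ by simp [hΦ₀, hΨ₀], fun x ↦ by simp [hΦ₁, hΨ₁]⟩

lemma symm {G : X ≃ₜ X} (hG : InjIsotopic G) : InjIsotopic G.symm := by
  obtain ⟨Φ, hΦ, hinj, h₀, h₁⟩ := hG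
  exact ⟨fun t x ↦ Φ (1 - t) (G.symm x),
    hΦ.comp ((continuous_const.sub continuous_fst).prodMk (G.symm.continuous.comp continuous_snd)),
    fun t ↦ (hinj _).comp G.symm.injective, fun x ↦ by simp [h₁], fun x ↦ by simp [h₀]⟩

lemma iterate {G : X → X} (hG : InjIsotopic G) (n : ℕ) : InjIsotopic G^[n] := by
  induction n with
  | zero => exact .id
  | succ n ih => exact ih.comp hG

end InjIsotopic

lemma homeomorph_coe_pow (G : X ≃ₜ X) (n : ℕ) : ⇑(G ^ n) = G^[n] := by
  induction n with
  | zero => rfl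
  | succ n ih => rw [pow_succ, Function.iterate_succ, ← ih]; rfl

/-- There is a homeomorphism supported in `C`, isotopic to the identity through injective maps,
which sends `p` to `q`. -/
def PushableIn (C : Set X) (p q : X) : Prop :=
  ∃ h : X ≃ₜ X, InjIsotopic h ∧ (∀ x ∉ C, h x = x) ∧ h p = q

namespace PushableIn

variable {C D : Set X} {p q r : X}

lemma symm (h : PushableIn C p q) : PushableIn C q p := by
  obtain ⟨h, hI, hoff, hpq⟩ := h
  exact ⟨h.symm, hI.symm, fun x hx ↦ by rw [Homeomorph.symm_apply_eq, hoff x hx],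
    by rw [Homeomorph.symm_apply_eq, hpq]⟩

lemma trans (hpq : PushableIn C p q) (hqr : PushableIn C q r) : PushableIn C p r := by
  obtain ⟨h, hI, hoff, rfl⟩ := hpq
  obtain ⟨k, kI, koff, rfl⟩ := hqr
  exact ⟨h.trans k, kI.comp hI, fun x hx ↦ by simp [hoff x hx, koff x hx], rfl⟩

lemma mono (h : PushableIn C p q) (hCD : C ⊆ D) : PushableIn D p q := by
  obtain ⟨h, hI, hoff, hpq⟩ := h
  exact ⟨h, hI, fun x hx ↦ hoff x fun hxC ↦ hx (hCD hxC), hpq⟩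

end PushableIn

end InjIsotopic

lemma mapsTo_of_forall_notMem_eq {X : Type*} {h : X → X} (hinj : Function.Injective h)
    {C : Set X} (hoff : ∀ x ∉ C, h x = x) : MapsTo h C C := by
  intro x hx
  by_contra hn
  exact hn (by rwa [hinj (hoff _ hn)])

section Perturbation

open scoped NNReal

variable {E : Type*} [NormedAddCommGroup E] [NormedSpace ℝ E]

lemma injIsotopic_id_add_of_lipschitzWith {K : ℝ≥0} (hK : K < 1) {g : E → E}
    (hg : LipschitzWith K g) : InjIsotopic fun x ↦ x + g x := by
  set c : ℝ → ℝ := fun t ↦ projIcc (0 : ℝ) 1 zero_le_one t with hc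
  have hc_cont : Continuous c := continuous_subtype_val.comp continuous_projIcc
  have hc_norm (t : ℝ) : ‖c t‖₊ ≤ 1 := by
    rw [← NNReal.coe_le_coe, coe_nnnorm, Real.norm_of_nonneg (projIcc _ _ _ t).2.1]
    exact (projIcc _ _ _ t).2.2
  have hg_cont := hg.continuous
  refine ⟨fun t x ↦ x + c t • g x, by fun_prop, fun t ↦ ?_, fun x ↦ by simp [hc],
    fun x ↦ by simp [hc]⟩
  have hlip : LipschitzWith (‖c t‖₊ * K) fun x ↦ c t • g x := (lipschitzWith_smul (c t)).comp hg
  refine (AntilipschitzWith.id.add_lipschitzWith hlip ?_).injective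
  rw [inv_one]
  exact (mul_le_of_le_one_left' (hc_norm t)).trans_lt hK

lemma exists_homeomorph_id_add_of_lipschitzWith [CompleteSpace E] {K : ℝ≥0} (hK : K < 1)
    {g : E → E} (hg : LipschitzWith K g) :
    ∃ h : E ≃ₜ E, InjIsotopic h ∧ ∀ x, h x = x + g x := by
  have happ : ApproximatesLinearOn (fun x ↦ x + g x)
      (ContinuousLinearEquiv.refl ℝ E : E →L[ℝ] E) univ K := by
    intro x _ y _
    have hdiff : x + g x - (y + g y) - (x - y) = g x - g y := by abel
    simpa [hdiff] using hg.norm_sub_le x y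
  have hsmall : Subsingleton E ∨ K < ‖((ContinuousLinearEquiv.refl ℝ E).symm : E →L[ℝ] E)‖₊⁻¹ := by
    refine (subsingleton_or_nontrivial E).imp_right fun (_ : Nontrivial E) ↦ ?_
    have hid : ‖ContinuousLinearMap.id ℝ E‖₊ = 1 := NNReal.eq ContinuousLinearMap.norm_id
    simpa [hid] using hK
  exact ⟨happ.toHomeomorph _ hsmall, injIsotopic_id_add_of_lipschitzWith hK hg, fun _ ↦ rfl⟩

lemma lipschitzWith_bump_smul (a u : E) {r : ℝ≥0} (hr : 0 < r) :
    LipschitzWith (‖u‖₊ / r) fun x ↦ max 0 (1 - ‖x - a‖ / r) • u := by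
  refine LipschitzWith.of_dist_le_mul fun x y ↦ ?_
  have hbump : |max 0 (1 - ‖x - a‖ / r) - max 0 (1 - ‖y - a‖ / r)| ≤ dist x y / r := by
    refine (abs_max_sub_max_le_max _ _ _ _).trans (max_le ?_ ?_)
    · rw [sub_self, abs_zero]
      positivity
    · have hsub : (1 - ‖x - a‖ / r) - (1 - ‖y - a‖ / r) = (‖y - a‖ - ‖x - a‖) / r := by ring
      rw [hsub, abs_div, NNReal.abs_eq, dist_comm, dist_eq_norm]
      gcongr
      simpa using abs_norm_sub_norm_le (y - a) (x - a)
  rw [dist_eq_norm, ← sub_smul, norm_smul, Real.norm_eq_abs]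
  calc _ ≤ dist x y / r * ‖u‖ := by gcongr
    _ = _ := by push_cast; ring

variable [CompleteSpace E]

lemma pushableIn_ball {a b : E} {r : ℝ} (hb : b ∈ Metric.ball a r) :
    PushableIn (Metric.ball a r) a b := by
  have hr : 0 < r := Metric.pos_of_mem_ball hb
  lift r to ℝ≥0 using hr.le
  rw [NNReal.coe_pos] at hr
  have hK : ‖b - a‖₊ / r < 1 := by
    rw [div_lt_one hr, ← NNReal.coe_lt_coe, coe_nnnorm, ← dist_eq_norm]
    exact hb
  obtain ⟨h, hI, hh⟩ :=
    exists_homeomorph_id_add_of_lipschitzWith hK (lipschitzWith_bump_smul a (b - a) hr)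
  refine ⟨h, hI, fun x hx ↦ ?_, by simp [hh]⟩
  rw [Metric.mem_ball, dist_eq_norm, not_lt] at hx
  have hbump : 1 - ‖x - a‖ / r ≤ 0 := by
    rwa [sub_nonpos, one_le_div (NNReal.coe_pos.mpr hr)]
  rw [hh, max_eq_left hbump, zero_smul, add_zero]

lemma pushableIn_of_isPreconnected {C : Set E} (ho : IsOpen C) (hc : IsPreconnected C) {p q : E}
    (hp : p ∈ C) (hq : q ∈ C) : PushableIn C p q := by
  refine hc.induction₂ (PushableIn C) (fun x hx ↦ ?_) (fun _ _ _ _ _ _ ↦ .trans)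
    (fun _ _ _ _ ↦ .symm) hp hq
  obtain ⟨r, hr, hb⟩ := Metric.isOpen_iff.mp ho x hx
  filter_upwards [mem_nhdsWithin_of_mem_nhds (Metric.ball_mem_nhds x hr)] with y hy
  exact (pushableIn_ball hy).mono hb

lemma exists_homeomorph_pushing {ι : Type*} (s : Finset ι) {C : ι → Set E} {p q : ι → E}
    (ho : ∀ k ∈ s, IsOpen (C k)) (hc : ∀ k ∈ s, IsPreconnected (C k))
    (hd : (s : Set ι).PairwiseDisjoint C) (hp : ∀ k ∈ s, p k ∈ C k) (hq : ∀ k ∈ s, q k ∈ C k) :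
    ∃ h : E ≃ₜ E, InjIsotopic h ∧ (∀ x, h x = x ∨ ∃ k ∈ s, x ∈ C k ∧ h x ∈ C k) ∧
      ∀ k ∈ s, h (p k) = q k := by
  classical
  induction s using Finset.induction_on with
  | empty => exact ⟨.refl _, .id, fun x ↦ .inl rfl, by simp⟩
  | insert m s hm ih =>
    rw [Finset.coe_insert, pairwiseDisjoint_insert_of_notMem (by simpa using hm)] at hd
    simp only [Finset.forall_mem_insert] at ho hc hp hq
    obtain ⟨h, hI, hoff, hpush⟩ := ih ho.2 hc.2 hd.1 hp.2 hq.2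
    obtain ⟨g, gI, goff, gpush⟩ := pushableIn_of_isPreconnected ho.1 hc.1 hp.1 hq.1
    have hdm : ∀ k ∈ s, ∀ x ∈ C k, x ∉ C m := fun k hk x hx hxm ↦
      disjoint_left.mp (hd.2 k hk) hxm hx
    refine ⟨h.trans g, gI.comp hI, fun x ↦ ?_, Finset.forall_mem_insert .. |>.mpr ⟨?_, ?_⟩⟩
    · rcases hoff x with hx | ⟨k, hk, hx, hhx⟩
      · by_cases hxm : x ∈ C m
        · refine .inr ⟨m, s.mem_insert_self m, hxm, ?_⟩
          simpa [hx] using mapsTo_of_forall_notMem_eq g.injective goff hxm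
        · exact .inl (by simp [hx, goff x hxm])
      · refine .inr ⟨k, Finset.mem_insert_of_mem hk, hx, ?_⟩
        simpa [goff _ (hdm k hk _ hhx)] using hhx
    · rcases hoff (p m) with hpm | ⟨k, hk, hpk, -⟩
      · simp [hpm, gpush]
      · exact absurd hp.1 (hdm k hk _ hpk)
    · intro k hk
      simp [hpush k hk, goff _ (hdm k hk _ (hq.2 k hk))]

end Perturbation

/-! ### Continuous logarithms -/

section Lifting

lemma eq_of_forall_mem_range_intCast {X : Type*} [TopologicalSpace X] [PreconnectedSpace X]
    {φ : X → ℝ} (hφ : Continuous φ) (hint : ∀ x, φ x ∈ range ((↑) : ℤ → ℝ)) (x y : X) :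
    φ x = φ y := by
  choose n hn using hint
  have hn_cont : Continuous n := by
    rw [Int.isClosedEmbedding_coe_real.isInducing.continuous_iff]
    exact hφ.congr fun x ↦ (hn x).symm
  rw [← hn x, ← hn y, PreconnectedSpace.constant inferInstance hn_cont]

lemma exists_continuous_exp_eq {X : Type*} [TopologicalSpace X] [SimplyConnectedSpace X]
    [LocallyPathConnectedSpace X] {g : X → ℂ} (hg : Continuous g) (h₀ : ∀ x, g x ≠ 0) :
    ∃ θ : X → ℂ, Continuous θ ∧ ∀ x, Complex.exp (θ x) = g x := by
  obtain ⟨a⟩ : Nonempty X := inferInstance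
  obtain ⟨θ, ⟨-, hθ⟩, -⟩ := Complex.isCoveringMapOn_exp.existsUnique_continuousMap_lifts ⟨g, hg⟩
    (a₀ := a) (e₀ := Complex.log (g a)) (Complex.exp_log (h₀ a)) fun x ↦ h₀ x
  exact ⟨θ, θ.continuous, congrFun hθ⟩

lemma eq_of_forall_exp_eq {X : Type*} [TopologicalSpace X] [PreconnectedSpace X] {u : X → ℂ}
    (hu : Continuous u) {k : ℂ} (hk : ∀ x, Complex.exp (u x) = k) (x y : X) : u x = u y :=
  Complex.isCoveringMap_exp.isSeparatedMap.const_of_comp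
    Complex.isCoveringMap_exp.isLocalHomeomorph.isLocallyInjective hu
    (fun a b ↦ Subtype.ext ((hk a).trans (hk b).symm)) x y

end Lifting

/-! ### Brouwer's lemma: fixed point free implies no periodic points -/

/-- `C` is free for `G`: it is disjoint from its image. -/
def IsFree {X : Type*} (G : X → X) (C : Set X) : Prop := ∀ x ∈ C, G x ∉ C

namespace IsFree

variable {X : Type*} {G : X → X} {C D : Set X}

lemma mono (hD : IsFree G D) (hCD : C ⊆ D) : IsFree G C :=
  fun x hx hGx ↦ hD x (hCD hx) (hCD hGx)

lemma image (hG : Function.Injective G) (hC : IsFree G C) : IsFree G (G '' C) := by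
  rintro _ ⟨x, hx, rfl⟩ hGx
  exact hC x hx ((hG.mem_set_image).mp hGx)

end IsFree

lemma comp_apply_ne_self {X : Type*} {G h : X → X} (hG : ∀ x, G x ≠ x)
    (hh : ∀ x, h x = x ∨ ∃ C, IsFree G C ∧ x ∈ C ∧ h x ∈ C) (x : X) : (G ∘ h) x ≠ x := by
  intro hx
  rcases hh x with hhx | ⟨C, hC, hxC, hhxC⟩
  · rw [Function.comp_apply, hhx] at hx
    exact hG x hx
  · exact hC _ hhxC (by rwa [← hx] at hxC)

/-- Brouwer's lemma for the period `n`. -/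
def BrouwerLemma (n : ℕ) : Prop :=
  ∀ G : Plane ≃ₜ Plane, InjIsotopic G → (∀ x, G x ≠ x) → ∀ x, G^[n] x ≠ x

-- If `G (G x) = x`, the values at `(t, G x)` and `(t, x)` of a logarithm of `Φ t (G y) - Φ t y`
-- differ by a constant `c` with `exp c = -1`, and comparing `t = 0` with `t = 1` gives `c = -c`.
lemma brouwerLemma_two : BrouwerLemma 2 := by
  intro G hG hfix x hx
  change G (G x) = x at hx
  obtain ⟨Φ, hΦ, hinj, h₀, h₁⟩ := hG
  set e := Complex.equivRealProdCLM.symm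
  have hne (q : ℝ × Plane) : e (Φ q.1 (G q.2) - Φ q.1 q.2) ≠ 0 := by
    rw [map_ne_zero_iff e e.injective, sub_ne_zero]
    exact fun h ↦ hfix _ (hinj _ h)
  have hcont : Continuous fun q : ℝ × Plane ↦ e (Φ q.1 (G q.2) - Φ q.1 q.2) :=
    e.continuous.comp
      ((hΦ.comp (continuous_fst.prodMk (G.continuous.comp continuous_snd))).sub hΦ)
  obtain ⟨θ, hθ, hexp⟩ := exists_continuous_exp_eq hcont hne
  have hspace (y z : Plane) : θ (1, y) - θ (0, G y) = θ (1, z) - θ (0, G z) := by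
    refine eq_of_forall_exp_eq (u := fun y ↦ θ (1, y) - θ (0, G y)) (k := 1) (by fun_prop)
      (fun y ↦ ?_) y z
    rw [Complex.exp_sub, hexp, hexp, div_eq_one_iff_eq (hne _)]
    simp [h₀, h₁]
  have htime (s t : ℝ) : θ (s, G x) - θ (s, x) = θ (t, G x) - θ (t, x) := by
    refine eq_of_forall_exp_eq (u := fun s ↦ θ (s, G x) - θ (s, x)) (k := -1) (by fun_prop)
      (fun s ↦ ?_) s t
    rw [Complex.exp_sub, hexp, hexp, div_eq_iff (hne _), hx, neg_one_mul, ← map_neg, neg_sub]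
  have hθx : θ (0, G x) = θ (0, x) := by
    have hspace_x := hspace x (G x)
    rw [hx] at hspace_x
    linear_combination (htime 0 1 - hspace_x) / 2
  have hexp_x : e (x - G x) = e (G x - x) := by
    simpa [hexp, h₀, hx] using congrArg Complex.exp hθx
  rw [e.injective.eq_iff, ← neg_sub, neg_eq_self, sub_eq_zero] at hexp_x
  exact hfix x hexp_x

lemma exists_forall_mem_thickening_notMem {X Y : Type*} [PseudoMetricSpace X] [MetricSpace Y]
    {H : X → Y} (hH : Continuous H) {K : Set X} {L : Set Y} (hK : IsCompact K) (hL : IsCompact L)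
    (h : ∀ x ∈ K, H x ∉ L) :
    ∃ δ > 0, ∀ x ∈ Metric.thickening δ K, H x ∉ Metric.thickening δ L := by
  have hdisj : Disjoint (H '' K) L := disjoint_left.mpr (forall_mem_image.mpr h)
  obtain ⟨δ, hδ, hδ_disj⟩ := hdisj.exists_thickenings (hK.image hH) hL.isClosed
  obtain ⟨ε, hε, hε_sub⟩ := hK.exists_thickening_subset_open
    (Metric.isOpen_thickening.preimage hH : IsOpen (H ⁻¹' Metric.thickening δ (H '' K)))
    fun x hx ↦ Metric.self_subset_thickening hδ _ (mem_image_of_mem H hx)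
  exact ⟨min δ ε, lt_min hδ hε, fun x hx hHx ↦ disjoint_left.mp hδ_disj
    (hε_sub (Metric.thickening_mono (min_le_right _ _) _ hx))
    (Metric.thickening_mono (min_le_left _ _) _ hHx)⟩

section CriticalBall

variable {E : Type*} [NormedAddCommGroup E] [NormedSpace ℝ E] {G : E ≃ₜ E} {z : E} {r : ℝ}

lemma mem_sphere_of_isFree_ball (hr : r ≠ 0) (hfree : IsFree G (Metric.ball z r)) {x : E}
    (hx : x ∈ Metric.closedBall z r) (hGx : G x ∈ Metric.closedBall z r) :
    x ∈ Metric.sphere z r ∧ G x ∈ Metric.sphere z r := by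
  rw [← closure_ball z hr] at hx hGx
  rw [← frontier_ball z hr, frontier, Metric.isOpen_ball.interior_eq]
  refine ⟨⟨hx, fun hxb ↦ ?_⟩, ⟨hGx, fun hGxb ↦ ?_⟩⟩
  · obtain ⟨_, ⟨w, hw, rfl⟩, hGw⟩ := mem_closure_iff.mp hGx _
      (G.isOpenMap _ Metric.isOpen_ball) (mem_image_of_mem G hxb)
    exact hfree w hw hGw
  · obtain ⟨y, hGy, hy⟩ := mem_closure_iff.mp hx _ (Metric.isOpen_ball.preimage G.continuous) hGxb
    exact hfree y hy hGy

lemma exists_critical_ball [ProperSpace E] (hz : G z ≠ z) :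
    ∃ r > 0, IsFree G (Metric.ball z r) ∧ ∃ v ∈ Metric.sphere z r, G v ∈ Metric.sphere z r := by
  set S : Set ℝ := {r | 0 < r ∧ IsFree G (Metric.ball z r)}
  have hne : S.Nonempty := by
    obtain ⟨δ, hδ, h⟩ := exists_forall_mem_thickening_notMem (K := {z}) (L := {z}) G.continuous
      isCompact_singleton isCompact_singleton (by simpa using hz)
    rw [Metric.thickening_singleton] at h
    exact ⟨δ, hδ, h⟩
  have hbdd : BddAbove S :=
    ⟨dist (G z) z, fun r hr ↦ not_lt.mp (hr.2 z (Metric.mem_ball_self hr.1))⟩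
  obtain ⟨s, hs⟩ := hne
  have hpos : 0 < sSup S := hs.1.trans_le (le_csSup hbdd hs)
  have hfree : IsFree G (Metric.ball z (sSup S)) := by
    intro x hx hGx
    obtain ⟨t, ht, hlt⟩ := exists_lt_of_lt_csSup ⟨s, hs⟩ (max_lt hx hGx)
    exact ht.2 x ((le_max_left _ _).trans_lt hlt) ((le_max_right _ _).trans_lt hlt)
  refine ⟨sSup S, hpos, hfree, ?_⟩
  by_contra! hcon
  obtain ⟨δ, hδ, h⟩ := exists_forall_mem_thickening_notMem G.continuous
    (isCompact_closedBall z (sSup S)) (isCompact_closedBall z (sSup S)) fun x hx hGx ↦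
      have hsphere := mem_sphere_of_isFree_ball hpos.ne' hfree hx hGx
      hcon x hsphere.1 hsphere.2
  rw [thickening_closedBall hδ hpos.le] at h
  linarith [le_csSup hbdd (a := δ + sSup S) ⟨by positivity, h⟩]

lemma eq_of_mem_segment_of_mem_sphere {w x : E} (hw : w ∈ Metric.sphere z r)
    (hx : x ∈ segment ℝ z w) (hxs : x ∈ Metric.sphere z r) : x = w := by
  have hadd := dist_add_dist_of_mem_segment hx
  rw [dist_comm z x, dist_comm z w, hxs, hw] at hadd
  exact dist_eq_zero.mp (by linarith)

lemma eq_and_eq_of_isFree_ball {v w x : E} (hr : 0 < r) (hfree : IsFree G (Metric.ball z r))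
    (hv : v ∈ Metric.sphere z r) (hw : w ∈ Metric.sphere z r) (hx : x ∈ segment ℝ z v)
    (hGx : G x ∈ segment ℝ z w) : x = v ∧ G x = w := by
  have hseg {u : E} (hu : u ∈ Metric.sphere z r) : segment ℝ z u ⊆ Metric.closedBall z r :=
    (convex_closedBall z r).segment_subset (Metric.mem_closedBall_self hr.le)
      (Metric.sphere_subset_closedBall hu)
  have hsphere := mem_sphere_of_isFree_ball hr.ne' hfree (hseg hv hx) (hseg hw hGx)
  exact ⟨eq_of_mem_segment_of_mem_sphere hv hx hsphere.1,
    eq_of_mem_segment_of_mem_sphere hw hGx hsphere.2⟩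

lemma isCompact_segment (x y : E) : IsCompact (segment ℝ x y) := by
  rw [segment_eq_image']
  exact isCompact_Icc.image (by fun_prop)

-- The critical ball about `z` provides a point `v` on its boundary with `w = G v` on the boundary
-- as well. The discs are neighbourhoods of the radius `[z, w]` and of `G (G [z, v])`.
lemma exists_disjoint_free_discs [ProperSpace E] (hfix : ∀ x, G x ≠ x)
    (hfree_iter : ∀ C, IsOpen C → IsPreconnected C → IsFree G C → IsFree (G ∘ G) C) (z : E) :
    ∃ (w : E) (C D : Set E), (IsOpen C ∧ IsPreconnected C ∧ IsFree G C) ∧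
      (IsOpen D ∧ IsPreconnected D ∧ IsFree G D) ∧ Disjoint C D ∧
      z ∈ C ∧ w ∈ C ∧ G w ∈ D ∧ G (G z) ∈ D := by
  obtain ⟨r, hr, hball, v, hv, hGv⟩ := exists_critical_ball (hfix z)
  have hball₂ : IsFree (G.trans G) (Metric.ball z r) :=
    hfree_iter _ Metric.isOpen_ball (convex_ball z r).isPreconnected hball
  have hfree_seg {u : E} (hu : u ∈ Metric.sphere z r) : ∀ x ∈ segment ℝ z u, G x ∉ segment ℝ z u :=
    fun x hx hGx ↦
      have h := eq_and_eq_of_isFree_ball hr hball hu hu hx hGx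
      hfix x (h.2.trans h.1.symm)
  have hdisj : ∀ x ∈ segment ℝ z v, (G.trans G) x ∉ segment ℝ z (G v) := by
    intro x hx hGx
    obtain ⟨rfl, hGGx⟩ := eq_and_eq_of_isFree_ball hr hball₂ hv hGv hx hGx
    exact hfix _ hGGx
  have hseg (u : E) : IsCompact (segment ℝ z u) := isCompact_segment z u
  obtain ⟨δ, hδ, hδC⟩ :=
    exists_forall_mem_thickening_notMem G.continuous (hseg (G v)) (hseg (G v)) (hfree_seg hGv)
  obtain ⟨ε, hε, hεD⟩ :=
    exists_forall_mem_thickening_notMem G.continuous (hseg v) (hseg v) (hfree_seg hv)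
  obtain ⟨η, hη, hηCD⟩ :=
    exists_forall_mem_thickening_notMem (G.trans G).continuous (hseg v) (hseg (G v)) hdisj
  set C := Metric.thickening (min δ η) (segment ℝ z (G v))
  set D := Metric.thickening (min ε η) (segment ℝ z v)
  have hCfree : IsFree G C := .mono hδC (Metric.thickening_mono (min_le_left _ _) _)
  have hDfree : IsFree G D := .mono hεD (Metric.thickening_mono (min_le_left _ _) _)
  have hDconn : IsPreconnected D := ((convex_segment z v).thickening _).isPreconnected
  have hsubC : segment ℝ z (G v) ⊆ C := Metric.self_subset_thickening (lt_min hδ hη) _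
  have hsubD : segment ℝ z v ⊆ D := Metric.self_subset_thickening (lt_min hε hη) _
  refine ⟨G v, C, G '' (G '' D),
    ⟨Metric.isOpen_thickening, ((convex_segment z (G v)).thickening _).isPreconnected, hCfree⟩,
    ⟨G.isOpenMap _ (G.isOpenMap _ Metric.isOpen_thickening), ?_,
      (hDfree.image G.injective).image G.injective⟩, disjoint_right.mpr ?_,
    hsubC (left_mem_segment ℝ _ _), hsubC (right_mem_segment ℝ _ _),
    mem_image_of_mem G (mem_image_of_mem G (hsubD (right_mem_segment ℝ _ _))),
    mem_image_of_mem G (mem_image_of_mem G (hsubD (left_mem_segment ℝ _ _)))⟩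
  · exact (hDconn.image G G.continuous.continuousOn).image G G.continuous.continuousOn
  · rintro _ ⟨_, ⟨x, hx, rfl⟩, rfl⟩ hGGx
    exact hηCD x (Metric.thickening_mono (min_le_right _ _) _ hx)
      (Metric.thickening_mono (min_le_right _ _) _ hGGx)

end CriticalBall

lemma isFree_iterate_of_isFree {n : ℕ} (hn : ∀ j, 1 ≤ j → j < n → BrouwerLemma j)
    {G : Plane ≃ₜ Plane} (hG : InjIsotopic G) (hfix : ∀ x, G x ≠ x) {C : Set Plane}
    (ho : IsOpen C) (hc : IsPreconnected C) (hC : IsFree G C) {j : ℕ} (hj : 1 ≤ j) (hjn : j < n) :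
    IsFree G^[j] C := by
  induction j using Nat.strong_induction_on with
  | _ j ih =>
    intro y hy hjy
    obtain ⟨h, hI, hoff, hpush⟩ := pushableIn_of_isPreconnected ho hc hjy hy
    have hGh : ∀ x, (h.trans G) x ≠ x := comp_apply_ne_self (G := G) (h := h) hfix fun x ↦
      or_iff_not_imp_left.mpr fun hx ↦
        have hxC : x ∈ C := not_imp_comm.mp (hoff x) hx
        ⟨C, hC, hxC, mapsTo_of_forall_notMem_eq h.injective hoff hxC⟩
    have hiter (i : ℕ) (hi : i < j) : (h.trans G)^[i + 1] (G^[j] y) = G^[i + 1] y := by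
      induction i with
      | zero => exact congrArg G hpush
      | succ i ihi =>
        rw [Function.iterate_succ_apply', ihi (by lia), Homeomorph.trans_apply,
          hoff _ (ih (i + 1) hi (by lia) (by lia) y hy), ← Function.iterate_succ_apply' (⇑G)]
    obtain ⟨i, rfl⟩ := Nat.exists_eq_add_of_le' hj
    exact hn _ hj hjn (h.trans G) (hG.comp hI) hGh _ (hiter i i.lt_succ_self)

-- Composing `G` with a push inside two free discs shortens a periodic orbit by one step.
lemma brouwerLemma_of_forall_lt {n : ℕ} (h3 : 3 ≤ n)
    (hn : ∀ j, 1 ≤ j → j < n → BrouwerLemma j) : BrouwerLemma n := by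
  intro G hG hfix z hz
  have hfree {C : Set Plane} (ho : IsOpen C) (hc : IsPreconnected C) (hC : IsFree G C) {j : ℕ} :
      1 ≤ j → j < n → IsFree G^[j] C := isFree_iterate_of_isFree hn hG hfix ho hc hC
  obtain ⟨w, C, D, ⟨hCo, hCc, hCf⟩, ⟨hDo, hDc, hDf⟩, hCD, hzC, hwC, hGwD, hGGzD⟩ :=
    exists_disjoint_free_discs hfix
      (fun C ho hc hC ↦ hfree ho hc hC (j := 2) (by lia) (by lia)) z
  obtain ⟨h, hI, hoff, hpush⟩ := exists_homeomorph_pushing Finset.univ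
    (C := fun b : Bool ↦ cond b C D) (p := fun b ↦ cond b z (G w))
    (q := fun b ↦ cond b w (G (G z))) (by simp [hCo, hDo]) (by simp [hCc, hDc])
    (by simpa [PairwiseDisjoint, Set.Pairwise, Function.onFun] using ⟨hCD.symm, hCD⟩)
    (by simp [hzC, hGwD]) (by simp [hwC, hGGzD])
  have hpush_z : h z = w := hpush true (Finset.mem_univ _)
  have hpush_Gw : h (G w) = G (G z) := hpush false (Finset.mem_univ _)
  have hoff' (x : Plane) (hxC : x ∉ C) (hxD : x ∉ D) : h x = x :=
    (hoff x).resolve_right (by simp [hxC, hxD])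
  have hGh : ∀ x, (h.trans G) x ≠ x := comp_apply_ne_self (G := G) (h := h) hfix fun x ↦ by
    refine (hoff x).imp_right ?_
    rintro ⟨_ | _, -, hx⟩
    exacts [⟨D, hDf, hx⟩, ⟨C, hCf, hx⟩]
  have hnotC {i : ℕ} (hi : 1 ≤ i) (hin : i < n) : G^[i] z ∉ C := hfree hCo hCc hCf hi hin z hzC
  have hnotD {i : ℕ} (hi : 1 ≤ i) (hin : i < n) : G^[i + 2] z ∉ D :=
    hfree hDo hDc hDf hi hin _ hGGzD
  have hiter (i : ℕ) (hi : i + 3 ≤ n) : (h.trans G)^[i + 2] z = G^[i + 3] z := by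
    induction i with
    | zero => simp [hpush_z, hpush_Gw]
    | succ i ih =>
      rw [show i + 1 + 2 = i + 2 + 1 by rfl, Function.iterate_succ_apply', ih (by lia),
        Homeomorph.trans_apply, hoff' _ (hnotC (by lia) (by lia)) (hnotD (by lia) (by lia)),
        ← Function.iterate_succ_apply' (⇑G)]
  obtain ⟨i, rfl⟩ := Nat.exists_eq_add_of_le' h3
  exact hn (i + 2) (by lia) (by lia) (h.trans G) (hG.comp hI) hGh z ((hiter i le_rfl).trans hz)

theorem brouwerLemma {n : ℕ} (hn : 1 ≤ n) : BrouwerLemma n := by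
  induction n using Nat.strong_induction_on with
  | _ n ih =>
    obtain rfl | rfl | h3 : n = 1 ∨ n = 2 ∨ 3 ≤ n := by lia
    · exact fun G _ hfix ↦ hfix
    · exact brouwerLemma_two
    · exact brouwerLemma_of_forall_lt h3 fun j hj hjn ↦ ih j hjn hj

/-! ### Franks' lemma for chains of free bricks -/

section Cycles

open Relation

variable {ι : Type*} {R : ι → ι → Prop}

lemma exists_walk_of_reflTransGen {a b : ι} (h : ReflTransGen R a b) :
    ∃ (n : ℕ) (s : ℕ → ι), s 0 = a ∧ s n = b ∧ ∀ k < n, R (s k) (s (k + 1)) := by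
  induction h using ReflTransGen.head_induction_on with
  | refl => exact ⟨0, fun _ ↦ b, rfl, rfl, by simp⟩
  | @head a c hac _ ih =>
    obtain ⟨n, s, rfl, rfl, hs⟩ := ih
    refine ⟨n + 1, fun k ↦ Nat.casesOn k a s, rfl, rfl, fun k hk ↦ ?_⟩
    cases k with
    | zero => exact hac
    | succ k => exact hs k (by lia)

lemma exists_cycle_of_walk {n : ℕ} {s : ℕ → ι} (hs : ∀ k < n, R (s k) (s (k + 1)))
    (hclose : R (s n) (s 0)) : ∃ t : ZMod (n + 1) → ι, ∀ k, R (t k) (t (k + 1)) := by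
  refine ⟨fun k ↦ s k.val, fun k ↦ ?_⟩
  rcases (Nat.lt_succ_iff.mp k.val_lt).lt_or_eq with hk | hk
  · have hval : (k + 1).val = k.val + 1 := Fin.val_add_one_of_lt hk
    simpa only [hval] using hs _ hk
  · obtain rfl : k = -1 := ZMod.val_injective _ (hk.trans (ZMod.val_neg_one n).symm)
    simpa only [neg_add_cancel, ZMod.val_zero, hk] using hclose

-- A shortest cycle has no chords.
lemma exists_chordless_cycle {i : ι} (hi : TransGen R i i) :
    ∃ (n : ℕ) (s : ZMod (n + 1) → ι), ∀ a b, R (s a) (s b) ↔ b = a + 1 := by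
  classical
  have hex : ∃ (n : ℕ) (s : ZMod (n + 1) → ι), ∀ k, R (s k) (s (k + 1)) := by
    obtain ⟨j, hij, hji⟩ := TransGen.head'_iff.mp hi
    obtain ⟨n, s, rfl, rfl, hs⟩ := exists_walk_of_reflTransGen hji
    exact ⟨n, exists_cycle_of_walk hs hij⟩
  obtain ⟨s, hs⟩ := Nat.find_spec hex
  refine ⟨Nat.find hex, s, fun a b ↦ ⟨fun hab ↦ ?_, ?_⟩⟩
  · have hshort := Nat.find_min' hex (m := (a - b).val) (exists_cycle_of_walk
      (s := fun k ↦ s (b + k)) (fun k _ ↦ by simpa [add_assoc] using hs (b + k)) (by simpa))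
    have hlast : (a - b).val = (-1 : ZMod (Nat.find hex + 1)).val := by
      rw [ZMod.val_neg_one]
      exact le_antisymm (Nat.lt_succ_iff.mp (a - b).val_lt) hshort
    linear_combination -ZMod.val_injective _ hlast
  · rintro rfl
    exact hs a

end Cycles

lemma false_of_cycle_of_free_discs {G : Plane ≃ₜ Plane} (hG : InjIsotopic G) (hfix : ∀ x, G x ≠ x)
    {n : ℕ} [NeZero n] {C : ZMod n → Set Plane} {p q : ZMod n → Plane} (ho : ∀ k, IsOpen (C k))
    (hc : ∀ k, IsPreconnected (C k)) (hd : Pairwise (Function.onFun Disjoint C))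
    (hp : ∀ k, p k ∈ C k) (hq : ∀ k, q k ∈ C k) (hfree : ∀ k, IsFree G (C k))
    (hstep : ∀ k, G (q k) = p (k + 1)) : False := by
  obtain ⟨h, hI, hoff, hpush⟩ := exists_homeomorph_pushing Finset.univ (fun k _ ↦ ho k)
    (fun k _ ↦ hc k) (hd.set_pairwise _) (fun k _ ↦ hp k) (fun k _ ↦ hq k)
  have hiter (k : ℕ) : (h.trans G)^[k] (p 0) = p k := by
    induction k with
    | zero => simp
    | succ k ih =>
      rw [Function.iterate_succ_apply', ih, Homeomorph.trans_apply, hpush _ (Finset.mem_univ _),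
        hstep, Nat.cast_succ]
  refine brouwerLemma (NeZero.one_le (n := n)) (h.trans G) (hG.comp hI)
    (comp_apply_ne_self (G := G) (h := h) hfix fun x ↦ ?_) (p 0) (by simp [hiter])
  exact (hoff x).imp_right fun ⟨k, _, hx⟩ ↦ ⟨C k, hfree k, hx⟩

lemma IsFree.eventually_thickening {X : Type*} [MetricSpace X] {G : X → X} (hG : Continuous G)
    {B : Set X} (hB : IsCompact B) (hfree : IsFree G B) :
    ∀ᶠ ε in 𝓝[>] (0 : ℝ), IsFree G (Metric.thickening ε B) := by
  obtain ⟨δ, hδ, h⟩ := exists_forall_mem_thickening_notMem hG hB hB hfree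
  filter_upwards [Ioo_mem_nhdsGT hδ] with ε hε
  exact IsFree.mono h (Metric.thickening_mono hε.2.le _)

lemma isPreconnected_union_ball {E : Type*} [SeminormedAddCommGroup E] [NormedSpace ℝ E]
    {O : Set E} (hO : IsPreconnected O) {p : E} (hp : p ∈ closure O) {ε : ℝ} (hε : 0 < ε) :
    IsPreconnected (O ∪ Metric.ball p ε) := by
  obtain ⟨z, hz, hzO⟩ := mem_closure_iff.mp hp _ Metric.isOpen_ball (Metric.mem_ball_self hε)
  exact hO.union z hzO hz (convex_ball p ε).isPreconnected

lemma exists_pairwise_disjoint_free_discs {E κ : Type*} [NormedAddCommGroup E] [NormedSpace ℝ E]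
    [Finite κ] {G : E → E} (hG : Continuous G) {B O : κ → Set E} (hB : ∀ k, IsCompact (B k))
    (hO : ∀ k, IsOpen (O k)) (hOc : ∀ k, IsPreconnected (O k)) (hOB : ∀ k, O k ⊆ B k)
    (hBO : ∀ k, B k ⊆ closure (O k)) (hd : Pairwise (Function.onFun Disjoint O))
    (hfree : ∀ k, IsFree G (B k)) {p q : κ → E} (hp : ∀ k l, p k ∈ B l ↔ k = l)
    (hq : ∀ k l, q k ∈ B l ↔ k = l) :
    ∃ C : κ → Set E, (∀ k, IsOpen (C k)) ∧ (∀ k, IsPreconnected (C k)) ∧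
      Pairwise (Function.onFun Disjoint C) ∧ (∀ k, p k ∈ C k) ∧ (∀ k, q k ∈ C k) ∧
      ∀ k, IsFree G (C k) := by
  have hsep : ∀ᶠ ε in 𝓝[>] (0 : ℝ), ∀ k l, k ≠ l →
      Disjoint (Metric.thickening ε {p k, q k}) (Metric.thickening ε (B l)) := by
    refine eventually_all.mpr fun k ↦ eventually_all.mpr fun l ↦ ?_
    by_cases hkl : k = l
    · exact .of_forall fun _ h ↦ absurd hkl h
    obtain ⟨δ, hδ, hdisj⟩ := Disjoint.exists_thickenings (s := {p k, q k}) (t := B l)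
      (by simp [disjoint_insert_left, hp, hq, hkl]) (toFinite _).isCompact (hB l).isClosed
    filter_upwards [Ioo_mem_nhdsGT hδ] with ε hε _
    exact hdisj.mono (Metric.thickening_mono hε.2.le _) (Metric.thickening_mono hε.2.le _)
  obtain ⟨ε, hε, hεB, hε_free⟩ := (eventually_mem_nhdsWithin.and (hsep.and
    (eventually_all.mpr fun k ↦ (hfree k).eventually_thickening hG (hB k)))).exists
  set C : κ → Set E := fun k ↦ O k ∪ Metric.ball (p k) ε ∪ Metric.ball (q k) ε with hC
  have hC_eq (k : κ) : C k = O k ∪ Metric.thickening ε {p k, q k} := by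
    simp [hC, Metric.thickening_eq_biUnion_ball, union_assoc]
  have hCB (k : κ) : C k ⊆ Metric.thickening ε (B k) := by
    rw [hC_eq]
    refine union_subset ((hOB k).trans (Metric.self_subset_thickening hε _))
      (Metric.thickening_subset_of_subset _ ?_)
    simp [insert_subset_iff, hp, hq]
  refine ⟨C, fun k ↦ ((hO k).union Metric.isOpen_ball).union Metric.isOpen_ball, fun k ↦ ?_,
    fun k l hkl ↦ ?_, fun k ↦ .inl (.inr (Metric.mem_ball_self hε)),
    fun k ↦ .inr (Metric.mem_ball_self hε), fun k ↦ (hε_free k).mono (hCB k)⟩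
  · exact isPreconnected_union_ball
      (isPreconnected_union_ball (hOc k) (hBO k ((hp k k).mpr rfl)) hε)
      (closure_mono subset_union_left (hBO k ((hq k k).mpr rfl))) hε
  · rw [Function.onFun, hC_eq k, disjoint_union_left]
    refine ⟨?_, (hεB k l hkl).mono_right (hCB l)⟩
    rw [hC_eq l, disjoint_union_right]
    exact ⟨hd hkl, (hεB l k hkl.symm).symm.mono_left ((hOB k).trans
      (Metric.self_subset_thickening hε _))⟩

theorem not_transGen_self_of_isFree {G : Plane ≃ₜ Plane} (hG : InjIsotopic G)
    (hfix : ∀ x, G x ≠ x) {ι : Type*} {B O : ι → Set Plane} (hB : ∀ i, IsCompact (B i))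
    (hO : ∀ i, IsOpen (O i)) (hOc : ∀ i, IsPreconnected (O i)) (hOB : ∀ i, O i ⊆ B i)
    (hBO : ∀ i, B i ⊆ closure (O i)) (hd : Pairwise (Function.onFun Disjoint O))
    (hfree : ∀ i, IsFree G (B i)) (i : ι) :
    ¬ Relation.TransGen (fun i j ↦ ∃ x ∈ B i, G x ∈ B j) i i := by
  intro hcyc
  obtain ⟨n, s, hs⟩ := exists_chordless_cycle hcyc
  have hinj : Function.Injective s := fun a b hab ↦
    add_right_cancel ((hs b (a + 1)).mp (hab ▸ (hs a (a + 1)).mpr rfl))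
  choose x hx hGx using fun k ↦ (hs k (k + 1)).mpr rfl
  have hq (k l : ZMod (n + 1)) : x k ∈ B (s l) ↔ k = l :=
    ⟨fun h ↦ add_right_cancel ((hs l (k + 1)).mp ⟨x k, h, hGx k⟩), fun h ↦ h ▸ hx k⟩
  have hp (k l : ZMod (n + 1)) : G (x (k - 1)) ∈ B (s l) ↔ k = l := by
    refine ⟨fun h ↦ ?_, fun h ↦ by simpa [h] using hGx (l - 1)⟩
    simpa using ((hs (k - 1) l).mp ⟨_, hx _, h⟩).symm
  obtain ⟨C, ho, hc, hCd, hpC, hqC, hCfree⟩ := exists_pairwise_disjoint_free_discs G.continuous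
    (B := B ∘ s) (fun k ↦ hB (s k)) (fun k ↦ hO (s k)) (fun k ↦ hOc (s k)) (fun k ↦ hOB (s k))
    (fun k ↦ hBO (s k)) (hd.comp_of_injective hinj) (fun k ↦ hfree (s k)) hp hq
  exact false_of_cycle_of_free_discs hG hfix ho hc hCd hpC hqC hCfree fun k ↦ by simp

/-! ### Crossing a curve that goes around the annulus -/

section Crossing

open Complex in
lemma sub_eq_log_sub_log_of_exp_eq {X : Type*} [TopologicalSpace X] [PreconnectedSpace X]
    {φ θ : X → ℂ} (hφ : Continuous φ) (hθ : Continuous θ) (hexp : ∀ x, exp (θ x) = φ x) {d : ℂ}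
    (hd : ∀ x, 0 < (d * φ x).re) (x y : X) : θ y - θ x = log (d * φ y) - log (d * φ x) := by
  have hne (x : X) : d * φ x ≠ 0 := fun h ↦ (hd x).ne' (by simp [h])
  have hlog : Continuous fun x ↦ log (d * φ x) :=
    Continuous.clog (by fun_prop) fun x ↦ .inl (hd x)
  have hconst := eq_of_forall_exp_eq (u := fun x ↦ θ x - log (d * φ x)) (hθ.sub hlog) (k := d⁻¹)
    (fun x ↦ by
      obtain ⟨hd₀, hφ₀⟩ := mul_ne_zero_iff.mp (hne x)
      rw [exp_sub, hexp, exp_log (hne x)]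
      field_simp) y x
  linear_combination hconst

open Complex in
lemma log_I_mul_of_re_pos {z : ℂ} (hz : 0 < z.re) : log (I * z) = log z + Real.pi / 2 * I := by
  have hz₀ : z ≠ 0 := fun h ↦ hz.ne' (by simp [h])
  have harg := abs_lt.mp (abs_arg_lt_pi_div_two_iff.mpr (.inl hz))
  rw [log_mul I_ne_zero hz₀ ?_, log_I, add_comm]
  rw [arg_I]
  constructor <;> linarith [Real.pi_pos]

open Complex in
lemma log_neg_I_mul_of_re_pos {z : ℂ} (hz : 0 < z.re) :
    log (-I * z) = log z - Real.pi / 2 * I := by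
  have hz₀ : z ≠ 0 := fun h ↦ hz.ne' (by simp [h])
  have harg := abs_lt.mp (abs_arg_lt_pi_div_two_iff.mpr (.inl hz))
  rw [log_mul (neg_ne_zero.mpr I_ne_zero) hz₀ ?_, log_neg_I, neg_mul, neg_add_eq_sub]
  rw [arg_neg_I]
  constructor <;> linarith [Real.pi_pos]

variable {β : ℝ → Plane} {m : ℝ}

lemma apply_intCast_of_add_one (hβ : ∀ s, β (s + 1) = β s + (m, 0)) (k : ℤ) :
    β k = β 0 + (k * m, 0) := by
  have hper : Function.Periodic (fun s ↦ β s - (s * m, 0)) 1 := fun s ↦ by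
    ext <;> simp [hβ]
    ring
  have hk := hper.int_mul_eq k
  rw [mul_one, zero_mul, ← Prod.zero_eq_mk, sub_zero, sub_eq_iff_eq_add] at hk
  exact hk

-- Otherwise the argument of `γ u - β s` could be chosen continuously on the rectangle
-- `[0, 1] × [-k, k]`, although it varies by `2π` along its boundary.
lemma exists_path_apply_eq_of_pos (hβc : Continuous β) (hm : 0 < m)
    (hβ : ∀ s, β (s + 1) = β s + (m, 0)) {a b : Plane} (γ : Path a b) (ha : ∀ s, a.2 < (β s).2)
    (hb : ∀ s, (β s).2 < b.2) : ∃ u s, γ u = β s := by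
  by_contra! hcon
  let c := Complex.equivRealProdCLM.symm
  have hre (p : Plane) : (c p).re = p.1 := rfl
  have him (p : Plane) : (c p).im = p.2 := rfl
  obtain ⟨θ, hθ, hexp⟩ := exists_continuous_exp_eq (X := ℝ × ℝ)
    (g := fun x ↦ c (γ.extend x.1 - β x.2)) (by fun_prop)
    fun x ↦ (map_ne_zero_iff c c.injective).mpr (sub_ne_zero.mpr (hcon _ _))
  obtain ⟨M, hM⟩ := (isCompact_range (f := fun u ↦ |(γ u).1|) (by fun_prop)).bddAbove
  obtain ⟨k, hk⟩ := exists_nat_gt ((M + |(β 0).1|) / m)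
  rw [div_lt_iff₀ hm] at hk
  have hβk := apply_intCast_of_add_one hβ k
  have hβk' := apply_intCast_of_add_one hβ (-k)
  push_cast at hβk hβk'
  have hbound (u : ℝ) : |(γ.extend u).1| ≤ M := hM ⟨_, rfl⟩
  have hleft (u : ℝ) : 0 < (-1 * c (γ.extend u - β k)).re := by
    rw [hβk]
    simp only [map_sub, map_add, neg_mul, one_mul, neg_sub, Complex.sub_re, Complex.add_re, hre]
    linarith [abs_le.mp (hbound u), neg_abs_le (β 0).1]
  have hright (u : ℝ) : 0 < (1 * c (γ.extend u - β (-k))).re := by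
    rw [hβk']
    simp only [map_sub, map_add, neg_mul, one_mul, Complex.sub_re, Complex.add_re, hre]
    linarith [abs_le.mp (hbound u), le_abs_self (β 0).1]
  have hlow (s : ℝ) : 0 < (Complex.I * c (γ.extend 0 - β s)).re := by simpa [him] using ha s
  have hup (s : ℝ) : 0 < (-Complex.I * c (γ.extend 1 - β s)).re := by simpa [him] using hb s
  have hside_low := sub_eq_log_sub_log_of_exp_eq (θ := fun s ↦ θ (0, s)) (by fun_prop)
    (by fun_prop) (fun s ↦ hexp (0, s)) hlow (-k) k
  have hside_right := sub_eq_log_sub_log_of_exp_eq (θ := fun u ↦ θ (u, k)) (by fun_prop)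
    (by fun_prop) (fun u ↦ hexp (u, k)) hleft 0 1
  have hside_up := sub_eq_log_sub_log_of_exp_eq (θ := fun s ↦ θ (1, s)) (by fun_prop)
    (by fun_prop) (fun s ↦ hexp (1, s)) hup k (-k)
  have hside_left := sub_eq_log_sub_log_of_exp_eq (θ := fun u ↦ θ (u, -k)) (by fun_prop)
    (by fun_prop) (fun u ↦ hexp (u, -k)) hright 1 0
  have hcorner₁ := log_neg_I_mul_of_re_pos (hleft 0)
  have hcorner₂ := log_I_mul_of_re_pos (hleft 1)
  have hcorner₃ := log_neg_I_mul_of_re_pos (hright 1)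
  have hcorner₄ := log_I_mul_of_re_pos (hright 0)
  simp only [neg_mul, one_mul, mul_neg, neg_neg] at *
  refine Complex.two_pi_I_ne_zero ?_
  linear_combination hside_low + hside_right + hside_up + hside_left + hcorner₁ - hcorner₂ +
    hcorner₃ - hcorner₄

lemma exists_apply_mem_of_joinedIn (hβc : Continuous β) (hm : m ≠ 0)
    (hβ : ∀ s, β (s + 1) = β s + (m, 0)) {S : Set Plane} {a b : Plane} (hab : JoinedIn S a b)
    (ha : ∀ s, a.2 < (β s).2) (hb : ∀ s, (β s).2 < b.2) : ∃ s, β s ∈ S := by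
  obtain ⟨γ, hγ⟩ := hab
  rcases hm.lt_or_gt with hm | hm
  · have hβ' (s : ℝ) : β (-(s + 1)) = β (-s) + (-m, 0) := by
      have h := hβ (-(s + 1))
      rw [show -(s + 1) + 1 = -s by ring] at h
      simp [h, add_assoc]
    obtain ⟨u, s, h⟩ := exists_path_apply_eq_of_pos (β := fun s ↦ β (-s)) (by fun_prop)
      (neg_pos.mpr hm) hβ' γ (fun s ↦ ha (-s)) (fun s ↦ hb (-s))
    exact ⟨-s, h ▸ hγ u⟩
  · obtain ⟨u, s, h⟩ := exists_path_apply_eq_of_pos hβc hm hβ γ ha hb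
    exact ⟨s, h ▸ hγ u⟩

end Crossing

/-! ### The covering of the annulus by the plane -/

section Covering

lemma addCircle_coe_eq_coe_iff {x y : ℝ} : (x : AddCircle (1 : ℝ)) = y ↔ ∃ k : ℤ, x = y + k := by
  rw [← sub_eq_zero, ← AddCircle.coe_sub, AddCircle.coe_eq_zero_iff]
  simp [sub_eq_iff_eq_add', eq_comm]

lemma prj_eq_prj_iff {x y : Plane} : prj x = prj y ↔ ∃ k : ℤ, x = Tr k y := by
  simp [prj, Tr, Prod.ext_iff, addCircle_coe_eq_coe_iff]

lemma continuous_prj : Continuous prj := by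
  unfold prj
  exact ((AddCircle.continuous_mk' (1 : ℝ)).comp continuous_fst).prodMk continuous_snd

lemma exists_continuous_coe_addCircle_eq {E : Type*} [TopologicalSpace E] [SimplyConnectedSpace E]
    [LocallyPathConnectedSpace E] {g : E → AddCircle (1 : ℝ)} (hg : Continuous g) {a : E} {e : ℝ}
    (he : (e : AddCircle (1 : ℝ)) = g a) :
    ∃ L : E → ℝ, Continuous L ∧ L a = e ∧ ∀ x, (L x : AddCircle (1 : ℝ)) = g x := by
  obtain ⟨L, ⟨hLa, hL⟩, -⟩ := (AddCircle.isCoveringMap_coe (1 : ℝ)).existsUnique_continuousMap_lifts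
    ⟨g, hg⟩ a e he
  exact ⟨L, L.continuous, hLa, congrFun hL⟩

lemma sub_eq_sub_of_coe_addCircle_eq {X : Type*} [TopologicalSpace X] [PreconnectedSpace X]
    {u v : X → ℝ} (hu : Continuous u) (hv : Continuous v)
    (huv : ∀ x, (u x : AddCircle (1 : ℝ)) = v x) (x y : X) : u x - v x = u y - v y :=
  eq_of_forall_mem_range_intCast (hu.sub hv) (fun x ↦ by
    obtain ⟨k, hk⟩ := addCircle_coe_eq_coe_iff.mp (huv x)
    exact ⟨k, by simp [hk]⟩) x y

lemma eq_zero_of_homotopic_const {φ : C(AddCircle (1 : ℝ), Ann)} {pt : Ann}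
    (hφ : φ.Homotopic (ContinuousMap.const _ pt)) {γ : ℝ → Plane} (hγ : Continuous γ)
    (hlift : ∀ s : ℝ, φ s = prj (γ s)) {d : ℤ} (hper : ∀ s, γ (s + 1) = Tr d (γ s)) : d = 0 := by
  obtain ⟨H⟩ := hφ
  let K : ℝ × ℝ → AddCircle (1 : ℝ) := fun x ↦ (H (projIcc 0 1 zero_le_one x.1, x.2)).1
  have hK : Continuous K := continuous_fst.comp (H.continuous.comp
    ((continuous_projIcc.comp continuous_fst).prodMk
      ((AddCircle.continuous_mk' (1 : ℝ)).comp continuous_snd)))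
  obtain ⟨e, he⟩ := QuotientAddGroup.mk_surjective (K (0, 0))
  obtain ⟨L, hL, -, hLK⟩ := exists_continuous_coe_addCircle_eq hK he
  have hdegree := sub_eq_sub_of_coe_addCircle_eq (u := fun x ↦ L (x.1, x.2 + 1)) (v := L)
    (by fun_prop) hL (fun x ↦ by simp [hLK, K]) (0, 0) (1, 0)
  have hconst := sub_eq_sub_of_coe_addCircle_eq (u := fun s ↦ L (1, s)) (v := fun _ ↦ L (1, 0))
    (by fun_prop) (by fun_prop) (fun s ↦ by simp [hLK, K]) 1 0
  have hγL := sub_eq_sub_of_coe_addCircle_eq (u := fun s ↦ L (0, s)) (v := fun s ↦ (γ s).1)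
    (by fun_prop) (by fun_prop) (fun s ↦ by
      rw [hLK]
      simp only [K, projIcc_left]
      exact congrArg Prod.fst ((H.apply_zero (s : AddCircle (1 : ℝ))).trans (hlift s))) 1 0
  have hd := congrArg Prod.fst (hper 0)
  simp only [Tr, zero_add] at hd hdegree hγL hconst
  exact_mod_cast (by linarith : (d : ℝ) = 0)

lemma isEssentialCircle_range_prj {γ : ℝ → Plane} (hγ : Continuous γ) {d : ℤ} (hd : d ≠ 0)
    (hper : ∀ s, γ (s + 1) = Tr d (γ s))
    (hinj : ∀ s t, prj (γ s) = prj (γ t) → ∃ k : ℤ, s = t + k) :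
    IsEssentialCircle (range fun s ↦ prj (γ s)) := by
  have hperiodic : Function.Periodic (fun s ↦ prj (γ s)) 1 := fun s ↦
    prj_eq_prj_iff.mpr ⟨d, hper s⟩
  let φ : C(AddCircle (1 : ℝ), Ann) :=
    ⟨hperiodic.lift, continuous_quot_lift _ (continuous_prj.comp hγ)⟩
  have hφ (s : ℝ) : φ s = prj (γ s) := hperiodic.lift_coe s
  refine ⟨φ, fun a b hab ↦ ?_, ?_, fun ⟨_, hpt⟩ ↦ hd (eq_zero_of_homotopic_const hpt hγ hφ hper)⟩
  · induction a using QuotientAddGroup.induction_on with | H s => ?_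
    induction b using QuotientAddGroup.induction_on with | H t => ?_
    exact addCircle_coe_eq_coe_iff.mpr (hinj s t (by rwa [← hφ, ← hφ]))
  · rw [← (QuotientAddGroup.mk_surjective (s := AddSubgroup.zmultiples (1 : ℝ))).range_comp φ]
    exact congrArg range (funext hφ)

end Covering

lemma continuous_floor_fract {X : Type*} [TopologicalSpace X] {σ : ℤ → ℝ → X}
    (hσ : ∀ k, Continuous (σ k)) (hglue : ∀ k, σ k 1 = σ (k + 1) 0) :
    Continuous fun s : ℝ ↦ σ ⌊s⌋ (Int.fract s) := by
  have hfin : LocallyFinite fun k : ℤ ↦ Icc (k : ℝ) (k + 1) := fun x ↦ by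
    refine ⟨Ioo (x - 1) (x + 1), Ioo_mem_nhds (by linarith) (by linarith),
      (Set.finite_Icc ⌊x - 2⌋ ⌈x + 2⌉).subset ?_⟩
    rintro k ⟨y, ⟨h₁, h₂⟩, h₃, h₄⟩
    exact ⟨Int.floor_le_iff.mpr (by linarith), Int.le_ceil_iff.mpr (by linarith)⟩
  refine hfin.continuous (iUnion_eq_univ_iff.mpr fun x ↦
    ⟨⌊x⌋, Int.floor_le x, (Int.lt_floor_add_one x).le⟩) (fun k ↦ isClosed_Icc) fun k ↦ ?_
  refine ContinuousOn.congr (f := fun s ↦ σ k (s - k)) ((hσ k).comp (by fun_prop)).continuousOn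
    fun s hs ↦ ?_
  rcases hs.2.eq_or_lt with rfl | hlt
  · have hfloor : ⌊(k : ℝ) + 1⌋ = k + 1 := by simp
    simp [Int.fract, hfloor, hglue]
  · simp only [Int.fract, Int.floor_eq_iff.mpr ⟨hs.1, hlt⟩]

/-! ### Essential boundary walks of periodic sets of squares -/

section QuasiPeriodicWalks

open Relation
open scoped AddConstMap

variable {A : Type*} [AddCommGroup A] {a : A}

lemma exists_potential (r : Setoid A) (hr : ∀ {u v}, r u v → ∀ k : ℤ, r (u + k • a) (v + k • a))
    (hfree : ∀ {u} {d : ℤ}, r u (u + d • a) → d = 0) :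
    ∃ g : A → ℤ, (∀ {u v}, r u v → g u = g v) ∧ ∀ u, g (u + a) = g u + 1 := by
  have hunique {u w : A} {k l : ℤ} (hk : r u (w + k • a)) (hl : r u (w + l • a)) : k = l := by
    refine (sub_eq_zero.mp (hfree (u := w + k • a) (d := l - k) ?_)).symm
    rw [add_assoc, ← add_smul, add_sub_cancel]
    exact r.trans (r.symm hk) hl
  let t : Setoid A :=
    { r u v := ∃ k : ℤ, r u (v + k • a)
      iseqv.refl u := ⟨0, by simp⟩
      iseqv.symm := fun ⟨k, h⟩ ↦ ⟨-k, r.symm (by simpa using hr h (-k))⟩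
      iseqv.trans := fun ⟨k, h⟩ ⟨l, h'⟩ ↦
        ⟨l + k, r.trans h (by simpa [add_smul, add_assoc] using hr h' k)⟩ }
  choose g hg using fun u ↦ t.symm (Quotient.mk_out (s := t) u)
  refine ⟨g, fun {u v} h ↦ ?_, fun u ↦ ?_⟩
  · have hout : Quotient.mk t u = Quotient.mk t v := Quotient.sound ⟨0, by simpa using h⟩
    exact hunique (r.trans (r.symm h) (hg u)) (hout ▸ hg v)
  · have hout : Quotient.mk t (u + a) = Quotient.mk t u :=
      Quotient.sound ⟨1, by simp⟩
    refine hunique (hg (u + a)) (hout ▸ ?_)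
    simpa [add_smul, add_assoc] using hr (hg u) 1

variable {R : A → A → Prop}

lemma exists_addConstMap_of_walk {v : A} (hR : ∀ {x y} (l : ℤ), R x y → R (x + l • v) (y + l • v))
    {m : ℕ} (hm : 0 < m) {u : ℕ → A} (hu : ∀ k < m, R (u k) (u (k + 1)))
    (hend : u m = u 0 + v) :
    ∃ U : ℤ →+c[(m : ℤ), v] A, ∀ k, R (U k) (U (k + 1)) := by
  have hm₀ : (m : ℤ) ≠ 0 := by lia
  refine ⟨⟨fun k ↦ u (k % m).toNat + (k / m) • v, fun k ↦ ?_⟩, fun k ↦ ?_⟩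
  · simp only [Int.add_emod_right, Int.add_ediv_of_dvd_right dvd_rfl, Int.ediv_self hm₀, add_smul,
      one_smul, add_assoc]
  · change R (u (k % m).toNat + (k / m) • v) (u ((k + 1) % m).toNat + ((k + 1) / m) • v)
    obtain ⟨r, hr⟩ := Int.eq_ofNat_of_zero_le (Int.emod_nonneg k hm₀)
    have hrm : r < m := by exact_mod_cast hr ▸ Int.emod_lt_of_pos k (by lia : (0 : ℤ) < m)
    obtain ⟨l, rfl⟩ : ∃ l : ℤ, k = r + m * l := ⟨k / m, by rw [← hr, Int.emod_add_mul_ediv]⟩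
    rw [add_right_comm, Int.add_mul_ediv_left _ _ hm₀, Int.add_mul_ediv_left _ _ hm₀,
      Int.add_mul_emod_self_left, Int.add_mul_emod_self_left, Int.emod_eq_of_lt (by lia) (by lia),
      Int.ediv_eq_zero_of_lt (by lia) (by lia), zero_add]
    rcases (Nat.succ_le_of_lt hrm).lt_or_eq with hlt | heq
    · rw [Int.emod_eq_of_lt (by lia) (by lia), Int.ediv_eq_zero_of_lt (by lia) (by lia), zero_add]
      exact hR _ (hu r hrm)
    · have hcast : (r : ℤ) + 1 = m := by exact_mod_cast heq
      rw [hcast, Int.emod_self, Int.ediv_self hm₀, add_smul, one_smul, ← add_assoc, Int.toNat_zero,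
        ← hend, ← heq]
      exact hR _ (hu r hrm)

-- Otherwise `U` comes back to a translate of `U x` after `e < m` steps.
lemma dvd_sub_of_le_of_return {m : ℕ} (hm : 0 < m) {d : ℤ} (hd : d ≠ 0)
    {U : ℤ →+c[(m : ℤ), d • a] A}
    (hmin : ∀ (x : ℤ) (e : ℕ) (k : ℤ), 0 < e → k ≠ 0 → U (x + e) = U x + k • a → m ≤ e)
    {x y k : ℤ} (hxy : U x = U y + k • a) : (m : ℤ) ∣ x - y := by
  by_contra hdvd
  obtain ⟨e, he⟩ := Int.eq_ofNat_of_zero_le (Int.emod_nonneg (y - x) (by lia : (m : ℤ) ≠ 0))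
  have hem : e < m := by exact_mod_cast he ▸ Int.emod_lt_of_pos (y - x) (by lia : (0 : ℤ) < m)
  have he₀ : 0 < e := Nat.pos_of_ne_zero (by
    rintro rfl
    exact hdvd ((dvd_sub_comm).mp (Int.dvd_of_emod_eq_zero he)))
  have hback : U (x + e) = U x + (-((y - x) / m) * d - k) • a := by
    rw [show x + (e : ℤ) = y + (-((y - x) / m)) • (m : ℤ) by
      rw [← he, Int.emod_def, smul_eq_mul]; ring, AddConstMapClass.map_add_zsmul, hxy, sub_smul,
      mul_smul]
    abel
  by_cases hk : -((y - x) / m) * d - k = 0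
  · rw [hk, zero_smul, add_zero] at hback
    have := hmin (x + e) (m - e) d (by lia) hd (by
      rw [Nat.cast_sub hem.le, add_add_sub_cancel, hback]
      exact AddConstMapClass.map_add_const U x)
    lia
  · exact absurd (hmin x e _ he₀ hk hback) hem.not_ge

lemma exists_addConstMap_of_reflTransGen (ha : ∀ d : ℤ, d ≠ 0 → d • a ≠ 0)
    (hR : ∀ {x y} (l : ℤ), R x y → R (x + l • a) (y + l • a)) {u : A} {d : ℤ} (hd : d ≠ 0)
    (hud : ReflTransGen R u (u + d • a)) :
    ∃ m : ℕ, 0 < m ∧ ∃ d : ℤ, d ≠ 0 ∧ ∃ U : ℤ →+c[(m : ℤ), d • a] A,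
      (∀ k, R (U k) (U (k + 1))) ∧ ∀ x y k : ℤ, U x = U y + k • a → (m : ℤ) ∣ x - y := by
  classical
  have hRd (d : ℤ) {x y : A} (l : ℤ) (h : R x y) : R (x + l • d • a) (y + l • d • a) := by
    rw [smul_smul]
    exact hR _ h
  have hex : ∃ m : ℕ, 0 < m ∧ ∃ d : ℤ, d ≠ 0 ∧
      ∃ U : ℤ →+c[(m : ℤ), d • a] A, ∀ k, R (U k) (U (k + 1)) := by
    obtain ⟨m, s, rfl, hsm, hs⟩ := exists_walk_of_reflTransGen hud
    have hm : 0 < m := Nat.pos_of_ne_zero (by rintro rfl; exact ha d hd (by simpa using hsm))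
    exact ⟨m, hm, d, hd, exists_addConstMap_of_walk (hRd d) hm hs hsm⟩
  have hspec := Nat.find_spec hex
  have hmin (e : ℕ) := Nat.find_min' hex (m := e)
  generalize Nat.find hex = m at hspec hmin
  obtain ⟨hm, d, hd, U, hU⟩ := hspec
  have hshort (x : ℤ) (e : ℕ) (k : ℤ) (he : 0 < e) (hk : k ≠ 0) (h : U (x + e) = U x + k • a) :
      m ≤ e :=
    hmin e ⟨he, k, hk, exists_addConstMap_of_walk (u := fun i ↦ U (x + i)) (hRd k) he
      (fun i _ ↦ by simpa [add_assoc] using hU (x + i)) (by simpa using h)⟩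
  exact ⟨m, hm, d, hd, U, hU, fun x y k ↦ dvd_sub_of_le_of_return hm hd hshort⟩

end QuasiPeriodicWalks

section BoundaryWalks

open Relation

/-- The boundary edges of a set `S` of unit squares of the plane, a square being indexed by its
lower left corner: pairs `(u, v)` where `v` is the right or upper neighbour of `u` and exactly one
of the two squares adjacent to the edge from `u` to `v` belongs to `S`. -/
def IsBoundaryEdge (S : Set (ℤ × ℤ)) (u v : ℤ × ℤ) : Prop :=
  (v = u + (1, 0) ∧ ¬(u - (0, 1) ∈ S ↔ u ∈ S)) ∨ (v = u + (0, 1) ∧ ¬(u - (1, 0) ∈ S ↔ u ∈ S))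

/-- Adjacency in the unoriented graph formed by the boundary edges of a set of unit squares. -/
def BoundaryAdj (S : Set (ℤ × ℤ)) (u v : ℤ × ℤ) : Prop :=
  IsBoundaryEdge S u v ∨ IsBoundaryEdge S v u

/-- Adjacency in the grid `ℤ × ℤ`. -/
def LatticeAdj (u v : ℤ × ℤ) : Prop :=
  ∃ ε : ℤ, IsUnit ε ∧ (v = u + (ε, 0) ∨ v = u + (0, ε))

variable {S : Set (ℤ × ℤ)} {u v w : ℤ × ℤ}

lemma IsBoundaryEdge.add_right (hw : Function.Periodic (· ∈ S) w) (h : IsBoundaryEdge S u v) :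
    IsBoundaryEdge S (u + w) (v + w) := by
  have hmem (c : ℤ × ℤ) : c + w ∈ S ↔ c ∈ S := (hw c).to_iff
  simpa only [IsBoundaryEdge, add_right_comm u w, add_left_inj, add_sub_right_comm, hmem] using h

lemma BoundaryAdj.add_right (hw : Function.Periodic (· ∈ S) w) (h : BoundaryAdj S u v) :
    BoundaryAdj S (u + w) (v + w) :=
  h.imp (IsBoundaryEdge.add_right hw) (IsBoundaryEdge.add_right hw)

instance : Std.Symm (BoundaryAdj S) := ⟨fun _ _ ↦ Or.symm⟩

lemma BoundaryAdj.latticeAdj (h : BoundaryAdj S u v) : LatticeAdj u v := by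
  rcases h with (⟨rfl, -⟩ | ⟨rfl, -⟩) | ⟨rfl, -⟩ | ⟨rfl, -⟩
  · exact ⟨1, isUnit_one, .inl rfl⟩
  · exact ⟨1, isUnit_one, .inr rfl⟩
  · exact ⟨-1, isUnit_one.neg, .inl (by simp [add_assoc])⟩
  · exact ⟨-1, isUnit_one.neg, .inr (by simp [add_assoc])⟩

lemma LatticeAdj.add_right (h : LatticeAdj u v) : LatticeAdj (u + w) (v + w) := by
  obtain ⟨ε, hε, h⟩ := h
  exact ⟨ε, hε, h.imp (by rintro rfl; abel) (by rintro rfl; abel)⟩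

lemma LatticeAdj.abs_fst_sub_le (h : LatticeAdj u v) : |v.1 - u.1| ≤ 1 := by
  obtain ⟨ε, hε, rfl | rfl⟩ := h <;> rcases Int.isUnit_iff.mp hε with rfl | rfl <;> simp

-- The sum of the increments of `g` along the squares of `S` in a given row does not depend on the
-- row; it is `1` for low rows and `0` for high ones.
lemma false_of_boundary_potential {n : ℕ} (hS : Function.Periodic (· ∈ S) ((n : ℤ), 0)) {j₀ j₁ : ℤ}
    (hlow : ∀ c : ℤ × ℤ, c.2 < j₀ → c ∈ S) (hhigh : ∀ c : ℤ × ℤ, j₁ ≤ c.2 → c ∉ S)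
    {g : ℤ × ℤ → ℤ} (hg : ∀ {u v}, IsBoundaryEdge S u v → g u = g v)
    (hgn : ∀ u, g (u + ((n : ℤ), 0)) = g u + 1) : False := by
  classical
  let s : ℤ × ℤ → ℤ := fun c ↦ if c ∈ S then 1 else 0
  let rowSum : ℤ → ℤ := fun y ↦ ∑ x ∈ Finset.range n, s (x, y) * (g (x + 1, y) - g (x, y))
  have hs_eq {c c' : ℤ × ℤ} (h : c ∈ S ↔ c' ∈ S) : s c = s c' := if_congr h rfl rfl
  have hhor (x y : ℤ) : (s (x, y) - s (x, y + 1)) * (g (x + 1, y + 1) - g (x, y + 1)) = 0 := by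
    by_cases h : (x, y) ∈ S ↔ (x, y + 1) ∈ S
    · rw [hs_eq h, sub_self, zero_mul]
    · rw [hg (u := (x, y + 1)) (v := (x + 1, y + 1)) (.inl ⟨by simp, by simpa using h⟩), sub_self,
        mul_zero]
  have hver (x y : ℤ) : (s (x - 1, y) - s (x, y)) * (g (x, y + 1) - g (x, y)) = 0 := by
    by_cases h : (x - 1, y) ∈ S ↔ (x, y) ∈ S
    · rw [hs_eq h, sub_self, zero_mul]
    · rw [hg (u := (x, y)) (v := (x, y + 1)) (.inr ⟨by simp, by simpa using h⟩), sub_self, mul_zero]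
  have hrow (y : ℤ) : rowSum (y + 1) = rowSum y := by
    let F : ℤ → ℤ := fun x ↦ s (x - 1, y) * (g (x, y + 1) - g (x, y))
    have hterm (x : ℤ) : s (x, y + 1) * (g (x + 1, y + 1) - g (x, y + 1)) -
        s (x, y) * (g (x + 1, y) - g (x, y)) = F (x + 1) - F x := by
      simp only [F, add_sub_cancel_right]
      linear_combination -hhor x y + hver x y
    have hF : F n = F 0 := by
      have hsn := hs_eq (hS (-1, y)).to_iff
      have hgn₀ := hgn (0, y)
      have hgn₁ := hgn (0, y + 1)
      simp only [Prod.mk_add_mk, zero_add, add_zero, neg_add_eq_sub] at hsn hgn₀ hgn₁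
      simp [F, hsn, hgn₀, hgn₁]
    rw [← sub_eq_zero, ← Finset.sum_sub_distrib, Finset.sum_congr rfl fun (x : ℕ) _ ↦ hterm x]
    simpa [hF] using Finset.sum_range_sub (fun x : ℕ ↦ F x) n
  have hbot : rowSum (j₀ - 1) = 1 := by
    have hsum := Finset.sum_range_sub (fun x : ℕ ↦ g (x, j₀ - 1)) n
    have hgn₀ := hgn (0, j₀ - 1)
    simp only [Prod.mk_add_mk, zero_add, add_zero] at hgn₀
    simpa [rowSum, s, hlow, hgn₀] using hsum
  have htop (y : ℤ) (hy : j₁ ≤ y) : rowSum y = 0 :=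
    Finset.sum_eq_zero fun x _ ↦ by rw [show s (x, y) = 0 from if_neg (hhigh (x, y) hy), zero_mul]
  have hconst (y : ℤ) : rowSum y = rowSum 0 := by
    simpa using Function.Periodic.int_mul_eq (f := rowSum) (c := 1) hrow y
  exact zero_ne_one ((htop j₁ le_rfl).symm.trans ((hconst _).trans ((hconst _).symm.trans hbot)))

theorem exists_reflTransGen_boundaryAdj {n : ℕ} (hS : Function.Periodic (· ∈ S) ((n : ℤ), 0))
    {j₀ j₁ : ℤ} (hlow : ∀ c : ℤ × ℤ, c.2 < j₀ → c ∈ S) (hhigh : ∀ c : ℤ × ℤ, j₁ ≤ c.2 → c ∉ S) :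
    ∃ (u : ℤ × ℤ) (d : ℤ), d ≠ 0 ∧ ReflTransGen (BoundaryAdj S) u (u + d • ((n : ℤ), 0)) := by
  by_contra! hcon
  let r : Setoid (ℤ × ℤ) := ⟨ReflTransGen (BoundaryAdj S), fun _ ↦ .refl,
    fun h ↦ symm h, .trans⟩
  obtain ⟨g, hg, hgn⟩ := exists_potential (a := ((n : ℤ), (0 : ℤ))) r
    (fun h k ↦ ReflTransGen.lift (· + k • ((n : ℤ), (0 : ℤ)))
      (fun _ _ ↦ BoundaryAdj.add_right (hS.zsmul k)) _ _ h)
    (fun {u d} h ↦ by_contra fun hd ↦ hcon u d hd h)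
  exact false_of_boundary_potential hS hlow hhigh (fun h ↦ hg (.single (.inl h))) hgn

open scoped AddConstMap in
lemma exists_boundary_walk {n : ℕ} (hn : 3 ≤ n) (hS : Function.Periodic (· ∈ S) ((n : ℤ), 0))
    {j₀ j₁ : ℤ} (hlow : ∀ c : ℤ × ℤ, c.2 < j₀ → c ∈ S) (hhigh : ∀ c : ℤ × ℤ, j₁ ≤ c.2 → c ∉ S) :
    ∃ m : ℕ, 3 ≤ m ∧ ∃ d : ℤ, d ≠ 0 ∧ ∃ U : ℤ →+c[(m : ℤ), d • ((n : ℤ), (0 : ℤ))] ℤ × ℤ,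
      (∀ k, BoundaryAdj S (U k) (U (k + 1))) ∧
      ∀ x y k : ℤ, U x = U y + k • ((n : ℤ), 0) → (m : ℤ) ∣ x - y := by
  obtain ⟨u, d, hd, hud⟩ := exists_reflTransGen_boundaryAdj hS hlow hhigh
  obtain ⟨m, -, d, hd, U, hU, hinj⟩ := exists_addConstMap_of_reflTransGen
    (fun d hd ↦ by simp [hd]; lia) (fun l h ↦ h.add_right (hS.zsmul l)) hd hud
  refine ⟨m, ?_, d, hd, U, hU, hinj⟩
  have hlip (k : ℕ) : |(U k).1 - (U 0).1| ≤ k := by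
    induction k with
    | zero => simp
    | succ k ih =>
      have hstep := (hU k).latticeAdj.abs_fst_sub_le
      push_cast
      linarith [abs_sub_le (U (k + 1)).1 (U k).1 (U 0).1]
  have hend : U m = U 0 + d • ((n : ℤ), 0) := by simpa using AddConstMapClass.map_add_const U 0
  have hdn : |d * n| ≤ m := by simpa [hend] using hlip m
  rw [abs_mul, Nat.abs_cast] at hdn
  have := Int.one_le_abs hd
  nlinarith

end BoundaryWalks

section GridCurves

/-- The closed square of side `1 / n` with lower left corner `c / n`. -/
def gridCell (n : ℕ) (c : ℤ × ℤ) : Set Plane :=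
  {x | n * x.1 ∈ Icc (c.1 : ℝ) (c.1 + 1) ∧ n * x.2 ∈ Icc (c.2 : ℝ) (c.2 + 1)}

/-- The affine parametrization by `[0, 1]` of the segment from `u / n` to `v / n`. -/
def edgePoint (n : ℕ) (u v : ℤ × ℤ) (t : ℝ) : Plane :=
  ((u.1 + t * (v.1 - u.1)) / n, (u.2 + t * (v.2 - u.2)) / n)

variable {n : ℕ} {S : Set (ℤ × ℤ)} {u u' v v' : ℤ × ℤ} {σ τ : ℝ}

lemma dist_le_of_mem_gridCell (hn : n ≠ 0) {c : ℤ × ℤ} {x y : Plane} (hx : x ∈ gridCell n c)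
    (hy : y ∈ gridCell n c) : dist x y ≤ 1 / n := by
  have hn₀ : (0 : ℝ) < n := by positivity
  have hcoord {i : ℤ} {s t : ℝ} (hs : n * s ∈ Icc (i : ℝ) (i + 1))
      (ht : n * t ∈ Icc (i : ℝ) (i + 1)) : dist s t ≤ 1 / n := by
    have hdist := Real.dist_le_of_mem_Icc hs ht
    rwa [Real.dist_eq, ← mul_sub, abs_mul, Nat.abs_cast, add_sub_cancel_left, ← le_div_iff₀' hn₀]
      at hdist
  exact max_le (hcoord hx.1 hy.1) (hcoord hx.2 hy.2)

lemma BoundaryAdj.edgePoint_mem_gridCell (hn : n ≠ 0) (h : BoundaryAdj S u v) {t : ℝ}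
    (ht : t ∈ Icc (0 : ℝ) 1) :
    (∃ c ∈ S, edgePoint n u v t ∈ gridCell n c) ∧ ∃ c ∉ S, edgePoint n u v t ∈ gridCell n c := by
  suffices h : ∃ c c', ¬(c ∈ S ↔ c' ∈ S) ∧ edgePoint n u v t ∈ gridCell n c ∧
      edgePoint n u v t ∈ gridCell n c' by
    obtain ⟨c, c', h, hc, hc'⟩ := h
    by_cases hcS : c ∈ S
    · exact ⟨⟨c, hcS, hc⟩, c', by tauto, hc'⟩
    · exact ⟨⟨c', by tauto, hc'⟩, c, hcS, hc⟩
  have hn₀ : (n : ℝ) ≠ 0 := by exact_mod_cast hn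
  obtain ⟨ht₀, ht₁⟩ := ht
  rcases h with (⟨rfl, h⟩ | ⟨rfl, h⟩) | ⟨rfl, h⟩ | ⟨rfl, h⟩ <;> refine ⟨_, _, h, ?_, ?_⟩ <;>
    simp [gridCell, edgePoint, mul_div_cancel₀ _ hn₀, ht₀, ht₁]

lemma edgePoint_add_zsmul (hn : n ≠ 0) (k : ℤ) (t : ℝ) :
    edgePoint n (u + k • ((n : ℤ), 0)) (v + k • ((n : ℤ), 0)) t = Tr k (edgePoint n u v t) := by
  have hn₀ : (n : ℝ) ≠ 0 := by exact_mod_cast hn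
  ext
  · simp only [edgePoint, Tr, Prod.fst_add, Prod.smul_fst, smul_eq_mul]
    push_cast
    field_simp
    ring
  · simp [edgePoint, Tr]

lemma intCast_eq_of_add_mul_eq {a b ε : ℤ} (hε : IsUnit ε) (hσ : σ ∈ Ico (0 : ℝ) 1)
    (h : (a : ℝ) + σ * ε = b) : a = b ∧ σ = 0 := by
  obtain ⟨hσ₀, hσ₁⟩ := hσ
  have hab : |b - a| < 1 := by
    have hσε : ((b - a : ℤ) : ℝ) = σ * ε := by push_cast; linarith
    have habs : |(ε : ℝ)| = 1 := by exact_mod_cast Int.isUnit_iff_abs_eq.mp hε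
    have : |((b - a : ℤ) : ℝ)| < 1 := by rwa [hσε, abs_mul, habs, mul_one, abs_of_nonneg hσ₀]
    exact_mod_cast this
  obtain rfl : b = a := sub_eq_zero.mp (Int.abs_lt_one_iff.mp hab)
  exact ⟨rfl, by simpa [hε.ne_zero] using h⟩

lemma eq_or_swap_of_add_mul_eq {a b ε δ : ℤ} (hε : IsUnit ε) (hδ : IsUnit δ)
    (hσ : σ ∈ Ico (0 : ℝ) 1) (hτ : τ ∈ Ico (0 : ℝ) 1) (h : (a : ℝ) + σ * ε = b + τ * δ) :
    (a = b ∧ σ = τ) ∨ (a = b + δ ∧ a + ε = b) := by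
  obtain ⟨hσ₀, hσ₁⟩ := hσ
  obtain ⟨hτ₀, hτ₁⟩ := hτ
  have hεε : (ε : ℝ) * ε = 1 := by exact_mod_cast Int.isUnit_mul_self hε
  obtain ⟨c, hc⟩ : ∃ c : ℤ, b = a + c * ε :=
    ⟨(b - a) * ε, by rw [mul_assoc, Int.isUnit_mul_self hε]; ring⟩
  rcases Int.isUnit_eq_or_eq_neg hδ hε with rfl | rfl
  · have hcστ : (c : ℝ) = σ - τ := by
      rw [hc] at h
      push_cast at h
      linear_combination -(δ : ℝ) * h + (σ - τ - c) * hεε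
    obtain rfl : c = 0 := Int.abs_lt_one_iff.mp (by
      have : |(c : ℝ)| < 1 := abs_lt.mpr ⟨by linarith, by linarith⟩
      exact_mod_cast this)
    exact .inl ⟨by simp [hc], by simpa [sub_eq_zero, eq_comm] using hcστ⟩
  · have hcστ : (c : ℝ) = σ + τ := by
      rw [hc] at h
      push_cast at h
      linear_combination -(ε : ℝ) * h + (σ + τ - c) * hεε
    have hc₀ : 0 ≤ c := by exact_mod_cast (by linarith : (0 : ℝ) ≤ c)
    have hc₂ : c < 2 := by exact_mod_cast (by linarith : (c : ℝ) < 2)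
    obtain rfl | rfl : c = 0 ∨ c = 1 := by lia
    · rw [Int.cast_zero] at hcστ
      exact .inl ⟨by simp [hc], by linarith⟩
    · exact .inr ⟨by simp [hc], by simp [hc]⟩

lemma edgePoint_eq_edgePoint (hn : n ≠ 0) (hu : LatticeAdj u u') (hv : LatticeAdj v v')
    (hσ : σ ∈ Ico (0 : ℝ) 1) (hτ : τ ∈ Ico (0 : ℝ) 1)
    (h : edgePoint n u u' σ = edgePoint n v v' τ) : (u = v ∧ σ = τ) ∨ (u = v' ∧ u' = v) := by
  have hn₀ : (n : ℝ) ≠ 0 := by exact_mod_cast hn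
  obtain ⟨h₁, h₂⟩ := Prod.ext_iff.mp h
  simp only [edgePoint, div_left_inj' hn₀] at h₁ h₂
  obtain ⟨u₁, u₂⟩ := u
  obtain ⟨v₁, v₂⟩ := v
  obtain ⟨ε, hε, rfl | rfl⟩ := hu <;> obtain ⟨δ, hδ, rfl | rfl⟩ := hv <;>
    simp only [Prod.mk_add_mk, add_zero, Prod.mk.injEq, Int.cast_add, add_sub_cancel_left, sub_self,
      mul_zero, Int.cast_inj] at h₁ h₂ ⊢
  · subst h₂
    simpa only [and_true, true_and] using eq_or_swap_of_add_mul_eq hε hδ hσ hτ h₁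
  · obtain ⟨rfl, rfl⟩ := intCast_eq_of_add_mul_eq hε hσ h₁
    obtain ⟨rfl, rfl⟩ := intCast_eq_of_add_mul_eq hδ hτ h₂.symm
    exact .inl ⟨⟨rfl, rfl⟩, rfl⟩
  · obtain ⟨rfl, rfl⟩ := intCast_eq_of_add_mul_eq hε hσ h₂
    obtain ⟨rfl, rfl⟩ := intCast_eq_of_add_mul_eq hδ hτ h₁.symm
    exact .inl ⟨⟨rfl, rfl⟩, rfl⟩
  · subst h₁
    simpa only [and_true, true_and] using eq_or_swap_of_add_mul_eq hε hδ hσ hτ h₂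

theorem exists_isEssentialCircle_subset_boundary (hn : 3 ≤ n)
    (hS : Function.Periodic (· ∈ S) ((n : ℤ), 0)) {j₀ j₁ : ℤ}
    (hlow : ∀ c : ℤ × ℤ, c.2 < j₀ → c ∈ S) (hhigh : ∀ c : ℤ × ℤ, j₁ ≤ c.2 → c ∉ S) :
    ∃ γ : ℝ → Plane, IsEssentialCircle (range fun s ↦ prj (γ s)) ∧
      ∀ s, (∃ c ∈ S, γ s ∈ gridCell n c) ∧ ∃ c ∉ S, γ s ∈ gridCell n c := by
  obtain ⟨m, hm, d, hd, U, hU, hinj⟩ := exists_boundary_walk hn hS hlow hhigh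
  have hn₀ : n ≠ 0 := by lia
  have hm₀ : (m : ℝ) ≠ 0 := by positivity
  let σ : ℤ → ℝ → Plane := fun k ↦ edgePoint n (U k) (U (k + 1))
  have hσ : Continuous fun s : ℝ ↦ σ ⌊s⌋ (Int.fract s) :=
    continuous_floor_fract (fun k ↦ by unfold σ edgePoint; fun_prop) fun k ↦ by simp [σ, edgePoint]
  have hfract (s : ℝ) : Int.fract (m * s) ∈ Ico (0 : ℝ) 1 :=
    ⟨Int.fract_nonneg _, Int.fract_lt_one _⟩
  refine ⟨fun s ↦ σ ⌊m * s⌋ (Int.fract (m * s)), isEssentialCircle_range_prj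
    (hσ.comp (continuous_const_mul (m : ℝ))) hd (fun s ↦ ?_) (fun s t hst ↦ ?_),
    fun s ↦ (hU _).edgePoint_mem_gridCell hn₀ (Ico_subset_Icc_self (hfract s))⟩
  · have hshift : (m : ℝ) * (s + 1) = m * s + m := by ring
    simp only [σ, hshift, Int.floor_add_natCast, Int.fract_add_natCast, add_right_comm _ (m : ℤ),
      AddConstMapClass.map_add_const, edgePoint_add_zsmul hn₀]
  · obtain ⟨k, hk⟩ := prj_eq_prj_iff.mp hst
    rw [← edgePoint_add_zsmul hn₀] at hk
    rcases edgePoint_eq_edgePoint hn₀ (hU _).latticeAdj (hU _).latticeAdj.add_right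
      (hfract s) (hfract t) hk with ⟨hUst, hfr⟩ | ⟨hUst, hUst'⟩
    · obtain ⟨l, hl⟩ := hinj _ _ _ hUst
      refine ⟨l, mul_left_cancel₀ hm₀ ?_⟩
      rw [← Int.floor_add_fract (m * s), hfr, eq_add_of_sub_eq hl, mul_add]
      push_cast
      linarith [Int.floor_add_fract ((m : ℝ) * t)]
    · have hdvd := (hinj _ _ _ hUst').sub (hinj _ _ _ hUst)
      ring_nf at hdvd
      exact absurd (Int.le_of_dvd two_pos hdvd) (by lia)

end GridCurves

/-! ### Lifts of maps isotopic to the identity -/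

section DeckTransformation

lemma Tr_Tr (k l : ℤ) (x : Plane) : Tr k (Tr l x) = Tr (k + l) x := by
  ext <;> simp [Tr]; ring

lemma Tr_zero (x : Plane) : Tr 0 x = x := by simp [Tr]

@[fun_prop]
lemma continuous_Tr (k : ℤ) : Continuous (Tr k) := by unfold Tr; fun_prop

lemma dist_Tr (k : ℤ) (x y : Plane) : dist (Tr k x) (Tr k y) = dist x y := by
  simp [Tr, Prod.dist_eq]

lemma commute_Tr_Tr (k l : ℤ) : Function.Commute (Tr k) (Tr l) := fun x ↦ by
  rw [Tr_Tr, Tr_Tr, add_comm]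

/-- The deck transformation `Tr k` as a homeomorphism. -/
def deckHomeomorph (k : ℤ) : Plane ≃ₜ Plane where
  toFun := Tr k
  invFun := Tr (-k)
  left_inv x := by rw [Tr_Tr, neg_add_cancel, Tr_zero]
  right_inv x := by rw [Tr_Tr, add_neg_cancel, Tr_zero]

lemma coe_deckHomeomorph (k : ℤ) : ⇑(deckHomeomorph k) = Tr k := rfl

lemma injIsotopic_Tr (k : ℤ) : InjIsotopic (Tr k) := by
  refine ⟨fun t x ↦ (x.1 + t * k, x.2), by fun_prop, fun t x y h ↦ ?_, fun x ↦ by simp,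
    fun x ↦ by simp [Tr]⟩
  simpa [Prod.ext_iff] using h

lemma commute_symm_Tr {F : Plane ≃ₜ Plane} (hFT : ∀ k, Function.Commute F (Tr k)) (k : ℤ) :
    Function.Commute F.symm (Tr k) := fun x ↦
  F.injective (by rw [hFT k, F.apply_symm_apply, F.apply_symm_apply])

lemma exists_eq_Tr_of_prj_eq {X : Type*} [TopologicalSpace X] [PreconnectedSpace X] [Nonempty X]
    {g₁ g₂ : X → Plane} (hg₁ : Continuous g₁) (hg₂ : Continuous g₂)
    (h : ∀ x, prj (g₁ x) = prj (g₂ x)) : ∃ k, ∀ x, g₁ x = Tr k (g₂ x) := by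
  obtain ⟨x₀⟩ := ‹Nonempty X›
  obtain ⟨k, hk⟩ := prj_eq_prj_iff.mp (h x₀)
  refine ⟨k, fun x ↦ ?_⟩
  have hfst := sub_eq_sub_of_coe_addCircle_eq hg₁.fst hg₂.fst
    (fun x ↦ congrArg Prod.fst (h x)) x x₀
  rw [hk] at hfst
  have hsnd : (g₁ x).2 = (g₂ x).2 := congrArg (fun z : Ann ↦ z.2) (h x)
  ext
  · simp only [Tr] at hfst ⊢
    linarith
  · exact hsnd

end DeckTransformation

section Lift

lemma exists_lift_isotopy {H : ℝ → Ann → Ann} (hH : Continuous fun q : ℝ × Ann ↦ H q.1 q.2)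
    (hH₀ : ∀ z, H 0 z = z) :
    ∃ Φ : ℝ → Plane → Plane, Continuous (fun q : ℝ × Plane ↦ Φ q.1 q.2) ∧ (∀ x, Φ 0 x = x) ∧
      ∀ t x, prj (Φ t x) = H t (prj x) := by
  have hHprj : Continuous fun q : ℝ × Plane ↦ H q.1 (prj q.2) :=
    hH.comp (continuous_fst.prodMk (continuous_prj.comp continuous_snd))
  obtain ⟨L, hL, hL₀, hLH⟩ := exists_continuous_coe_addCircle_eq hHprj.fst (a := (0, 0)) (e := 0)
    (by simp [hH₀, prj])
  let Φ (t : ℝ) (x : Plane) : Plane := (L (t, x), (H t (prj x)).2)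
  have hΦ : Continuous fun q : ℝ × Plane ↦ Φ q.1 q.2 := hL.prodMk hHprj.snd
  have hΦH (t : ℝ) (x : Plane) : prj (Φ t x) = H t (prj x) := Prod.ext (hLH (t, x)) rfl
  obtain ⟨k, hk⟩ := exists_eq_Tr_of_prj_eq (g₁ := Φ 0) (g₂ := id)
    (hΦ.comp (continuous_const.prodMk continuous_id)) continuous_id fun x ↦ by simp [hΦH, hH₀]
  have hk₀ : k = 0 := by simpa [Φ, hL₀, Tr, eq_comm] using congrArg Prod.fst (hk 0)
  exact ⟨Φ, hΦ, fun x ↦ by rw [hk, hk₀, Tr_zero, id], hΦH⟩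

lemma commute_Tr_of_lift_isotopy {H : ℝ → Ann → Ann} {Φ : ℝ → Plane → Plane}
    (hΦ : Continuous fun q : ℝ × Plane ↦ Φ q.1 q.2) (hΦ₀ : ∀ x, Φ 0 x = x)
    (hΦH : ∀ t x, prj (Φ t x) = H t (prj x)) (t : ℝ) (k : ℤ) : Function.Commute (Φ t) (Tr k) := by
  have hprj (x : Plane) : prj (Tr k x) = prj x := prj_eq_prj_iff.mpr ⟨k, rfl⟩
  obtain ⟨l, hl⟩ := exists_eq_Tr_of_prj_eq (g₁ := fun q : ℝ × Plane ↦ Φ q.1 (Tr k q.2))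
    (hΦ.comp (f := fun q : ℝ × Plane ↦ (q.1, Tr k q.2)) (by fun_prop)) hΦ
    fun q ↦ by rw [hΦH, hΦH, hprj]
  have hlk : l = k := by
    simpa [hΦ₀, Tr, eq_comm] using congrArg Prod.fst (hl (0, 0))
  exact fun x ↦ hlk ▸ hl (t, x)

lemma exists_equivariant_isotopy {f : Ann ≃ₜ Ann} {F : Plane ≃ₜ Plane} (hf : IsotopicToId f)
    (hF : IsLift f F) :
    ∃ Φ : ℝ → Plane → Plane, Continuous (fun q : ℝ × Plane ↦ Φ q.1 q.2) ∧
      (∀ t, Function.Injective (Φ t)) ∧ (∀ x, Φ 0 x = x) ∧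
      (∀ t k, Function.Commute (Φ t) (Tr k)) ∧ ∃ j, ∀ x, F x = Tr j (Φ 1 x) := by
  obtain ⟨H, hH, hHhomeo, hH₀, hH₁⟩ := hf
  obtain ⟨Φ, hΦ, hΦ₀, hΦH⟩ := exists_lift_isotopy hH hH₀
  have hΦT := commute_Tr_of_lift_isotopy hΦ hΦ₀ hΦH
  refine ⟨Φ, hΦ, fun t x y hxy ↦ ?_, hΦ₀, hΦT, exists_eq_Tr_of_prj_eq F.continuous
    (hΦ.comp (continuous_const.prodMk continuous_id)) fun x ↦ by rw [hF, hΦH, hH₁]⟩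
  obtain ⟨h, hh⟩ := hHhomeo t
  obtain ⟨k, rfl⟩ := prj_eq_prj_iff.mp (h.injective (a₁ := prj x) (a₂ := prj y)
    (by rw [← hh, ← hh, ← hΦH, ← hΦH, hxy]))
  rw [hΦT t k y] at hxy
  have hk : k = 0 := by simpa [Tr] using congrArg Prod.fst hxy
  rw [hk, Tr_zero]

lemma IsLift.commute_Tr {f : Ann ≃ₜ Ann} {F : Plane ≃ₜ Plane} (hF : IsLift f F)
    (hf : IsotopicToId f) (k : ℤ) : Function.Commute F (Tr k) := fun x ↦ by
  obtain ⟨Φ, -, -, -, hΦT, j, hj⟩ := exists_equivariant_isotopy hf hF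
  rw [hj, hj, hΦT 1 k, commute_Tr_Tr]

lemma IsLift.injIsotopic {f : Ann ≃ₜ Ann} {F : Plane ≃ₜ Plane} (hF : IsLift f F)
    (hf : IsotopicToId f) : InjIsotopic F := by
  obtain ⟨Φ, hΦ, hΦinj, hΦ₀, -, j, hj⟩ := exists_equivariant_isotopy hf hF
  have hFΦ : ⇑F = Tr j ∘ Φ 1 := funext hj
  exact hFΦ ▸ (injIsotopic_Tr j).comp ⟨Φ, hΦ, hΦinj, hΦ₀, fun _ ↦ rfl⟩

lemma IsLift.symm {f : Ann ≃ₜ Ann} {F : Plane ≃ₜ Plane} (hF : IsLift f F) :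
    IsLift f.symm F.symm := fun x ↦
  f.injective (by rw [← hF, F.apply_symm_apply, f.apply_symm_apply])

lemma IsotopicToId.symm {f : Ann ≃ₜ Ann} (hf : IsotopicToId f) : IsotopicToId f.symm := by
  obtain ⟨H, hH, hHhomeo, hH₀, hH₁⟩ := hf
  refine ⟨fun t z ↦ H (1 - t) (f.symm z), hH.comp ((continuous_const.sub continuous_fst).prodMk
    (f.symm.continuous.comp continuous_snd)), fun t ↦ ?_, fun z ↦ by simp [hH₁],
    fun z ↦ by simp [hH₀]⟩
  obtain ⟨h, hh⟩ := hHhomeo (1 - t)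
  exact ⟨f.symm.trans h, fun z ↦ by simp [hh]⟩

lemma IntersectionProperty.symm {f : Ann ≃ₜ Ann} (hf : IntersectionProperty f) :
    IntersectionProperty f.symm := by
  intro c hc
  obtain ⟨_, hz, w, hw, rfl⟩ := hf c hc
  exact ⟨w, hw, _, hz, f.symm_apply_apply w⟩

end Lift

/-! ### Preservation of the ends -/

section Ends

/-- The neighbourhoods in the plane of the southern end of the annulus. -/
def southEnd : Filter Plane := comap Prod.snd atBot

/-- The neighbourhoods in the plane of the northern end of the annulus. -/
def northEnd : Filter Plane := comap Prod.snd atTop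

/-- `G` fixes both ends of the annulus. -/
def PreservesEnds (G : Plane → Plane) : Prop :=
  Tendsto G southEnd southEnd ∧ Tendsto G northEnd northEnd

lemma mem_southEnd_iff {s : Set Plane} : s ∈ southEnd ↔ ∃ c, ∀ x : Plane, x.2 < c → x ∈ s := by
  simp [southEnd, (atBot_basis_Iio.comap Prod.snd).mem_iff, subset_def]

lemma mem_northEnd_iff {s : Set Plane} : s ∈ northEnd ↔ ∃ c, ∀ x : Plane, c < x.2 → x ∈ s := by
  simp [northEnd, (atTop_basis_Ioi.comap Prod.snd).mem_iff, subset_def]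

lemma PreservesEnds.iterate {G : Plane → Plane} (hG : PreservesEnds G) (n : ℕ) :
    PreservesEnds G^[n] :=
  ⟨hG.1.iterate n, hG.2.iterate n⟩

lemma PreservesEnds.comp {G H : Plane → Plane} (hG : PreservesEnds G) (hH : PreservesEnds H) :
    PreservesEnds (G ∘ H) :=
  ⟨hG.1.comp hH.1, hG.2.comp hH.2⟩

lemma preservesEnds_Tr (k : ℤ) : PreservesEnds (Tr k) :=
  ⟨tendsto_comap_iff.mpr tendsto_comap, tendsto_comap_iff.mpr tendsto_comap⟩

variable {X : Type*} [TopologicalSpace X]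

lemma subset_image_of_isotopy {h : ℝ → X ≃ₜ X} (hh : Continuous fun q : ℝ × X ↦ h q.1 q.2)
    (h₀ : ∀ x, h 0 x = x) {U V W : Set X} (hU : IsOpen U) (hV : IsOpen V) (hUV : Disjoint U V)
    (hW : IsOpen W) (hWc : IsPreconnected W) (hWU : W ⊆ U)
    (hcover : ∀ t ∈ Icc (0 : ℝ) 1, W ⊆ h t '' U ∪ h t '' V) : W ⊆ h 1 '' U := by
  have hdisj (t : ℝ) : Disjoint (h t '' U) (h t '' V) :=
    (disjoint_image_iff (h t).injective).mpr hUV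
  have hsplit (t : ℝ) (ht : t ∈ Icc (0 : ℝ) 1) : W ⊆ h t '' U ∨ W ⊆ h t '' V :=
    hWc.subset_or_subset ((h t).isOpenMap _ hU) ((h t).isOpenMap _ hV) (hdisj t) (hcover t ht)
  obtain rfl | ⟨w, hw⟩ := W.eq_empty_or_nonempty
  · exact empty_subset _
  have hopen (A : Set X) : IsOpen {t | (h t '' A ∩ W).Nonempty} := by
    have : {t | (h t '' A ∩ W).Nonempty} = ⋃ a ∈ A, (fun t ↦ h t a) ⁻¹' W := by
      ext t
      simp [Set.Nonempty, and_comm]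
    rw [this]
    exact isOpen_biUnion fun a _ ↦ hW.preimage (hh.comp (continuous_id.prodMk continuous_const))
  refine (hsplit 1 (by simp)).resolve_right fun hW₁ ↦ ?_
  obtain ⟨t, ht, ⟨a, haU, haW⟩, b, hbV, hbW⟩ := isPreconnected_Icc (a := (0 : ℝ)) (b := 1)
    _ _ (hopen U) (hopen V)
    (fun t ht ↦ (hsplit t ht).imp (fun h ↦ ⟨w, h hw, hw⟩) fun h ↦ ⟨w, h hw, hw⟩)
    ⟨0, by simp, w, ⟨w, hWU hw, h₀ w⟩, hw⟩ ⟨1, by simp, w, hW₁ hw, hw⟩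
  rcases hsplit t ht with hWt | hWt
  · exact disjoint_left.mp (hdisj t) (hWt hbW) hbV
  · exact disjoint_left.mp (hdisj t) haU (hWt haW)

lemma tendsto_symm_comap_atTop_of_isotopy {h : ℝ → X ≃ₜ X}
    (hh : Continuous fun q : ℝ × X ↦ h q.1 q.2) (h₀ : ∀ x, h 0 x = x) {g : X → ℝ}
    (hg : Continuous g) (hlevel : ∀ c, IsCompact (g ⁻¹' {c}))
    (hconn : ∀ c, IsPreconnected (g ⁻¹' Ioi c)) :
    Tendsto (h 1).symm (comap g atTop) (comap g atTop) := by
  refine tendsto_comap_iff.mpr (tendsto_atTop.mpr fun c ↦ ?_)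
  have htrace : IsCompact ((fun q : ℝ × X ↦ g (h q.1 q.2)) '' (Icc 0 1 ×ˢ (g ⁻¹' {c}))) :=
    (isCompact_Icc.prod (hlevel c)).image (hg.comp hh)
  obtain ⟨M, hM⟩ := htrace.bddAbove
  have hsub := subset_image_of_isotopy hh h₀ (U := g ⁻¹' Ioi c) (V := g ⁻¹' Iio c)
    (isOpen_Ioi.preimage hg) (isOpen_Iio.preimage hg)
    (disjoint_left.mpr fun x (hx : c < g x) (hx' : g x < c) ↦ lt_asymm hx hx')
    (isOpen_Ioi.preimage hg) (hconn (max M c)) (fun x hx ↦ (le_max_right M c).trans_lt hx)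
    fun t ht x hx ↦ by
      obtain ⟨y, rfl⟩ := (h t).surjective x
      rcases lt_trichotomy (g y) c with hy | hy | hy
      · exact Or.inr ⟨y, hy, rfl⟩
      · exact absurd ((le_max_left M c).trans_lt hx) (hM ⟨(t, y), ⟨ht, hy⟩, rfl⟩).not_gt
      · exact Or.inl ⟨y, hy, rfl⟩
  filter_upwards [preimage_mem_comap (Ioi_mem_atTop (max M c))] with x hx
  obtain ⟨y, hy, rfl⟩ := hsub hx
  simpa using (mem_Ioi.mp hy).le

lemma IsotopicToId.tendsto_symm_comap_snd {f : Ann ≃ₜ Ann} (hf : IsotopicToId f) :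
    Tendsto f.symm (comap Prod.snd atBot) (comap Prod.snd atBot) ∧
      Tendsto f.symm (comap Prod.snd atTop) (comap Prod.snd atTop) := by
  obtain ⟨H, hH, hHhomeo, hH₀, hH₁⟩ := hf
  choose h hh using hHhomeo
  have hcont : Continuous fun q : ℝ × Ann ↦ h q.1 q.2 := by simpa only [hh] using hH
  have hf₁ : h 1 = f := Homeomorph.ext fun z ↦ by rw [← hh, hH₁]
  have h₀ (z : Ann) : h 0 z = z := by rw [← hh, hH₀]
  have hprod (s : Set ℝ) : (Prod.snd : Ann → ℝ) ⁻¹' s = univ ×ˢ s := by ext; simp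
  have hneg : comap (fun z : Ann ↦ -z.2) atTop = comap Prod.snd atBot := by
    rw [← comap_neg_atTop, comap_comap]; rfl
  have hpre (s : Set ℝ) : (fun z : Ann ↦ -z.2) ⁻¹' s = univ ×ˢ (-s) := by ext; simp
  constructor
  · have := tendsto_symm_comap_atTop_of_isotopy hcont h₀ (g := fun z ↦ -z.2) (by fun_prop)
      (fun c ↦ by rw [hpre, neg_singleton]; exact isCompact_univ.prod isCompact_singleton)
      (fun c ↦ by rw [hpre, neg_Ioi]; exact isPreconnected_univ.prod isPreconnected_Iio)
    rwa [hf₁, hneg] at this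
  · have := tendsto_symm_comap_atTop_of_isotopy hcont h₀ (g := Prod.snd) continuous_snd
      (fun c ↦ by rw [hprod]; exact isCompact_univ.prod isCompact_singleton)
      (fun c ↦ by rw [hprod]; exact isPreconnected_univ.prod isPreconnected_Ioi)
    rwa [hf₁] at this

lemma IsLift.preservesEnds {f : Ann ≃ₜ Ann} {F : Plane ≃ₜ Plane} (hF : IsLift f F)
    (hf : IsotopicToId f) : PreservesEnds F := by
  have hsnd (l : Filter ℝ) : comap (Prod.snd : Plane → ℝ) l = comap prj (comap Prod.snd l) := by
    rw [comap_comap]; rfl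
  have hlift (l : Filter Ann) (h : Tendsto f l l) : Tendsto F (comap prj l) (comap prj l) := by
    refine tendsto_comap_iff.mpr ?_
    rw [show prj ∘ F = f ∘ prj from funext hF]
    exact h.comp tendsto_comap
  obtain ⟨hbot, htop⟩ := hf.symm.tendsto_symm_comap_snd
  rw [Homeomorph.symm_symm] at hbot htop
  exact ⟨by simpa only [southEnd, hsnd] using hlift _ hbot,
    by simpa only [northEnd, hsnd] using hlift _ htop⟩

end Ends

/-! ### Attractors separating the ends -/

section LowerRegion

/-- `Z` is an open set invariant under `Tr N` that contains a neighbourhood of the southern end of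
the annulus and misses a neighbourhood of the northern one. -/
structure IsLowerRegion (N : ℤ) (Z : Set Plane) : Prop where
  isOpen : IsOpen Z
  mapsTo_Tr (k : ℤ) : MapsTo (Tr (k * N)) Z Z
  mem_southEnd : Z ∈ southEnd
  compl_mem_northEnd : Zᶜ ∈ northEnd

variable {Z : Set Plane}

lemma compl_thickening_mem_northEnd (hZ : Zᶜ ∈ northEnd) (r : ℝ) :
    (Metric.thickening r Z)ᶜ ∈ northEnd := by
  obtain ⟨c, hc⟩ := mem_northEnd_iff.mp hZ
  refine mem_northEnd_iff.mpr ⟨c + r, fun x hx hxr ↦ ?_⟩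
  obtain ⟨z, hz, hxz⟩ := Metric.mem_thickening_iff.mp hxr
  have hsnd : dist x.2 z.2 < r := (le_max_right _ _).trans_lt hxz
  rw [Real.dist_eq] at hsnd
  exact hc z (by linarith [(abs_lt.mp hsnd).2]) hz

namespace IsLowerRegion

lemma Tr_mem_iff (hZ : IsLowerRegion 1 Z) (k : ℤ) {x : Plane} : Tr k x ∈ Z ↔ x ∈ Z := by
  refine ⟨fun h ↦ ?_, fun h ↦ mul_one k ▸ hZ.mapsTo_Tr k h⟩
  simpa [Tr_Tr, Tr_zero] using hZ.mapsTo_Tr (-k) h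

lemma exists_mapsTo_thickening (hZ : IsLowerRegion 1 Z) {H : Plane → Plane} (hH : Continuous H)
    (hHT : ∀ k, Function.Commute H (Tr k)) (hHZ : MapsTo H (closure Z) Z) :
    ∃ δ > 0, MapsTo H (Metric.thickening δ Z) Z := by
  obtain ⟨c, hc⟩ := mem_southEnd_iff.mp hZ.mem_southEnd
  obtain ⟨c', hc'⟩ := mem_northEnd_iff.mp (compl_thickening_mem_northEnd hZ.compl_mem_northEnd 1)
  let K : Set Plane := Icc 0 1 ×ˢ Icc c c' ∩ H ⁻¹' Zᶜ
  have hK : IsCompact K :=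
    (isCompact_Icc.prod isCompact_Icc).inter_right (hZ.isOpen.isClosed_compl.preimage hH)
  obtain ⟨δ, hδ, hKδ⟩ := hK.exists_thickening_subset_open isClosed_closure.isOpen_compl
    fun x hx hxZ ↦ hx.2 (hHZ hxZ)
  refine ⟨min δ 1, by positivity, fun x hx ↦ ?_⟩
  by_contra hHx
  have hxK : Tr (-⌊x.1⌋) x ∈ K := by
    refine ⟨⟨?_, ?_, ?_⟩, ?_⟩
    · simp only [Tr, mem_Icc]
      push_cast
      constructor <;> linarith [Int.floor_le x.1, Int.lt_floor_add_one x.1]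
    · exact not_lt.mp fun h ↦ hHx (hHZ (subset_closure (hc x h)))
    · exact not_lt.mp fun h ↦ hc' x h (Metric.thickening_mono (min_le_right _ _) Z hx)
    · rwa [mem_preimage, hHT, mem_compl_iff, hZ.Tr_mem_iff]
  obtain ⟨z, hz, hxz⟩ := Metric.mem_thickening_iff.mp hx
  refine hKδ (Metric.mem_thickening_iff.mpr ⟨_, hxK, ?_⟩)
    (subset_closure ((hZ.Tr_mem_iff (-⌊x.1⌋)).mpr hz))
  rw [dist_Tr, dist_comm]
  exact hxz.trans_le (min_le_left _ _)

lemma exists_isEssentialCircle_near_frontier (hZ : IsLowerRegion 1 Z) {ε : ℝ} (hε : 0 < ε) :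
    ∃ γ : ℝ → Plane, IsEssentialCircle (range fun s ↦ prj (γ s)) ∧
      ∀ s, γ s ∈ Metric.thickening ε Z ∧ γ s ∉ Z := by
  obtain ⟨m, hm⟩ := exists_nat_one_div_lt hε
  let n := m + 3
  have hn₀ : (0 : ℝ) < n := by positivity
  have hnε : 1 / (n : ℝ) < ε := hm.trans_le' (by
    simp only [n]
    push_cast
    gcongr
    linarith)
  obtain ⟨c, hc⟩ := mem_southEnd_iff.mp hZ.mem_southEnd
  obtain ⟨c', hc'⟩ := mem_northEnd_iff.mp hZ.compl_mem_northEnd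
  let S : Set (ℤ × ℤ) := {b | (Z ∩ gridCell n b).Nonempty}
  have hgrid (k : ℤ) (b : ℤ × ℤ) (x : Plane) :
      Tr k x ∈ gridCell n (b + k • ((n : ℤ), 0)) ↔ x ∈ gridCell n b := by
    simp [gridCell, Tr, mul_add, mul_comm (k : ℝ), add_right_comm _ ((n : ℝ) * k)]
  have hperiodic : Function.Periodic (· ∈ S) ((n : ℤ), 0) := fun b ↦ propext
    ⟨fun ⟨x, hx, hxb⟩ ↦ ⟨Tr (-1) x, (hZ.Tr_mem_iff _).mpr hx,
        (hgrid 1 _ _).mp (by simpa [Tr_Tr, Tr_zero] using hxb)⟩,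
      fun ⟨x, hx, hxb⟩ ↦ ⟨Tr 1 x, (hZ.Tr_mem_iff _).mpr hx, by
        simpa using (hgrid 1 _ _).mpr hxb⟩⟩
  have hlow (b : ℤ × ℤ) (hb : b.2 < ⌊n * c⌋) : b ∈ S := by
    refine ⟨((b.1 : ℝ) / n, (b.2 : ℝ) / n), hc _ ?_, ?_⟩
    · rw [div_lt_iff₀' hn₀]
      exact (lt_add_one _).trans_le (Int.lt_floor_iff.mp hb)
    · simp [gridCell, mul_div_cancel₀ _ hn₀.ne']
  have hhigh (b : ℤ × ℤ) (hb : ⌈n * c'⌉ + 1 ≤ b.2) : b ∉ S := by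
    rintro ⟨x, hxZ, hxb⟩
    refine hc' x ?_ hxZ
    have hb' : (⌈n * c'⌉ : ℝ) + 1 ≤ b.2 := by exact_mod_cast hb
    have hlt : n * c' < n * x.2 := by linarith [Int.le_ceil (n * c'), hxb.2.1]
    exact lt_of_mul_lt_mul_left hlt hn₀.le
  obtain ⟨γ, hγ, hγS⟩ :=
    exists_isEssentialCircle_subset_boundary (n := n) (by lia) hperiodic hlow hhigh
  refine ⟨γ, hγ, fun s ↦ ⟨?_, ?_⟩⟩
  · obtain ⟨b, ⟨x, hxZ, hxb⟩, hsb⟩ := (hγS s).1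
    exact Metric.mem_thickening_iff.mpr
      ⟨x, hxZ, (dist_le_of_mem_gridCell (by lia) hsb hxb).trans_lt hnε⟩
  · obtain ⟨b, hb, hsb⟩ := (hγS s).2
    exact fun h ↦ hb ⟨γ s, h, hsb⟩

variable {f : Ann ≃ₜ Ann} {F : Plane ≃ₜ Plane}

lemma not_mapsTo_closure (hZ : IsLowerRegion 1 Z) (hf : IntersectionProperty f) (hF : IsLift f F)
    (hFT : ∀ k, Function.Commute F (Tr k)) : ¬ MapsTo F (closure Z) Z := by
  intro hFZ
  obtain ⟨ε, hε, hFε⟩ := hZ.exists_mapsTo_thickening F.continuous hFT hFZ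
  obtain ⟨γ, hγ, hγZ⟩ := hZ.exists_isEssentialCircle_near_frontier hε
  obtain ⟨_, ⟨s, rfl⟩, _, ⟨t, rfl⟩, hst⟩ := hf _ hγ
  obtain ⟨k, hk⟩ := prj_eq_prj_iff.mp ((hF (γ t)).trans hst)
  exact (hγZ s).2 ((hZ.Tr_mem_iff k).mp (hk ▸ hFε (hγZ t).1))

lemma iUnion_image_thickening {N : ℤ} (hZ : IsLowerRegion N Z)
    (hFT : ∀ k, Function.Commute F (Tr k)) (hFsymm : Tendsto F.symm northEnd northEnd) {q : ℕ}
    (hq : 0 < q) {r : ℕ → ℝ} (hr : 0 < r 0) :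
    IsLowerRegion N (⋃ i ∈ Finset.range q, F^[i] '' Metric.thickening (r i) Z) := by
  refine ⟨isOpen_biUnion fun i _ ↦ ?_, fun k ↦ mapsTo_iUnion₂_iUnion₂ fun i _ ↦ ?_,
    mem_of_superset hZ.mem_southEnd fun x hx ↦ mem_biUnion (Finset.mem_range.mpr hq)
      ⟨x, Metric.self_subset_thickening hr _ hx, rfl⟩, ?_⟩
  · rw [← homeomorph_coe_pow]
    exact (F ^ i).isOpenMap _ Metric.isOpen_thickening
  · rintro _ ⟨y, hy, rfl⟩
    obtain ⟨z, hz, hyz⟩ := Metric.mem_thickening_iff.mp hy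
    rw [← (hFT _).iterate_left i]
    exact mem_image_of_mem _ (Metric.mem_thickening_iff.mpr
      ⟨_, hZ.mapsTo_Tr k hz, by rwa [dist_Tr]⟩)
  · simp only [compl_iUnion]
    refine (biInter_finset_mem _).mpr fun i _ ↦ ?_
    filter_upwards [(hFsymm.iterate i) (compl_thickening_mem_northEnd hZ.compl_mem_northEnd (r i))]
    rintro _ hx ⟨y, hy, rfl⟩
    have hleft : Function.LeftInverse F.symm F := F.symm_apply_apply
    exact hx (by rwa [hleft.iterate i y])

-- An attractor of `F^q` yields one of `F`: the union of the images under `F^i`, `i < q`, of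
-- thickenings of `Z` whose radii increase with `i`.
lemma not_mapsTo_iterate_closure (hZ : IsLowerRegion 1 Z) (hf : IntersectionProperty f)
    (hF : IsLift f F) (hFT : ∀ k, Function.Commute F (Tr k))
    (hFsymm : Tendsto F.symm northEnd northEnd) {q : ℕ} (hq : 0 < q) :
    ¬ MapsTo F^[q] (closure Z) Z := by
  intro hFZ
  obtain ⟨δ, hδ, hFδ⟩ := hZ.exists_mapsTo_thickening (F.continuous.iterate q)
    (fun k ↦ (hFT k).iterate_left q) hFZ
  let r (i : ℕ) : ℝ := (i + 1) * δ / (q + 1)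
  have hr₀ (i : ℕ) : 0 < r i := by positivity
  have hr_succ (i : ℕ) : r i < r (i + 1) := by
    simp only [r]
    gcongr
    simp
  have hrδ {i : ℕ} (hi : i < q) : r i < δ := by
    have : (i : ℝ) < q := by exact_mod_cast hi
    rw [div_lt_iff₀ (by positivity)]
    nlinarith
  let E : Set Plane := ⋃ i ∈ Finset.range q, F^[i] '' Metric.thickening (r i) Z
  have hmemE {i : ℕ} (hi : i < q) {x : Plane} (hx : x ∈ Metric.thickening (r i) Z) :
      F^[i] x ∈ E := mem_biUnion (Finset.mem_range.mpr hi) (mem_image_of_mem _ hx)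
  have hZE : Z ⊆ E := fun x hx ↦ hmemE hq (Metric.self_subset_thickening (hr₀ 0) _ hx)
  have hE : IsLowerRegion 1 E := hZ.iUnion_image_thickening hFT hFsymm hq (hr₀ 0)
  refine hE.not_mapsTo_closure hf hF hFT fun x hx ↦ ?_
  rw [Finset.closure_biUnion] at hx
  obtain ⟨i, hi, hx⟩ := mem_iUnion₂.mp hx
  rw [← homeomorph_coe_pow, ← (F ^ i).image_closure] at hx
  obtain ⟨y, hy, rfl⟩ := hx
  have hy' := Metric.closure_thickening_subset_cthickening _ _ hy
  rw [homeomorph_coe_pow, ← Function.iterate_succ_apply' (⇑F)]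
  obtain hlt | rfl := (Nat.succ_le_of_lt (Finset.mem_range.mp hi)).lt_or_eq
  · exact hmemE hlt (Metric.cthickening_subset_thickening' (hr₀ _) (hr_succ i) _ hy')
  · exact hZE (hFδ (Metric.cthickening_subset_thickening' hδ (hrδ i.lt_succ_self) _ hy'))

lemma iUnion_preimage_Tr {N : ℤ} (hN : N ≠ 0) (hZ : IsLowerRegion N Z) :
    IsLowerRegion 1 (⋃ i ∈ Finset.range N.natAbs, Tr i ⁻¹' Z) ∧
      ∀ k, Tr k ⁻¹' Z ⊆ ⋃ i ∈ Finset.range N.natAbs, Tr i ⁻¹' Z := by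
  have hsub (k : ℤ) : Tr k ⁻¹' Z ⊆ ⋃ i ∈ Finset.range N.natAbs, Tr i ⁻¹' Z := fun x hx ↦ by
    have hmod := Int.emod_nonneg k hN
    have hlt := Int.emod_lt_abs k hN
    rw [Int.abs_eq_natAbs] at hlt
    refine mem_biUnion (x := (k % N).toNat) (Finset.mem_coe.mpr (Finset.mem_range.mpr (by lia))) ?_
    have := hZ.mapsTo_Tr (-(k / N)) hx
    rwa [Tr_Tr, show -(k / N) * N + k = ((k % N).toNat : ℤ) by
      rw [Int.toNat_of_nonneg hmod, Int.emod_def]; ring] at this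
  refine ⟨⟨isOpen_biUnion fun i _ ↦ hZ.isOpen.preimage (continuous_Tr i), fun k x hx ↦ ?_, ?_, ?_⟩,
    hsub⟩
  · obtain ⟨i, -, hi⟩ := mem_iUnion₂.mp hx
    exact hsub (i - k) (by simpa [Tr_Tr] using hi)
  · exact mem_of_superset hZ.mem_southEnd fun x hx ↦ hsub 0 (by rwa [mem_preimage, Tr_zero])
  · simp only [compl_iUnion]
    exact (biInter_finset_mem _).mpr fun i _ ↦ (preservesEnds_Tr i).2 hZ.compl_mem_northEnd

theorem not_mapsTo_Tr_iterate_closure {N : ℤ} (hN : N ≠ 0) (hZ : IsLowerRegion N Z)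
    (hf : IntersectionProperty f) (hF : IsLift f F) (hFT : ∀ k, Function.Commute F (Tr k))
    (hFsymm : Tendsto F.symm northEnd northEnd) {q : ℕ} (hq : 0 < q) (p : ℤ) :
    ¬ MapsTo (Tr p ∘ F^[q]) (closure Z) Z := by
  intro hFZ
  obtain ⟨hW, hsub⟩ := hZ.iUnion_preimage_Tr hN
  refine hW.not_mapsTo_iterate_closure hf hF hFT hFsymm hq fun x hx ↦ ?_
  rw [Finset.closure_biUnion] at hx
  obtain ⟨i, -, hx⟩ := mem_iUnion₂.mp hx
  rw [← coe_deckHomeomorph, ← (deckHomeomorph i).preimage_closure, coe_deckHomeomorph] at hx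
  have := hFZ hx
  rw [Function.comp_apply, (hFT _).iterate_left q, Tr_Tr] at this
  exact hsub _ this

end IsLowerRegion

end LowerRegion

section Component

variable {X : Type*} [TopologicalSpace X] {l : Filter X} {H : X → X} {K U : Set X} {x₀ y : X}

lemma mapsTo_connectedComponentIn (hH : Continuous H) (hK : IsPreconnected K) (hKU : MapsTo H K U)
    (hy : y ∈ K) (hHy : H y ∈ connectedComponentIn U x₀) :
    MapsTo H K (connectedComponentIn U x₀) := by
  rw [connectedComponentIn_eq hHy, mapsTo_iff_image_subset]
  exact (hK.image H hH.continuousOn).subset_connectedComponentIn (mem_image_of_mem H hy)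
    hKU.image_subset

lemma mapsTo_connectedComponentIn_of_tendsto [l.NeBot] (hC : connectedComponentIn U x₀ ∈ l)
    (hH : Continuous H) (hHl : Tendsto H l l) (hK : IsPreconnected K)
    (hCK : connectedComponentIn U x₀ ⊆ K) (hKU : MapsTo H K U) :
    MapsTo H K (connectedComponentIn U x₀) := by
  obtain ⟨y, hy, hHy⟩ := Filter.nonempty_of_mem (inter_mem hC (hHl hC))
  exact mapsTo_connectedComponentIn hH hK hKU (hCK hy) hHy

lemma exists_connectedComponentIn_mem [l.NeBot] (hl : ∀ s ∈ l, ∃ t ∈ l, IsPreconnected t ∧ t ⊆ s)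
    (hU : U ∈ l) : ∃ x₀, connectedComponentIn U x₀ ∈ l := by
  obtain ⟨t, ht, htc, htU⟩ := hl U hU
  obtain ⟨x₀, hx₀⟩ := Filter.nonempty_of_mem ht
  exact ⟨x₀, mem_of_superset ht (htc.subset_connectedComponentIn hx₀ htU)⟩

lemma mapsTo_closure_compl_closure (G : X ≃ₜ X) {Q : Set X} (hQ : IsOpen Q)
    (h : MapsTo G.symm (closure Q) Q) : MapsTo G (closure (closure Q)ᶜ) (closure Q)ᶜ := by
  intro x hx hGx
  have hxQ := h hGx
  rw [G.symm_apply_apply] at hxQ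
  obtain ⟨y, hyQ, hy⟩ := mem_closure_iff.mp hx Q hQ hxQ
  exact hy (subset_closure hyQ)

end Component

section Ends

lemma mapsTo_Tr_compl {N : ℤ} {Q : Set Plane} (hQ : ∀ k, MapsTo (Tr (k * N)) Q Q) (k : ℤ) :
    MapsTo (Tr (k * N)) Qᶜ Qᶜ := fun x hx hxQ ↦ hx (by
  simpa [Tr_Tr, ← add_mul, Tr_zero] using hQ (-k) hxQ)

instance : southEnd.NeBot := atBot_neBot.comap_of_surj Prod.snd_surjective

instance : northEnd.NeBot := atTop_neBot.comap_of_surj Prod.snd_surjective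

lemma exists_isPreconnected_mem_southEnd {s : Set Plane} (hs : s ∈ southEnd) :
    ∃ t ∈ southEnd, IsPreconnected t ∧ t ⊆ s := by
  obtain ⟨c, hc⟩ := mem_southEnd_iff.mp hs
  exact ⟨univ ×ˢ Iio c, mem_southEnd_iff.mpr ⟨c, fun x hx ↦ ⟨trivial, hx⟩⟩,
    isPreconnected_univ.prod isPreconnected_Iio, fun x hx ↦ hc x hx.2⟩

lemma exists_isPreconnected_mem_northEnd {s : Set Plane} (hs : s ∈ northEnd) :
    ∃ t ∈ northEnd, IsPreconnected t ∧ t ⊆ s := by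
  obtain ⟨c, hc⟩ := mem_northEnd_iff.mp hs
  exact ⟨univ ×ˢ Ioi c, mem_northEnd_iff.mpr ⟨c, fun x hx ↦ ⟨trivial, hx⟩⟩,
    isPreconnected_univ.prod isPreconnected_Ioi, fun x hx ↦ hc x hx.2⟩

lemma compl_closure_mem_southEnd_or_northEnd {C : Set Plane} (hC : IsOpen C)
    (hCc : IsPreconnected C) {β : ℝ → Plane} (hβc : Continuous β) {m : ℝ} (hm : m ≠ 0)
    (hβ : ∀ s, β (s + 1) = β s + (m, 0)) (hβC : ∀ s, β s ∉ C) :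
    (closure C)ᶜ ∈ southEnd ∨ (closure C)ᶜ ∈ northEnd := by
  have hperiodic : Function.Periodic (fun s ↦ (β s).2) 1 := fun s ↦ by simp [hβ]
  have hcompact := hperiodic.compact_of_continuous one_ne_zero hβc.snd
  obtain ⟨a, ha⟩ := hcompact.bddBelow
  obtain ⟨b, hb⟩ := hcompact.bddAbove
  by_cases hlow : ∀ x ∈ C, a ≤ x.2
  · refine .inl (mem_southEnd_iff.mpr ⟨a, fun x hx hxC ↦ hx.not_ge ?_⟩)
    exact closure_minimal hlow (isClosed_le continuous_const continuous_snd) hxC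
  by_cases hhigh : ∀ x ∈ C, x.2 ≤ b
  · refine .inr (mem_northEnd_iff.mpr ⟨b, fun x hx hxC ↦ hx.not_ge ?_⟩)
    exact closure_minimal hhigh (isClosed_le continuous_snd continuous_const) hxC
  push Not at hlow hhigh
  obtain ⟨x, hx, hxa⟩ := hlow
  obtain ⟨y, hy, hyb⟩ := hhigh
  have hjoined := ((hC.isConnected_iff_isPathConnected.mp ⟨⟨x, hx⟩, hCc⟩).joinedIn x hx y hy)
  obtain ⟨s, hs⟩ := exists_apply_mem_of_joinedIn hβc hm hβ hjoined
    (fun s ↦ hxa.trans_le (ha ⟨s, rfl⟩)) (fun s ↦ (hb ⟨s, rfl⟩).trans_lt hyb)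
  exact absurd hs (hβC s)

end Ends

section ConservativeLift

/-- The properties of the maps `T^(-p) ∘ F^q`, for `F` a lift of a homeomorphism isotopic to the
identity with the intersection property, on which the fixed point argument rests. The intersection
property is retained as the absence of regions separating the ends of the annulus (or of one of its
finite covers) and mapped into their interior by `G` or `G⁻¹`. -/
structure IsConservativeLift (G : Plane ≃ₜ Plane) : Prop where
  commute_Tr (k : ℤ) : Function.Commute G (Tr k)
  injIsotopic : InjIsotopic G
  preservesEnds : PreservesEnds G
  not_mapsTo {N : ℤ} (hN : N ≠ 0) {Z : Set Plane} (hZ : IsLowerRegion N Z) :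
    ¬ MapsTo G (closure Z) Z
  not_mapsTo_symm {N : ℤ} (hN : N ≠ 0) {Z : Set Plane} (hZ : IsLowerRegion N Z) :
    ¬ MapsTo G.symm (closure Z) Z

lemma coe_deckHomeomorph_mul_pow (F : Plane ≃ₜ Plane) (k : ℤ) (n : ℕ) :
    ⇑(deckHomeomorph k * F ^ n) = Tr k ∘ F^[n] := by
  rw [← homeomorph_coe_pow]
  rfl

theorem IsLift.isConservativeLift {f : Ann ≃ₜ Ann} {F : Plane ≃ₜ Plane} (hF : IsLift f F)
    (hiso : IsotopicToId f) (hf : IntersectionProperty f) (p : ℤ) {q : ℕ} (hq : 0 < q) :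
    IsConservativeLift (deckHomeomorph (-p) * F ^ q) := by
  have hFT := hF.commute_Tr hiso
  have hcoe := coe_deckHomeomorph_mul_pow F (-p) q
  have hsymm : ⇑(deckHomeomorph (-p) * F ^ q).symm = Tr p ∘ F.symm^[q] := by
    have hright : Function.RightInverse F.symm F := F.apply_symm_apply
    refine funext fun x ↦ (deckHomeomorph (-p) * F ^ q).injective ?_
    rw [Homeomorph.apply_symm_apply, hcoe, Function.comp_apply, Function.comp_apply,
      (hFT p).iterate_left q, hright.iterate q, Tr_Tr, neg_add_cancel, Tr_zero]
  refine ⟨fun k ↦ ?_, ?_, ?_, fun hN _ hZ ↦ ?_, fun hN _ hZ ↦ ?_⟩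
  · rw [hcoe]
    exact (commute_Tr_Tr _ k).comp_left ((hFT k).iterate_left q)
  · rw [hcoe]
    exact (injIsotopic_Tr _).comp ((hF.injIsotopic hiso).iterate q)
  · rw [hcoe]
    exact (preservesEnds_Tr _).comp ((hF.preservesEnds hiso).iterate q)
  · rw [hcoe]
    exact hZ.not_mapsTo_Tr_iterate_closure hN hf hF hFT (hF.symm.preservesEnds hiso.symm).2 hq _
  · rw [hsymm]
    exact hZ.not_mapsTo_Tr_iterate_closure hN hf.symm hF.symm (commute_symm_Tr hFT)
      (hF.preservesEnds hiso).2 hq _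

namespace IsConservativeLift

variable {G : Plane ≃ₜ Plane} {N : ℤ} {A U : Set Plane} {β γ : ℝ → Plane} {m : ℝ}

lemma notMem_southEnd (hG : IsConservativeLift G) (hN : N ≠ 0) (hU : IsOpen U)
    (hUT : ∀ k, MapsTo (Tr (k * N)) U U) (hGU : MapsTo G (closure U) U) (hβc : Continuous β)
    (hm : m ≠ 0) (hβ : ∀ s, β (s + 1) = β s + (m, 0)) (hβU : ∀ s, β s ∉ U) : U ∉ southEnd := by
  intro hUs
  obtain ⟨x₀, hC⟩ := exists_connectedComponentIn_mem
    (fun _ ↦ exists_isPreconnected_mem_southEnd) hUs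
  have hCU := connectedComponentIn_subset U x₀
  have hCc : IsPreconnected (connectedComponentIn U x₀) := isPreconnected_connectedComponentIn
  have hnorth := (compl_closure_mem_southEnd_or_northEnd hU.connectedComponentIn hCc hβc hm hβ
    fun s hs ↦ hβU s (hCU hs)).resolve_left
    fun h ↦ compl_notMem (mem_of_superset hC subset_closure) h
  refine hG.not_mapsTo hN ⟨hU.connectedComponentIn, fun k ↦ ?_, hC,
    mem_of_superset hnorth (compl_subset_compl.mpr subset_closure)⟩ ?_
  · exact mapsTo_connectedComponentIn_of_tendsto hC (continuous_Tr _) (preservesEnds_Tr _).1 hCc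
      subset_rfl ((hUT k).mono_left hCU)
  · exact mapsTo_connectedComponentIn_of_tendsto hC G.continuous hG.preservesEnds.1 hCc.closure
      subset_closure (hGU.mono_left (closure_mono hCU))

lemma notMem_northEnd (hG : IsConservativeLift G) (hN : N ≠ 0) (hU : IsOpen U)
    (hUT : ∀ k, MapsTo (Tr (k * N)) U U) (hGU : MapsTo G (closure U) U) (hβc : Continuous β)
    (hm : m ≠ 0) (hβ : ∀ s, β (s + 1) = β s + (m, 0)) (hβU : ∀ s, β s ∉ U) : U ∉ northEnd := by
  intro hUn
  obtain ⟨x₀, hC⟩ := exists_connectedComponentIn_mem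
    (fun _ ↦ exists_isPreconnected_mem_northEnd) hUn
  have hCU := connectedComponentIn_subset U x₀
  have hCc : IsPreconnected (connectedComponentIn U x₀) := isPreconnected_connectedComponentIn
  have hC' : closure (connectedComponentIn U x₀) ∈ northEnd := mem_of_superset hC subset_closure
  have hsouth := (compl_closure_mem_southEnd_or_northEnd hU.connectedComponentIn hCc hβc hm hβ
    fun s hs ↦ hβU s (hCU hs)).resolve_right (compl_notMem hC')
  have hCT (k : ℤ) : MapsTo (Tr (k * N)) (connectedComponentIn U x₀)
      (connectedComponentIn U x₀) :=
    mapsTo_connectedComponentIn_of_tendsto hC (continuous_Tr _) (preservesEnds_Tr _).2 hCc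
      subset_rfl ((hUT k).mono_left hCU)
  refine hG.not_mapsTo_symm hN ⟨isClosed_closure.isOpen_compl,
    mapsTo_Tr_compl fun k ↦ (hCT k).closure (continuous_Tr _), hsouth, by rwa [compl_compl]⟩ ?_
  refine mapsTo_closure_compl_closure G.symm hU.connectedComponentIn ?_
  exact mapsTo_connectedComponentIn_of_tendsto hC G.continuous hG.preservesEnds.2 hCc.closure
    subset_closure (hGU.mono_left (closure_mono hCU))

-- Otherwise the component `Q` of `Aᶜ` containing `γ` would be a repeller, and the complement of its
-- closure an attractor containing a neighbourhood of one of the ends, because `β` misses `Q`.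
theorem symm_apply_notMem_connectedComponentIn (hG : IsConservativeLift G) (hN : N ≠ 0)
    (hA : IsClosed A) (hAT : ∀ k, MapsTo (Tr (k * N)) A A) (hGA : MapsTo G A (interior A))
    (hβc : Continuous β) (hm : m ≠ 0) (hβ : ∀ s, β (s + 1) = β s + (m, 0)) (hβA : ∀ s, β s ∈ A)
    (hγc : Continuous γ) (hγ : ∀ s, γ (s + 1) = γ s + ((N : ℝ), 0)) (hγA : ∀ s, γ s ∉ A)
    {y : Plane} (hy : y ∈ connectedComponentIn Aᶜ (γ 0)) :
    G.symm y ∉ connectedComponentIn Aᶜ (γ 0) := by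
  intro hGy
  set Q := connectedComponentIn Aᶜ (γ 0)
  have hQo : IsOpen Q := hA.isOpen_compl.connectedComponentIn
  have hQA : Q ⊆ Aᶜ := connectedComponentIn_subset _ _
  have hQc : IsPreconnected Q := isPreconnected_connectedComponentIn
  have hγQ (s : ℝ) : γ s ∈ Q := (isPreconnected_range hγc).subset_connectedComponentIn
    (mem_range_self 0) (range_subset_iff.mpr hγA) (mem_range_self s)
  have hGQ : MapsTo G.symm (closure Q) Q := by
    refine mapsTo_connectedComponentIn G.symm.continuous hQc.closure (fun x hx hxA ↦ ?_)
      (subset_closure hy) hGy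
    have hxi := hGA hxA
    rw [G.apply_symm_apply] at hxi
    exact closure_compl.subset (closure_mono hQA hx) hxi
  have hQT (k : ℤ) : MapsTo (Tr (k * N)) Q Q := by
    refine mapsTo_connectedComponentIn (continuous_Tr _) hQc
      ((mapsTo_Tr_compl hAT k).mono_left hQA) (hγQ 0) ?_
    convert hγQ k using 1
    rw [apply_intCast_of_add_one hγ]
    ext <;> simp [Tr]
  have hUT := mapsTo_Tr_compl fun k ↦ (hQT k).closure (continuous_Tr _)
  have hGU := mapsTo_closure_compl_closure G hQo hGQ
  have hγU (s : ℝ) : γ s ∉ (closure Q)ᶜ := fun h ↦ h (subset_closure (hγQ s))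
  have hN' : (N : ℝ) ≠ 0 := mod_cast hN
  obtain h | h := compl_closure_mem_southEnd_or_northEnd hQo hQc hβc hm hβ
    fun s hs ↦ hQA hs (hβA s)
  · exact hG.notMem_southEnd hN isClosed_closure.isOpen_compl hUT hGU hγc hN' hγ hγU h
  · exact hG.notMem_northEnd hN isClosed_closure.isOpen_compl hUT hGU hγc hN' hγ hγU h

end IsConservativeLift

end ConservativeLift

section ClosedCover

variable {X ι : Type*} [TopologicalSpace X] {B : ι → Set X}

lemma isClosed_biUnion_of_locallyFinite (hB : LocallyFinite B) (hBc : ∀ i, IsClosed (B i))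
    (S : Set ι) : IsClosed (⋃ i ∈ S, B i) := by
  rw [biUnion_eq_iUnion]
  exact (hB.comp_injective Subtype.val_injective).isClosed_iUnion fun i ↦ hBc i

lemma mem_interior_biUnion_of_locallyFinite (hB : LocallyFinite B) (hBc : ∀ i, IsClosed (B i))
    (hcover : ∀ x, ∃ i, x ∈ B i) {S : Set ι} {x : X} (hx : ∀ i, x ∈ B i → i ∈ S) :
    x ∈ interior (⋃ i ∈ S, B i) := by
  refine mem_interior.mpr ⟨(⋃ i ∈ Sᶜ, B i)ᶜ, fun y hy ↦ ?_,
    (isClosed_biUnion_of_locallyFinite hB hBc Sᶜ).isOpen_compl, fun h ↦ ?_⟩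
  · obtain ⟨i, hi⟩ := hcover y
    exact mem_biUnion (by_contra fun hS ↦ hy (mem_biUnion hS hi)) hi
  · obtain ⟨i, hi, hxi⟩ := mem_iUnion₂.mp h
    exact hi (hx i hxi)

end ClosedCover

section PeriodicCurve

lemma exists_periodic_curve_of_joinedIn {x : Plane} {m : ℤ} {U : Set Plane}
    (hU : ∀ k, MapsTo (Tr (k * m)) U U) (hx : JoinedIn U x (Tr m x)) :
    ∃ β : ℝ → Plane, Continuous β ∧ (∀ s, β (s + 1) = β s + ((m : ℝ), 0)) ∧ β 0 = x ∧
      ∀ s, β s ∈ U := by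
  obtain ⟨γ, hγ⟩ := hx
  let σ : ℤ → ℝ → Plane := fun k s ↦ Tr (k * m) (γ.extend s)
  refine ⟨fun s ↦ σ ⌊s⌋ (Int.fract s), continuous_floor_fract
    (fun k ↦ (continuous_Tr _).comp γ.continuous_extend) fun k ↦ ?_, fun s ↦ ?_, ?_, fun s ↦ ?_⟩
  · simp only [σ, Path.extend_one, Path.extend_zero, Tr_Tr]
    congr 1
    ring
  · simp only [σ, Int.floor_add_one, Int.fract_add_one]
    ext
    · simp only [Tr, Int.cast_mul, Int.cast_add, Int.cast_one, Prod.mk_add_mk]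
      ring
    · simp [Tr]
  · simp [σ, Tr_zero]
  · simp only [σ, Path.extend_apply _ ⟨Int.fract_nonneg s, (Int.fract_lt_one s).le⟩]
    exact hU _ (hγ _)

lemma exists_periodic_curve_mem_interior {G : Plane ≃ₜ Plane}
    (hGT : ∀ k, Function.Commute G (Tr k)) {m : ℤ} {A K : Set Plane} (hGA : MapsTo G A (interior A))
    (hAT : ∀ k, MapsTo (Tr (k * m)) A A) (hK : IsPreconnected K) (hKA : K ⊆ A) {x z : Plane}
    (hx : x ∈ K) (hGx : G x ∈ K) (hz : z ∈ K) (hTz : Tr m z ∈ K) :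
    ∃ β : ℝ → Plane, Continuous β ∧ (∀ s, β (s + 1) = β s + ((m : ℝ), 0)) ∧
      (∀ s, β s ∈ interior A) ∧ ∃ w ∈ connectedComponentIn (interior A) (β 0),
        G w ∈ connectedComponentIn (interior A) (β 0) := by
  set C := connectedComponentIn (interior A) (G z)
  have hC : C ⊆ interior A := connectedComponentIn_subset _ _
  have hKC : MapsTo G K C := mapsTo_connectedComponentIn G.continuous hK (hGA.mono_left hKA) hz
    (mem_connectedComponentIn (hGA (hKA hz)))
  have hpath : IsPathConnected C :=
    isOpen_interior.connectedComponentIn.isConnected_iff_isPathConnected.mp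
      ⟨⟨_, hKC hz⟩, isPreconnected_connectedComponentIn⟩
  have hTGz : Tr m (G z) ∈ C := hGT m z ▸ hKC hTz
  have hT (k : ℤ) : MapsTo (Tr (k * m)) (interior A) (interior A) := by
    rw [← coe_deckHomeomorph, mapsTo_iff_image_subset, Homeomorph.image_interior]
    exact interior_mono (hAT k).image_subset
  obtain ⟨β, hβc, hβ, hβ₀, hβA⟩ :=
    exists_periodic_curve_of_joinedIn hT ((hpath.joinedIn _ (hKC hz) _ hTGz).mono hC)
  exact ⟨β, hβc, hβ, hβA, G x, hβ₀ ▸ hKC hx, hβ₀ ▸ hKC hGx⟩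

end PeriodicCurve

lemma zero_mem_of_neg_of_pos {S : Set ℤ} (hS : ∀ a ∈ S, ∀ b ∈ S, a + b ∈ S) {a b : ℤ} (ha : a ∈ S)
    (hb : b ∈ S) (ha₀ : a < 0) (hb₀ : 0 < b) : 0 ∈ S := by
  have hmul {c : ℤ} (hc : c ∈ S) {n : ℕ} (hn : 1 ≤ n) : n * c ∈ S := by
    induction n, hn using Nat.le_induction with
    | base => simpa using hc
    | succ n _ ih =>
      have hadd := hS _ ih _ hc
      rwa [← add_one_mul, ← Nat.cast_succ] at hadd
  have hzero := hS _ (hmul ha (n := b.natAbs) (by lia)) _ (hmul hb (n := a.natAbs) (by lia))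
  rwa [Int.natCast_natAbs, Int.natCast_natAbs, abs_of_pos hb₀, abs_of_neg ha₀, neg_mul, mul_comm,
    add_neg_cancel] at hzero

section BrickDecomposition

open Relation

/-- A brick decomposition of the plane, invariant under `T^N`: a locally finite cover by compact
sets, the bricks, which are closures of their connected interiors and do not overlap. The group of
the `T^(kN)` acts on the indices of the bricks by `shift k`. -/
structure BrickDecomposition (N : ℤ) (ι : Type*) where
  brick : ι → Set Plane
  isCompact_brick (i : ι) : IsCompact (brick i)
  isPreconnected_interior (i : ι) : IsPreconnected (interior (brick i))
  subset_closure_interior (i : ι) : brick i ⊆ closure (interior (brick i))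
  disjoint_interior {i j : ι} (hij : i ≠ j) : Disjoint (interior (brick i)) (brick j)
  exists_mem_brick (x : Plane) : ∃ i, x ∈ brick i
  locallyFinite : LocallyFinite brick
  shift : ℤ → ι → ι
  shift_zero (i : ι) : shift 0 i = i
  shift_add (k l : ℤ) (i : ι) : shift (k + l) i = shift k (shift l i)
  mapsTo_Tr (k : ℤ) (i : ι) : MapsTo (Tr (k * N)) (brick i) (brick (shift k i))

namespace BrickDecomposition

variable {N : ℤ} {ι : Type*} (D : BrickDecomposition N ι)

/-- The relation between bricks `i` and `j` that the image of `i` under `G` meets `j`. -/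
def Hits (G : Plane → Plane) (i j : ι) : Prop := ∃ x ∈ D.brick i, G x ∈ D.brick j

/-- A family `b` of bricks permuted by the deck transformations `T^(kN)`, such that a brick meeting
`b 0` meets its image under `G`. This ensures that the bricks which can be reached from `b 0` form a
connected set. -/
structure IsAnchor (G : Plane → Plane) (b : ℤ → ι) : Prop where
  shift_apply (k l : ℤ) : D.shift k (b l) = b (l + k)
  exists_hits : ∃ c, (D.brick (b 0) ∩ D.brick c).Nonempty ∧ D.Hits G (b 0) c

/-- The union of the bricks which can be reached from some `b k` by a chain of bricks, each of which
meets the image of the preceding one under `G`. -/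
def reachable (G : Plane → Plane) (b : ℤ → ι) : Set Plane :=
  ⋃ i ∈ {i | ∃ k, ReflTransGen (D.Hits G) (b k) i}, D.brick i

variable {D} {G G' : Plane → Plane} {H : Plane ≃ₜ Plane} {b b' b'' : ℤ → ι} {i j : ι}

lemma isPreconnected_brick (i : ι) : IsPreconnected (D.brick i) :=
  (D.isPreconnected_interior i).subset_closure interior_subset (D.subset_closure_interior i)

lemma isClosed_brick (i : ι) : IsClosed (D.brick i) := (D.isCompact_brick i).isClosed

lemma transGen_hits_of_iterate_mem {x : Plane} {n : ℕ} (hx : x ∈ D.brick i)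
    (hGx : G^[n + 1] x ∈ D.brick j) : TransGen (D.Hits G) i j := by
  induction n generalizing x i with
  | zero => exact .single ⟨x, hx, hGx⟩
  | succ n ih =>
    obtain ⟨k, hk⟩ := D.exists_mem_brick (G x)
    exact .head ⟨x, hx, hk⟩ (ih hk hGx)

lemma Hits.shift (hGT : ∀ k, Function.Commute G (Tr k)) (h : D.Hits G i j) (k : ℤ) :
    D.Hits G (D.shift k i) (D.shift k j) := by
  obtain ⟨x, hx, hGx⟩ := h
  exact ⟨_, D.mapsTo_Tr k i hx, hGT (k * N) x ▸ D.mapsTo_Tr k j hGx⟩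

lemma Hits.symm (h : D.Hits H i j) : D.Hits H.symm j i := by
  obtain ⟨x, hx, hHx⟩ := h
  exact ⟨H x, hHx, by rwa [H.symm_apply_apply]⟩

lemma reflTransGen_hits_symm (h : ReflTransGen (D.Hits H) i j) :
    ReflTransGen (D.Hits H.symm) j i :=
  h.swap.lift id fun _ _ hij ↦ Hits.symm hij

lemma IsAnchor.reflTransGen_shift (hGT : ∀ k, Function.Commute G (Tr k)) (hb : D.IsAnchor G b)
    (hb' : D.IsAnchor G' b') {k l : ℤ}
    (h : ReflTransGen (D.Hits G) (b k) (b' l)) (m : ℤ) :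
    ReflTransGen (D.Hits G) (b (k + m)) (b' (l + m)) := by
  rw [← hb.shift_apply, ← hb'.shift_apply]
  exact h.lift _ fun _ _ hij ↦ hij.shift hGT m

lemma IsAnchor.transGen_shift (hGT : ∀ k, Function.Commute G (Tr k)) (hb : D.IsAnchor G b)
    (hb' : D.IsAnchor G b') {k l : ℤ} (h : TransGen (D.Hits G) (b k) (b' l)) (m : ℤ) :
    TransGen (D.Hits G) (b (k + m)) (b' (l + m)) := by
  rw [← hb.shift_apply, ← hb'.shift_apply]
  exact h.lift _ fun _ _ hij ↦ hij.shift hGT m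

lemma brick_subset_reachable {k : ℤ} (h : ReflTransGen (D.Hits G) (b k) i) :
    D.brick i ⊆ D.reachable G b :=
  subset_biUnion_of_mem (u := D.brick) (show i ∈ {i | ∃ k, ReflTransGen _ (b k) i} from ⟨k, h⟩)

lemma isClosed_reachable : IsClosed (D.reachable G b) :=
  isClosed_biUnion_of_locallyFinite D.locallyFinite isClosed_brick _

lemma mapsTo_reachable : MapsTo G (D.reachable G b) (interior (D.reachable G b)) := by
  intro x hx
  obtain ⟨i, ⟨k, hk⟩, hxi⟩ := mem_iUnion₂.mp hx
  exact mem_interior_biUnion_of_locallyFinite D.locallyFinite isClosed_brick D.exists_mem_brick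
    fun j hj ↦ ⟨k, hk.tail ⟨x, hxi, hj⟩⟩

lemma mapsTo_Tr_reachable (hGT : ∀ k, Function.Commute G (Tr k)) (hb : D.IsAnchor G b) (k M : ℤ) :
    MapsTo (Tr (k * (M * N))) (D.reachable G b) (D.reachable G b) := by
  intro x hx
  obtain ⟨i, ⟨l, hl⟩, hxi⟩ := mem_iUnion₂.mp hx
  rw [← mul_assoc]
  refine brick_subset_reachable (k := l + k * M) ?_ (D.mapsTo_Tr (k * M) i hxi)
  rw [← hb.shift_apply]
  exact hl.lift _ fun _ _ hij ↦ hij.shift hGT _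

lemma IsAnchor.exists_isPreconnected_subset_reachable (hG : Continuous G) (hb : D.IsAnchor G b) :
    ∃ K ⊆ D.reachable G b, IsPreconnected K ∧ (∃ x ∈ K, G x ∈ K) ∧
      ∀ i, ReflTransGen (D.Hits G) (b 0) i → D.brick i ⊆ K := by
  obtain ⟨c, ⟨y, hyb, hyc⟩, x, hxb, hGx⟩ := hb.exists_hits
  set K := connectedComponentIn (D.reachable G b) y
  have hc : ReflTransGen (D.Hits G) (b 0) c := .single ⟨x, hxb, hGx⟩
  have hbK : D.brick (b 0) ⊆ K :=
    (isPreconnected_brick _).subset_connectedComponentIn hyb (brick_subset_reachable .refl)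
  have hcK : D.brick c ⊆ K :=
    (isPreconnected_brick _).subset_connectedComponentIn hyc (brick_subset_reachable hc)
  have hKG : MapsTo G K K := mapsTo_connectedComponentIn hG isPreconnected_connectedComponentIn
    (fun z hz ↦ interior_subset (mapsTo_reachable (connectedComponentIn_subset _ _ hz)))
    (hbK hxb) (hcK hGx)
  refine ⟨K, connectedComponentIn_subset _ _, isPreconnected_connectedComponentIn,
    ⟨x, hbK hxb, hcK hGx⟩, fun i hi ↦ ?_⟩
  induction hi with
  | refl => exact hbK
  | @tail i j hi hij ih =>
    obtain ⟨z, hz, hGz⟩ := hij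
    have hGzK : G z ∈ connectedComponentIn (D.reachable G b) y := hKG (ih hz)
    rw [show K = _ from connectedComponentIn_eq hGzK]
    exact (isPreconnected_brick j).subset_connectedComponentIn hGz
      (brick_subset_reachable (hi.tail ⟨z, hz, hGz⟩))

lemma IsAnchor.exists_periodic_curve (hHT : ∀ k, Function.Commute H (Tr k)) (hb : D.IsAnchor H b)
    {M : ℤ} (hM : ReflTransGen (D.Hits H) (b 0) (b M)) :
    ∃ β : ℝ → Plane, Continuous β ∧ (∀ s, β (s + 1) = β s + (((M * N : ℤ) : ℝ), 0)) ∧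
      (∀ s, β s ∈ interior (D.reachable H b)) ∧
      ∃ w ∈ connectedComponentIn (interior (D.reachable H b)) (β 0),
        H w ∈ connectedComponentIn (interior (D.reachable H b)) (β 0) := by
  obtain ⟨K, hKA, hK, ⟨x, hx, hHx⟩, hbK⟩ := hb.exists_isPreconnected_subset_reachable H.continuous
  obtain ⟨c, ⟨z, hz, -⟩, -⟩ := hb.exists_hits
  have hTz : Tr (M * N) z ∈ D.brick (b M) := by
    simpa only [hb.shift_apply, zero_add] using D.mapsTo_Tr M _ hz
  exact exists_periodic_curve_mem_interior hHT mapsTo_reachable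
    (fun k ↦ mapsTo_Tr_reachable hHT hb k M) hK hKA hx hHx (hbK _ .refl hz) (hbK _ hM hTz)

lemma interior_reachable_symm_subset
    (h : ∀ k l, ¬ ReflTransGen (D.Hits H) (b k) (b' l)) :
    interior (D.reachable H.symm b') ⊆ (D.reachable H b)ᶜ := by
  intro x hx hxA
  obtain ⟨i, ⟨k, hk⟩, hxi⟩ := mem_iUnion₂.mp hxA
  obtain ⟨u, hu, hui⟩ := mem_closure_iff.mp (D.subset_closure_interior i hxi) _ isOpen_interior hx
  obtain ⟨j, ⟨l, hl⟩, huj⟩ := mem_iUnion₂.mp (interior_subset hu)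
  have hij : i ≠ j := fun hij ↦ h k l (hk.trans (hij ▸ reflTransGen_hits_symm hl))
  exact disjoint_left.mp (D.disjoint_interior hij) hui huj

-- If no brick `b' l` can be reached, the union of the bricks reachable from `b` is an attractor
-- disjoint from the interior of the repeller formed by the bricks from which `b'` can be reached.
lemma exists_reflTransGen_hits (hH : IsConservativeLift H) (hN : N ≠ 0) (hb : D.IsAnchor H b)
    (hb' : D.IsAnchor H.symm b') {M M' : ℤ} (hM : M ≠ 0) (hM' : M' ≠ 0)
    (h : ReflTransGen (D.Hits H) (b 0) (b M)) (h' : ReflTransGen (D.Hits H) (b' 0) (b' M')) :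
    ∃ k l, ReflTransGen (D.Hits H) (b k) (b' l) := by
  by_contra! hunreachable
  have hdisj := interior_reachable_symm_subset hunreachable
  have hsymm := commute_symm_Tr hH.commute_Tr
  have h'' : ReflTransGen (D.Hits H.symm) (b' 0) (b' (-M')) := by
    simpa using hb'.reflTransGen_shift hsymm hb' (reflTransGen_hits_symm h') (-M')
  obtain ⟨β, hβc, hβ, hβA, -⟩ := hb.exists_periodic_curve hH.commute_Tr h
  obtain ⟨γ, hγc, hγ, hγA, w, hw, hHw⟩ := hb'.exists_periodic_curve hsymm h''
  have hsub := connectedComponentIn_mono (γ 0) hdisj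
  exact hH.symm_apply_notMem_connectedComponentIn (mul_ne_zero (neg_ne_zero.mpr hM') hN)
    isClosed_reachable (fun k ↦ mapsTo_Tr_reachable hH.commute_Tr hb k (-M')) mapsTo_reachable hβc
    (mod_cast mul_ne_zero hM hN) hβ (fun s ↦ interior_subset (hβA s)) hγc hγ
    (fun s ↦ hdisj (hγA s)) (hsub hw) (hsub hHw)

lemma IsAnchor.transGen_add (hGT : ∀ k, Function.Commute G (Tr k)) (hb' : D.IsAnchor G b')
    (hb'' : D.IsAnchor G b'') {k l : ℤ} (h : TransGen (D.Hits G) (b 0) (b' k))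
    (h' : TransGen (D.Hits G) (b' 0) (b'' l)) : TransGen (D.Hits G) (b 0) (b'' (k + l)) := by
  have hshift := hb'.transGen_shift hGT hb'' h' k
  rw [zero_add, add_comm] at hshift
  exact h.trans hshift

lemma IsAnchor.exists_transGen (hH : IsConservativeLift H) (hN : N ≠ 0) (hb : D.IsAnchor H b)
    (hb' : D.IsAnchor H.symm b') {M M' : ℤ} (hM : M ≠ 0) (hM' : M' ≠ 0)
    (h : TransGen (D.Hits H) (b 0) (b M)) (h' : TransGen (D.Hits H) (b' 0) (b' M')) :
    ∃ k, TransGen (D.Hits H) (b 0) (b' k) := by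
  obtain ⟨k, l, hkl⟩ := exists_reflTransGen_hits hH hN hb hb' hM hM' h.to_reflTransGen
    h'.to_reflTransGen
  have hshift := hb.reflTransGen_shift hH.commute_Tr hb' hkl (M - k)
  rw [add_sub_cancel] at hshift
  exact ⟨_, h.trans_left hshift⟩

-- Besides the given `b (-M)`, the bricks reached from `b 0` include some `b k` with `k > 0`,
-- obtained by travelling to `b'`, going around sufficiently many times and coming back. Iterating,
-- `b 0` is reached from itself.
theorem false_of_transGen_hits (hH : IsConservativeLift H) (hfix : ∀ x, H x ≠ x) (hN : N ≠ 0)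
    (hfree : ∀ i, IsFree H (D.brick i)) (hb : D.IsAnchor H b) (hb_symm : D.IsAnchor H.symm b)
    (hb' : D.IsAnchor H b') (hb'_symm : D.IsAnchor H.symm b') {M M' : ℤ} (hM : 0 < M)
    (hM' : 0 < M') (h : TransGen (D.Hits H) (b 0) (b (-M)))
    (h' : TransGen (D.Hits H) (b' 0) (b' M')) : False := by
  have hHT := hH.commute_Tr
  obtain ⟨k, hk⟩ := hb.exists_transGen hH hN hb'_symm (neg_ne_zero.mpr hM.ne') hM'.ne' h h'
  obtain ⟨l, hl⟩ := hb'.exists_transGen hH hN hb_symm hM'.ne' (neg_ne_zero.mpr hM.ne') h' h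
  have hround (n : ℕ) : TransGen (D.Hits H) (b 0) (b' (k + n * M')) := by
    induction n with
    | zero => simpa using hk
    | succ n ih =>
      convert hb'.transGen_add hHT hb' ih h' using 2
      push_cast
      ring
  have hloop := hb'.transGen_add hHT hb (hround (k.natAbs + l.natAbs + 1)) hl
  have hpos : 0 < k + (k.natAbs + l.natAbs + 1 : ℕ) * M' + l := by
    push_cast
    nlinarith [neg_abs_le k, neg_abs_le l, abs_nonneg k, abs_nonneg l]
  have hzero : TransGen (D.Hits H) (b 0) (b 0) := zero_mem_of_neg_of_pos
    (S := {a | TransGen (D.Hits H) (b 0) (b a)}) (fun _ ha _ ha' ↦ hb.transGen_add hHT hb ha ha')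
    h hloop (neg_neg_of_pos hM) hpos
  exact not_transGen_self_of_isFree hH.injIsotopic hfix D.isCompact_brick
    (fun _ ↦ isOpen_interior) D.isPreconnected_interior (fun _ ↦ interior_subset)
    D.subset_closure_interior
    (fun _ _ hij ↦ (D.disjoint_interior hij).mono_right interior_subset) hfree _ hzero

end BrickDecomposition

end BrickDecomposition

section Grid

/-- The cell in column `a` and row `b` of the division of the strip `j ≤ y ≤ j + 1` into squares of
side `1 / n`. -/
def stripCell (n : ℕ) (j a : ℤ) (b : ℕ) : Set Plane :=
  Icc ((a : ℝ) / n) ((a + 1 : ℝ) / n) ×ˢ Icc ((j : ℝ) + b / n) ((j : ℝ) + (b + 1) / n)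

variable {n : ℕ} {j a : ℤ} {b : ℕ} {x y : Plane}

lemma isCompact_stripCell : IsCompact (stripCell n j a b) := isCompact_Icc.prod isCompact_Icc

lemma convex_stripCell : Convex ℝ (stripCell n j a b) := (convex_Icc _ _).prod (convex_Icc _ _)

lemma mem_stripCell (hn : 0 < n) : x ∈ stripCell n j a b ↔
    (a ≤ n * x.1 ∧ n * x.1 ≤ a + 1) ∧ (b ≤ n * (x.2 - j) ∧ n * (x.2 - j) ≤ b + 1) := by
  have hn' : (0 : ℝ) < n := mod_cast hn
  rw [stripCell, mem_prod, mem_Icc, mem_Icc, div_le_iff₀' hn', le_div_iff₀' hn',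
    ← le_sub_iff_add_le', ← sub_le_iff_le_add' (b := (j : ℝ)), div_le_iff₀' hn', le_div_iff₀' hn']

lemma mem_interior_stripCell (hn : 0 < n) : x ∈ interior (stripCell n j a b) ↔
    (a < n * x.1 ∧ n * x.1 < a + 1) ∧ (b < n * (x.2 - j) ∧ n * (x.2 - j) < b + 1) := by
  have hn' : (0 : ℝ) < n := mod_cast hn
  rw [stripCell, interior_prod_eq, interior_Icc, interior_Icc, mem_prod, mem_Ioo, mem_Ioo,
    div_lt_iff₀' hn', lt_div_iff₀' hn', ← lt_sub_iff_add_lt', ← sub_lt_iff_lt_add' (b := (j : ℝ)),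
    div_lt_iff₀' hn', lt_div_iff₀' hn']

lemma nonempty_interior_stripCell (hn : 0 < n) : (interior (stripCell n j a b)).Nonempty := by
  have hn' : (n : ℝ) ≠ 0 := by positivity
  refine ⟨((a + 1 / 2) / n, j + (b + 1 / 2) / n), (mem_interior_stripCell hn).mpr ?_⟩
  simp only [add_sub_cancel_left, mul_div_cancel₀ _ hn']
  norm_num

lemma stripCell_subset_closure_interior (hn : 0 < n) :
    stripCell n j a b ⊆ closure (interior (stripCell n j a b)) := by
  rw [convex_stripCell.closure_interior_eq_closure_of_nonempty_interior
    (nonempty_interior_stripCell hn)]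
  exact subset_closure

lemma snd_mem_Icc_of_mem_stripCell (hb : b < n) (hx : x ∈ stripCell n j a b) :
    x.2 ∈ Icc (j : ℝ) (j + 1) := by
  have hn : (0 : ℝ) < n := mod_cast hb.pos
  have hb' : (b : ℝ) + 1 ≤ n := mod_cast hb
  refine ⟨(le_add_of_nonneg_right (by positivity)).trans hx.2.1, hx.2.2.trans ?_⟩
  gcongr
  exact (div_le_one hn).mpr hb'

lemma snd_mem_Ioo_of_mem_interior_stripCell (hb : b < n) (hx : x ∈ interior (stripCell n j a b)) :
    x.2 ∈ Ioo (j : ℝ) (j + 1) := by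
  rw [mem_interior_stripCell hb.pos] at hx
  have hn : (0 : ℝ) < n := mod_cast hb.pos
  have hb' : (b : ℝ) + 1 ≤ n := mod_cast hb
  have hleft := pos_of_mul_pos_right (b.cast_nonneg.trans_lt hx.2.1) hn.le
  have hright := lt_of_mul_lt_mul_left ((hx.2.2.trans_le hb').trans_eq (mul_one _).symm) hn.le
  constructor <;> linarith

lemma dist_le_of_mem_stripCell (hn : 0 < n) (hx : x ∈ stripCell n j a b)
    (hy : y ∈ stripCell n j a b) : dist x y ≤ 1 / n := by
  have hn' : (n : ℝ) ≠ 0 := by positivity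
  refine max_le ((Real.dist_le_of_mem_Icc hx.1 hy.1).trans_eq ?_)
    ((Real.dist_le_of_mem_Icc hx.2 hy.2).trans_eq ?_) <;> field_simp <;> ring

lemma exists_mem_stripCell (hn : 0 < n) (x : Plane) :
    ∃ (a : ℤ) (b : ℕ), b < n ∧ x ∈ stripCell n ⌊x.2⌋ a b := by
  have hn' : (0 : ℝ) < n := mod_cast hn
  have hnonneg : 0 ≤ n * (x.2 - ⌊x.2⌋) := mul_nonneg hn'.le (Int.fract_nonneg x.2)
  refine ⟨⌊n * x.1⌋, ⌊n * (x.2 - ⌊x.2⌋)⌋₊, (Nat.floor_lt hnonneg).mpr ?_, (mem_stripCell hn).mpr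
    ⟨⟨Int.floor_le _, (Int.lt_floor_add_one _).le⟩, Nat.floor_le hnonneg,
      (Nat.lt_floor_add_one _).le⟩⟩
  exact mul_lt_of_lt_one_right hn' (Int.fract_lt_one x.2)

lemma Tr_mem_stripCell (hn : 0 < n) (k : ℤ) (hx : x ∈ stripCell n j a b) :
    Tr k x ∈ stripCell n j (a + k * n) b := by
  rw [mem_stripCell hn] at hx ⊢
  refine ⟨?_, hx.2⟩
  simp only [Tr, Int.cast_add, Int.cast_mul, Int.cast_natCast]
  constructor <;> linarith

lemma eq_of_mem_Ioo_of_mem_Icc {k l : ℤ} {t : ℝ} (hk : t ∈ Ioo (k : ℝ) (k + 1))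
    (hl : t ∈ Icc (l : ℝ) (l + 1)) : k = l := by
  have hkl : k < l + 1 := by exact_mod_cast hk.1.trans_le hl.2
  have hlk : l < k + 1 := by exact_mod_cast hl.1.trans_lt hk.2
  lia

variable {m : ℤ → ℕ}

lemma disjoint_interior_stripCell {c d : Σ j : ℤ, ℤ × Fin (m j)} (hcd : c ≠ d) :
    Disjoint (interior (stripCell (m c.1) c.1 c.2.1 c.2.2))
      (stripCell (m d.1) d.1 d.2.1 d.2.2) := by
  obtain ⟨j, a, b⟩ := c
  obtain ⟨j', a', b'⟩ := d
  refine disjoint_left.mpr fun x hx hx' ↦ hcd ?_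
  obtain rfl := eq_of_mem_Ioo_of_mem_Icc (snd_mem_Ioo_of_mem_interior_stripCell b.2 hx)
    (snd_mem_Icc_of_mem_stripCell b'.2 hx')
  rw [mem_interior_stripCell b.pos] at hx
  rw [mem_stripCell b.pos] at hx'
  obtain rfl := eq_of_mem_Ioo_of_mem_Icc hx.1 hx'.1
  have hb : ((b : ℕ) : ℤ) = (b' : ℕ) :=
    eq_of_mem_Ioo_of_mem_Icc (t := m j * (x.2 - j)) (mod_cast hx.2) (mod_cast hx'.2)
  obtain rfl := Fin.ext (Int.natCast_inj.mp hb)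
  rfl

lemma locallyFinite_stripCell :
    LocallyFinite fun c : Σ j : ℤ, ℤ × Fin (m j) ↦ stripCell (m c.1) c.1 c.2.1 c.2.2 := by
  refine fun x ↦ ⟨Icc (x.1 - 1) (x.1 + 1) ×ˢ Icc (x.2 - 1) (x.2 + 1),
    prod_mem_nhds (Icc_mem_nhds (by simp) (by simp)) (Icc_mem_nhds (by simp) (by simp)), ?_⟩
  have hfin : (⋃ j ∈ Icc ⌊x.2 - 2⌋ ⌈x.2 + 2⌉, Sigma.mk (β := fun j ↦ ℤ × Fin (m j)) j ''
      (Icc ⌊m j * (x.1 - 1) - 1⌋ ⌈m j * (x.1 + 1)⌉ ×ˢ univ)).Finite :=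
    (finite_Icc _ _).biUnion fun j _ ↦ ((finite_Icc _ _).prod finite_univ).image _
  refine hfin.subset ?_
  rintro ⟨j, a, b⟩ ⟨y, hy, hyx⟩
  obtain ⟨hj₁, hj₂⟩ := snd_mem_Icc_of_mem_stripCell b.2 hy
  rw [mem_stripCell b.pos] at hy
  have hm : (0 : ℝ) ≤ m j := Nat.cast_nonneg _
  have hleft : m j * (x.1 - 1) ≤ m j * y.1 := mul_le_mul_of_nonneg_left hyx.1.1 hm
  have hright : m j * y.1 ≤ m j * (x.1 + 1) := mul_le_mul_of_nonneg_left hyx.1.2 hm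
  refine mem_biUnion (x := j) ⟨?_, ?_⟩ ⟨(a, b), ⟨⟨?_, ?_⟩, mem_univ _⟩, rfl⟩
  · exact_mod_cast (Int.floor_le _).trans (show x.2 - 2 ≤ j by linarith [hyx.2.1])
  · exact_mod_cast (show (j : ℝ) ≤ x.2 + 2 by linarith [hyx.2.2]).trans (Int.le_ceil _)
  · exact_mod_cast (Int.floor_le _).trans (show m j * (x.1 - 1) - 1 ≤ a by linarith [hy.1.2])
  · exact_mod_cast (hy.1.1.trans hright).trans (Int.le_ceil _)

/-- The division of each strip `j ≤ y ≤ j + 1` into squares of side `1 / m j`. -/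
def stripDecomposition (hm : ∀ j, 0 < m j) :
    BrickDecomposition 1 (Σ j : ℤ, ℤ × Fin (m j)) where
  brick c := stripCell (m c.1) c.1 c.2.1 c.2.2
  isCompact_brick _ := isCompact_stripCell
  isPreconnected_interior _ := convex_stripCell.interior.isPreconnected
  subset_closure_interior _ := stripCell_subset_closure_interior (hm _)
  disjoint_interior := disjoint_interior_stripCell
  exists_mem_brick x := by
    obtain ⟨a, b, hb, hx⟩ := exists_mem_stripCell (hm ⌊x.2⌋) x
    exact ⟨⟨_, a, b, hb⟩, hx⟩
  locallyFinite := locallyFinite_stripCell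
  shift k c := ⟨c.1, c.2.1 + k * m c.1, c.2.2⟩
  shift_zero _ := by simp
  shift_add k l _ := by simp [add_mul, add_comm, add_left_comm]
  mapsTo_Tr k c x hx := by
    rw [mul_one]
    exact Tr_mem_stripCell (hm _) k hx

lemma exists_pos_forall_lt_dist {G : Plane → Plane} (hG : Continuous G)
    (hGT : ∀ k, Function.Commute G (Tr k)) (hfix : ∀ x, G x ≠ x) (c d : ℝ) :
    ∃ ε > 0, ∀ x : Plane, x.2 ∈ Icc c d → ε ≤ dist x (G x) := by
  obtain ⟨ε, hε, h⟩ := (isCompact_Icc.prod isCompact_Icc).exists_forall_le'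
    (s := Icc (0 : ℝ) 1 ×ˢ Icc c d) (f := fun x : Plane ↦ dist x (G x)) (by fun_prop)
    (fun x _ ↦ dist_pos.mpr (hfix x).symm)
  refine ⟨ε, hε, fun x hx ↦ ?_⟩
  have hmem : Tr (-⌊x.1⌋) x ∈ Icc (0 : ℝ) 1 ×ˢ Icc c d := by
    refine ⟨⟨?_, ?_⟩, hx⟩ <;>
      simp only [Tr] <;> push_cast <;> linarith [Int.floor_le x.1, Int.lt_floor_add_one x.1]
  simpa only [(hGT _).eq, dist_Tr] using h _ hmem

lemma exists_brickDecomposition {G : Plane → Plane} (hG : Continuous G)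
    (hGT : ∀ k, Function.Commute G (Tr k)) (hfix : ∀ x, G x ≠ x) {μ : ℝ} (hμ : 0 < μ) :
    ∃ (κ : Type) (D : BrickDecomposition 1 κ), (∀ c, IsFree G (D.brick c)) ∧
      ∀ c, ∀ x ∈ D.brick c, ∀ y ∈ D.brick c, dist x y < μ := by
  choose ε hε hεG using fun j : ℤ ↦ exists_pos_forall_lt_dist hG hGT hfix (j : ℝ) (j + 1)
  choose m hm using fun j ↦ exists_nat_one_div_lt (lt_min hμ (hε j))
  have hdist {j a : ℤ} {b : ℕ} {x y : Plane} (hx : x ∈ stripCell (m j + 1) j a b)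
      (hy : y ∈ stripCell (m j + 1) j a b) : dist x y < min μ (ε j) :=
    (dist_le_of_mem_stripCell (m j).succ_pos hx hy).trans_lt (mod_cast hm j)
  refine ⟨_, stripDecomposition fun j ↦ (m j).succ_pos, fun c x hx hGx ↦ ?_, fun c x hx y hy ↦
    (lt_min_iff.mp (hdist hx hy)).1⟩
  exact ((lt_min_iff.mp (hdist hx hGx)).2.trans_le
    (hεG c.1 x (snd_mem_Icc_of_mem_stripCell c.2.2.2 hx))).false

end Grid

section Star

variable {N : ℤ} {ι : Type*} (D : BrickDecomposition N ι)

namespace BrickDecomposition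

/-- The indices of the bricks meeting `X`. -/
def meeting (X : Set Plane) : Set ι := {i | (D.brick i ∩ X).Nonempty}

/-- The union of the bricks with index in `S`. -/
def patch (S : Set ι) : Set Plane := ⋃ i ∈ S, D.brick i

/-- The union of the bricks meeting `X`. -/
def star (X : Set Plane) : Set Plane := D.patch (D.meeting X)

/-- Points of the same brick are less than `μ` apart. -/
def IsFine (μ : ℝ) : Prop := ∀ i, ∀ x ∈ D.brick i, ∀ y ∈ D.brick i, dist x y < μ

variable {D} {S S' : Set ι} {X : Set Plane} {i : ι} {x : Plane}

lemma mem_patch : x ∈ D.patch S ↔ ∃ i ∈ S, x ∈ D.brick i := mem_iUnion₂.trans (by simp)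

lemma brick_subset_patch (hi : i ∈ S) : D.brick i ⊆ D.patch S :=
  subset_biUnion_of_mem (u := D.brick) hi

lemma isClosed_patch : IsClosed (D.patch S) :=
  isClosed_biUnion_of_locallyFinite D.locallyFinite isClosed_brick S

lemma isCompact_patch (hS : S.Finite) : IsCompact (D.patch S) :=
  hS.isCompact_biUnion fun i _ ↦ D.isCompact_brick i

lemma patch_subset_closure_interior : D.patch S ⊆ closure (interior (D.patch S)) :=
  iUnion₂_subset fun i hi ↦ (D.subset_closure_interior i).trans
    (closure_mono (interior_mono (brick_subset_patch hi)))

lemma disjoint_interior_patch (hSS' : Disjoint S S') :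
    Disjoint (interior (D.patch S)) (D.patch S') := by
  refine disjoint_left.mpr fun x hx hx' ↦ ?_
  obtain ⟨j, hj, hxj⟩ := mem_patch.mp hx'
  obtain ⟨y, hy, hyj⟩ := mem_closure_iff.mp (D.subset_closure_interior j hxj) _ isOpen_interior hx
  obtain ⟨i, hi, hyi⟩ := mem_patch.mp (interior_subset hy)
  have hji : j ≠ i := fun hji ↦ disjoint_left.mp hSS' hi (hji ▸ hj)
  exact disjoint_left.mp (D.disjoint_interior hji) hyj hyi

lemma disjoint_of_disjoint_patch (hS : ∀ i ∈ S, (D.brick i).Nonempty)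
    (h : Disjoint (D.patch S) (D.patch S')) : Disjoint S S' :=
  disjoint_left.mpr fun i hi hi' ↦ (hS i hi).ne_empty <|
    disjoint_self.mp (h.mono (brick_subset_patch hi) (brick_subset_patch hi'))

lemma subset_interior_star : X ⊆ interior (D.star X) := fun x hx ↦
  mem_interior_biUnion_of_locallyFinite D.locallyFinite isClosed_brick D.exists_mem_brick
    fun _ hi ↦ ⟨x, hi, hx⟩

lemma subset_star : X ⊆ D.star X := subset_interior_star.trans interior_subset

lemma finite_meeting (hX : Bornology.IsBounded X) : (D.meeting X).Finite :=
  (D.locallyFinite.finite_nonempty_inter_compact hX.isCompact_closure).subset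
    fun _ hi ↦ hi.mono (inter_subset_inter_right _ subset_closure)

lemma isPreconnected_interior_star (hX : IsPreconnected X) :
    IsPreconnected (interior (D.star X)) := by
  set W : Set Plane :=
    ⋃ i : D.meeting X, (X ∪ (interior (D.brick i) ∪ D.brick i ∩ X))
  have hW : IsPreconnected W := by
    rcases X.eq_empty_or_nonempty with rfl | ⟨x, hx⟩
    · rw [show W = ∅ from iUnion_eq_empty.mpr fun i ↦ absurd i.2 (by simp [meeting])]
      exact isPreconnected_empty
    refine isPreconnected_iUnion ⟨x, mem_iInter.mpr fun i ↦ .inl hx⟩ fun i ↦ ?_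
    refine hX.union' (i.2.mono fun y hy ↦ ⟨hy.2, .inr hy⟩) ?_
    exact (D.isPreconnected_interior i).subset_closure subset_union_left
      (union_subset subset_closure (inter_subset_left.trans (D.subset_closure_interior i)))
  refine hW.subset_closure (iUnion_subset fun i ↦ ?_) fun x hx ↦ ?_
  · exact union_subset subset_interior_star (union_subset
      (interior_mono (brick_subset_patch i.2)) (inter_subset_right.trans subset_interior_star))
  · obtain ⟨i, hi, hxi⟩ := mem_patch.mp (interior_subset hx)
    refine closure_mono ?_ (D.subset_closure_interior i hxi)
    exact (subset_union_left.trans subset_union_right).trans (subset_iUnion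
      (fun i : D.meeting X ↦ X ∪ (interior (D.brick i) ∪ D.brick i ∩ X)) ⟨i, hi⟩)

lemma disjoint_meeting_of_disjoint_star {Y : Set Plane} (h : Disjoint Y (D.star X)) :
    Disjoint (D.meeting X) (D.meeting Y) :=
  disjoint_left.mpr fun _ hiX ⟨_, hyi, hyY⟩ ↦ disjoint_left.mp h hyY (brick_subset_patch hiX hyi)

lemma IsFine.star_subset_thickening {μ : ℝ} (hD : D.IsFine μ) :
    D.star X ⊆ Metric.thickening μ X := by
  intro x hx
  obtain ⟨i, ⟨y, hyi, hyX⟩, hxi⟩ := mem_patch.mp hx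
  exact Metric.mem_thickening_iff.mpr ⟨y, hyX, hD i x hxi y hyi⟩

lemma IsFine.star_subset_ball {δ : ℝ} (hD : D.IsFine δ) (hX : X ⊆ Metric.ball x δ) :
    D.star X ⊆ Metric.ball x (δ + δ) :=
  hD.star_subset_thickening.trans
    ((Metric.thickening_subset_of_subset δ hX).trans (Metric.thickening_ball x δ δ))

lemma brick_shift (k : ℤ) (i : ι) : D.brick (D.shift k i) = Tr (k * N) '' D.brick i := by
  refine subset_antisymm (fun x hx ↦ ⟨Tr (-k * N) x, ?_, ?_⟩) (D.mapsTo_Tr k i).image_subset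
  · simpa only [← D.shift_add, neg_add_cancel, D.shift_zero] using D.mapsTo_Tr (-k) _ hx
  · rw [Tr_Tr, ← add_mul, add_neg_cancel, zero_mul, Tr_zero]

lemma injective_shift (k : ℤ) : Function.Injective (D.shift k) :=
  Function.LeftInverse.injective (g := D.shift (-k)) fun i ↦ by
    rw [← D.shift_add, neg_add_cancel, D.shift_zero]

lemma meeting_image_Tr (k : ℤ) : D.meeting (Tr (k * N) '' X) = D.shift k '' D.meeting X := by
  ext i
  obtain ⟨i, rfl⟩ : ∃ i', D.shift k i' = i :=
    ⟨D.shift (-k) i, by rw [← D.shift_add, add_neg_cancel, D.shift_zero]⟩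
  rw [(injective_shift k).mem_set_image, meeting, mem_ofPred_eq, brick_shift, ← coe_deckHomeomorph,
    ← image_inter (deckHomeomorph _).injective, image_nonempty]
  rfl

lemma patch_image_shift (k : ℤ) : D.patch (D.shift k '' S) = Tr (k * N) '' D.patch S := by
  simp only [patch, biUnion_image, brick_shift, image_iUnion]

lemma star_image_Tr (k : ℤ) : D.star (Tr (k * N) '' X) = Tr (k * N) '' D.star X := by
  rw [BrickDecomposition.star, meeting_image_Tr, patch_image_shift, BrickDecomposition.star]

end BrickDecomposition

end Star

section Site

variable {E : Type*} [NormedAddCommGroup E] [NormedSpace ℝ E]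

lemma exists_isPreconnected_subset_segment {A : Set E} (hA : IsClosed A) {x y : E} (hx : x ∈ A)
    (hy : y ∉ A) : ∃ X ⊆ segment ℝ x y, IsPreconnected X ∧ y ∈ X ∧ Disjoint X A ∧
      (A ∩ closure X).Nonempty := by
  set σ := (AffineMap.lineMap x y : ℝ →ᵃ[ℝ] E)
  have hσ : Continuous σ := AffineMap.lineMap_continuous
  have hσ₀ : σ 0 = x := AffineMap.lineMap_apply_zero x y
  have hσ₁ : σ 1 = y := AffineMap.lineMap_apply_one x y
  obtain ⟨t, ⟨ht, htA⟩, hmax⟩ := (isCompact_Icc.inter_right (hA.preimage hσ)).exists_isGreatest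
    (⟨0, left_mem_Icc.mpr zero_le_one, by rwa [mem_preimage, hσ₀]⟩ :
      (Icc (0 : ℝ) 1 ∩ σ ⁻¹' A).Nonempty)
  have ht₁ : t < 1 := ht.2.lt_of_ne fun ht₁ ↦ hy (by rwa [← hσ₁, ← ht₁])
  refine ⟨σ '' Ioc t 1, ?_, isPreconnected_Ioc.image _ hσ.continuousOn, ⟨1, ⟨ht₁, le_rfl⟩, hσ₁⟩,
    ?_, σ t, htA, ?_⟩
  · rw [segment_eq_image_lineMap]
    exact image_mono fun s hs ↦ ⟨ht.1.trans hs.1.le, hs.2⟩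
  · rw [disjoint_left]
    rintro _ ⟨s, hs, rfl⟩ hsA
    exact (hmax ⟨⟨ht.1.trans hs.1.le, hs.2⟩, hsA⟩).not_gt hs.1
  · refine image_closure_subset_closure_image hσ (mem_image_of_mem σ ?_)
    rw [closure_Ioc ht₁.ne]
    exact left_mem_Icc.mpr ht₁.le

lemma lineMap_mem_ball {z w : E} {r η : ℝ} (hw : w ∈ Metric.sphere z r) (hr : 0 < r)
    (hη : η ∈ Ioo 0 1) : AffineMap.lineMap w z η ∈ Metric.ball z r := by
  rw [Metric.mem_ball, dist_lineMap_right, Metric.mem_sphere.mp hw, Real.norm_eq_abs,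
    abs_of_pos (sub_pos.mpr hη.2)]
  exact mul_lt_of_lt_one_left hr (by linarith [hη.1])

variable {G : Plane ≃ₜ Plane}

-- In the critical ball about `z`, with boundary points `v` and `G v`, draw the segments from `z`
-- almost to `v` and almost to `G v`. The image of one end lies close to the other one.
lemma exists_isFree_isPreconnected (hfix : ∀ x, G x ≠ x) (z : Plane) :
    ∃ B, IsCompact B ∧ IsPreconnected B ∧ z ∈ B ∧ IsFree G B ∧ ∃ x ∈ B, ∃ y ∈ B, ∃ v w, ∃ δ > 0,
      Disjoint (Metric.ball v (δ + δ)) (Metric.ball w (δ + δ)) ∧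
      IsFree G (Metric.ball v (δ + δ)) ∧ IsFree G (Metric.ball w (δ + δ)) ∧
      y ∈ Metric.ball v δ ∧ G.symm x ∈ Metric.ball v δ ∧
      x ∈ Metric.ball w δ ∧ G y ∈ Metric.ball w δ := by
  obtain ⟨r, hr, hfree, v, hv, hw⟩ := exists_critical_ball (hfix z)
  have hdist : 0 < dist v (G v) := dist_pos.mpr (hfix v).symm
  have hfree_ball (u : Plane) : ∀ᶠ ε in 𝓝[>] (0 : ℝ), IsFree G (Metric.ball u ε) := by
    have hu : IsFree G {u} := by simpa [IsFree] using hfix u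
    simpa only [Metric.thickening_singleton] using
      hu.eventually_thickening G.continuous isCompact_singleton
  have hε_lt : ∀ᶠ ε in 𝓝[>] (0 : ℝ), ε ∈ Ioo 0 (dist v (G v) / 2) :=
    Ioo_mem_nhdsGT (half_pos hdist)
  obtain ⟨ε, ⟨hfree_v, hfree_w⟩, hε, hεd⟩ :=
    ((hfree_ball v).and (hfree_ball (G v))).and hε_lt |>.exists
  have hlim (u : Plane) : Tendsto (AffineMap.lineMap u z) (𝓝[>] (0 : ℝ)) (𝓝 u) := by
    have h := (AffineMap.lineMap_continuous (p := u) (q := z)).tendsto (0 : ℝ)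
    rw [AffineMap.lineMap_apply_zero] at h
    exact h.mono_left nhdsWithin_le_nhds
  have hlim_x := (G.symm.continuous.tendsto (G v)).comp (hlim (G v))
  rw [G.symm_apply_apply] at hlim_x
  have hlim_y := (G.continuous.tendsto v).comp (hlim v)
  have hball (u : Plane) : ∀ᶠ u' in 𝓝 u, u' ∈ Metric.ball u (ε / 2) :=
    Metric.ball_mem_nhds u (half_pos hε)
  have hη_lt : ∀ᶠ η in 𝓝[>] (0 : ℝ), η ∈ Ioo 0 1 := Ioo_mem_nhdsGT one_pos
  obtain ⟨η, hη, hy, hx', hx, hy'⟩ := (hη_lt.and (((hlim v).eventually (hball v)).and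
    ((hlim_x.eventually (hball v)).and (((hlim (G v)).eventually (hball (G v))).and
      (hlim_y.eventually (hball (G v))))))).exists
  set x := AffineMap.lineMap (G v) z η
  set y := AffineMap.lineMap v z η
  have hsegment {u : Plane} (hu : u ∈ Metric.ball z r) : segment ℝ u z ⊆ Metric.ball z r :=
    (convex_ball z r).segment_subset hu (Metric.mem_ball_self hr)
  refine ⟨segment ℝ x z ∪ segment ℝ y z, (isCompact_segment x z).union (isCompact_segment y z),
    (convex_segment x z).isPreconnected.union z (right_mem_segment ℝ x z) (right_mem_segment ℝ y z)
      (convex_segment y z).isPreconnected, .inl (right_mem_segment ℝ x z),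
    hfree.mono (union_subset (hsegment (lineMap_mem_ball hw hr hη))
      (hsegment (lineMap_mem_ball hv hr hη))),
    x, .inl (left_mem_segment ℝ x z), y, .inr (left_mem_segment ℝ y z), v, G v, ε / 2,
    half_pos hε, ?_⟩
  rw [add_halves]
  exact ⟨Metric.ball_disjoint_ball (by linarith), hfree_v, hfree_w, hy, hx', hx, hy'⟩

lemma IsFree.image_Tr {G : Plane → Plane} (hGT : ∀ k, Function.Commute G (Tr k)) {C : Set Plane}
    (hC : IsFree G C) (k : ℤ) : IsFree G (Tr k '' C) := by
  rintro _ ⟨x, hx, rfl⟩ hGx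
  rw [hGT, ← coe_deckHomeomorph, (deckHomeomorph k).injective.mem_set_image] at hGx
  exact hC x hx hGx

namespace BrickDecomposition

variable {N : ℤ} {ι : Type*} {D : BrickDecomposition N ι}

lemma exists_isPreconnected_disjoint_meeting {B : Set Plane} {x y w : Plane} {δ : ℝ}
    (hx : x ∈ D.star B) (hxw : x ∈ Metric.ball w δ) (hy : y ∉ D.star B)
    (hyw : y ∈ Metric.ball w δ) : ∃ X ⊆ Metric.ball w δ, IsPreconnected X ∧ y ∈ X ∧
      Disjoint (D.meeting B) (D.meeting X) ∧ (D.star B ∩ D.star X).Nonempty := by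
  obtain ⟨X, hXs, hX, hyX, hXB, hclosure⟩ :=
    exists_isPreconnected_subset_segment isClosed_patch hx hy
  exact ⟨X, hXs.trans ((convex_ball w δ).segment_subset hxw hyw), hX, hyX,
    disjoint_meeting_of_disjoint_star hXB,
    hclosure.mono (inter_subset_inter_right _ (closure_minimal subset_star isClosed_patch))⟩

/-- Three connected sets which do not meet the same bricks, the first of which contains `z`. The
stars are free, and that of `X 0` touches those of `X 1` and `X 2`, while its image under `G` meets
that of `X 1` and its preimage meets that of `X 2`. Merging the bricks of each of the three stars
then yields anchors for `G` and for `G.symm`. -/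
structure IsSite (D : BrickDecomposition N ι) (G : Plane ≃ₜ Plane) (z : Plane)
    (X : Fin 3 → Set Plane) : Prop where
  mem : z ∈ X 0
  isPreconnected (j : Fin 3) : IsPreconnected (X j)
  isFree (j : Fin 3) : IsFree G (D.star (X j))
  disjoint {j j' : Fin 3} (hj : j ≠ j') : Disjoint (D.meeting (X j)) (D.meeting (X j'))
  inter_nonempty (j : Fin 3) : (D.star (X 0) ∩ D.star (X j)).Nonempty
  exists_apply_mem : ∃ x ∈ D.star (X 0), G x ∈ D.star (X 1)
  exists_symm_apply_mem : ∃ x ∈ D.star (X 0), G.symm x ∈ D.star (X 2)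

lemma IsSite.image_Tr (hGT : ∀ k, Function.Commute G (Tr k)) {z : Plane} {X : Fin 3 → Set Plane}
    (hX : D.IsSite G z X) (k : ℤ) : D.IsSite G (Tr (k * N) z) fun j ↦ Tr (k * N) '' X j where
  mem := mem_image_of_mem _ hX.mem
  isPreconnected j := (hX.isPreconnected j).image _ (continuous_Tr _).continuousOn
  isFree j := by
    rw [star_image_Tr]
    exact (hX.isFree j).image_Tr hGT _
  disjoint hj := by
    rw [meeting_image_Tr, meeting_image_Tr, disjoint_image_iff (injective_shift k)]
    exact hX.disjoint hj
  inter_nonempty j := by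
    rw [star_image_Tr, star_image_Tr, ← coe_deckHomeomorph,
      ← image_inter (deckHomeomorph _).injective]
    exact (hX.inter_nonempty j).image _
  exists_apply_mem := by
    obtain ⟨x, hx, hGx⟩ := hX.exists_apply_mem
    rw [star_image_Tr, star_image_Tr]
    exact ⟨_, mem_image_of_mem _ hx, hGT _ x ▸ mem_image_of_mem _ hGx⟩
  exists_symm_apply_mem := by
    obtain ⟨x, hx, hGx⟩ := hX.exists_symm_apply_mem
    rw [star_image_Tr, star_image_Tr]
    exact ⟨_, mem_image_of_mem _ hx, commute_symm_Tr hGT _ x ▸ mem_image_of_mem _ hGx⟩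

end BrickDecomposition

open BrickDecomposition in
lemma exists_isSite (hfix : ∀ x, G x ≠ x) (z : Plane) :
    ∃ μ > 0, ∃ C, Bornology.IsBounded C ∧ ∀ {N : ℤ} {ι : Type} {D : BrickDecomposition N ι},
      D.IsFine μ → ∃ X, D.IsSite G z X ∧ ∀ j, X j ⊆ C := by
  obtain ⟨B, hBc, hB, hzB, hBfree, x, hx, y, hy, v, w, δ, hδ, hvw, hvfree, hwfree, hyv, hxv, hxw,
    hyw⟩ := exists_isFree_isPreconnected hfix z
  have hμ_lt : ∀ᶠ μ in 𝓝[>] (0 : ℝ), μ ∈ Ioo 0 δ := Ioo_mem_nhdsGT hδ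
  obtain ⟨μ, hμfree, hμ, hμδ⟩ := ((hBfree.eventually_thickening G.continuous hBc).and hμ_lt).exists
  refine ⟨μ, hμ, B ∪ (Metric.ball w δ ∪ Metric.ball v δ),
    hBc.isBounded.union (Metric.isBounded_ball.union Metric.isBounded_ball), fun {N ι D} hD ↦ ?_⟩
  have hstar : IsFree G (D.star B) := hμfree.mono hD.star_subset_thickening
  have hDδ : D.IsFine δ := fun i x hx y hy ↦ (hD i x hx y hy).trans hμδ
  have hGy : G y ∉ D.star B := hstar y (subset_star hy)
  have hGx : G.symm x ∉ D.star B := fun h ↦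
    hstar _ h (by rw [G.apply_symm_apply]; exact subset_star hx)
  obtain ⟨X, hXw, hX, hyX, hBX, hBX'⟩ :=
    exists_isPreconnected_disjoint_meeting (subset_star hx) hxw hGy hyw
  obtain ⟨Y, hYv, hY, hxY, hBY, hBY'⟩ :=
    exists_isPreconnected_disjoint_meeting (subset_star hy) hyv hGx hxv
  have hX' := hDδ.star_subset_ball hXw
  have hY' := hDδ.star_subset_ball hYv
  have hXY : Disjoint (D.meeting X) (D.meeting Y) :=
    disjoint_meeting_of_disjoint_star (hvw.mono (subset_star.trans hY') hX')
  refine ⟨![B, X, Y], ⟨hzB, ?_, ?_, fun {j j'} hj ↦ ?_, ?_, ⟨y, subset_star hy, subset_star hyX⟩,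
    ⟨x, subset_star hx, subset_star hxY⟩⟩, ?_⟩
  · simp [Fin.forall_fin_succ, hB, hX, hY]
  · simp [Fin.forall_fin_succ, hstar, hwfree.mono hX', hvfree.mono hY']
  · fin_cases j <;> fin_cases j' <;>
      first | exact absurd rfl hj | assumption | (apply Disjoint.symm; assumption)
  · simpa [Fin.forall_fin_succ] using ⟨⟨z, subset_star hzB⟩, hBX', hBY'⟩
  · simpa [Fin.forall_fin_succ] using ⟨hXw.trans (subset_union_left.trans subset_union_right),
      hYv.trans (subset_union_right.trans subset_union_right)⟩

end Site

section Merge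

open Function

namespace BrickDecomposition

variable {N : ℤ} {κ ι α : Type*}

/-- The brick decomposition obtained by merging the bricks with index in `P i`, for each class `P i`
of a partition of the indices. -/
def coarsen (D : BrickDecomposition 1 κ) (P : ι → Set κ) (hP : Pairwise (Disjoint on P))
    (hcover : ∀ c, ∃ i, c ∈ P i) (hfin : ∀ i, (P i).Finite)
    (hconn : ∀ i, IsPreconnected (interior (D.patch (P i)))) (shift : ℤ → ι → ι)
    (shift_zero : ∀ i, shift 0 i = i) (shift_add : ∀ k l i, shift (k + l) i = shift k (shift l i))
    (hshift : ∀ k i, MapsTo (D.shift (k * N)) (P i) (P (shift k i))) : BrickDecomposition N ι where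
  brick i := D.patch (P i)
  isCompact_brick i := isCompact_patch (hfin i)
  isPreconnected_interior := hconn
  subset_closure_interior _ := patch_subset_closure_interior
  disjoint_interior hij := disjoint_interior_patch (hP hij)
  exists_mem_brick x := by
    obtain ⟨c, hc⟩ := D.exists_mem_brick x
    obtain ⟨i, hi⟩ := hcover c
    exact ⟨i, brick_subset_patch hi hc⟩
  locallyFinite x := by
    obtain ⟨U, hU, hUfin⟩ := D.locallyFinite x
    refine ⟨U, hU, (hUfin.biUnion (t := fun c ↦ {i | c ∈ P i}) fun c _ ↦ ?_).subset ?_⟩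
    · exact Subsingleton.finite fun i hi j hj ↦ hP.eq (not_disjoint_iff.mpr ⟨c, hi, hj⟩)
    · rintro i ⟨y, hy, hyU⟩
      obtain ⟨c, hc, hyc⟩ := mem_patch.mp hy
      exact mem_biUnion (show c ∈ {c | (D.brick c ∩ U).Nonempty} from ⟨y, hyc, hyU⟩) hc
  shift := shift
  shift_zero := shift_zero
  shift_add := shift_add
  mapsTo_Tr k i x hx := by
    obtain ⟨c, hc, hxc⟩ := mem_patch.mp hx
    have hTx := D.mapsTo_Tr (k * N) c hxc
    rw [mul_one] at hTx
    exact brick_subset_patch (hshift k i hc) hTx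

/-- The brick decomposition obtained by merging the bricks with index in `S a`, for each set `S a`
of a disjoint family. The index `inr c` stands for the brick `c` if it has not been merged, and for
the empty brick otherwise. -/
def merge (D : BrickDecomposition 1 κ) (S : α → Set κ) (hS : Pairwise (Disjoint on S))
    (hfin : ∀ a, (S a).Finite) (hconn : ∀ a, IsPreconnected (interior (D.patch (S a))))
    (shift : ℤ → α → α) (shift_zero : ∀ a, shift 0 a = a)
    (shift_add : ∀ k l a, shift (k + l) a = shift k (shift l a))
    (hshift : ∀ k a, MapsTo (D.shift (k * N)) (S a) (S (shift k a))) :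
    BrickDecomposition N (α ⊕ κ) :=
  D.coarsen (Sum.elim S fun c ↦ {c} \ ⋃ a, S a)
    (by
      rintro (a | c) (a' | c') h <;> simp only [onFun, Sum.elim_inl, Sum.elim_inr]
      · exact hS fun haa' ↦ h (congrArg Sum.inl haa')
      · exact disjoint_sdiff_right.mono_left (subset_iUnion S a)
      · exact disjoint_sdiff_left.mono_right (subset_iUnion S a')
      · exact (disjoint_singleton.mpr fun hcc' ↦ h (congrArg Sum.inr hcc')).mono
          sdiff_subset sdiff_subset)
    (fun c ↦ by
      by_cases hc : c ∈ ⋃ a, S a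
      · exact (mem_iUnion.mp hc).imp' Sum.inl fun _ ↦ id
      · exact ⟨.inr c, rfl, hc⟩)
    (Sum.rec hfin fun c ↦ (finite_singleton c).subset sdiff_subset)
    (Sum.rec hconn fun c ↦ by
      rcases subset_singleton_iff_eq.mp (sdiff_subset : {c} \ ⋃ a, S a ⊆ {c}) with h | h
      · simp [h, patch, isPreconnected_empty]
      · simpa [h, patch] using D.isPreconnected_interior c)
    (fun k ↦ Sum.map (shift k) (D.shift (k * N)))
    (Sum.rec (fun a ↦ congrArg Sum.inl (shift_zero a)) fun c ↦ by simp [D.shift_zero])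
    (fun k l ↦ Sum.rec (fun a ↦ congrArg Sum.inl (shift_add k l a)) fun c ↦ by
      simp [add_mul, D.shift_add])
    (fun k ↦ Sum.rec (hshift k) fun c ↦ by
      rintro _ ⟨rfl, hc⟩
      refine ⟨rfl, fun hkc ↦ hc ?_⟩
      obtain ⟨a, ha⟩ := mem_iUnion.mp hkc
      have := hshift (-k) a ha
      rw [← D.shift_add, ← add_mul, neg_add_cancel, zero_mul, D.shift_zero] at this
      exact mem_iUnion.mpr ⟨_, this⟩)

end BrickDecomposition

open BrickDecomposition

variable {N : ℤ} {κ β : Type} {D : BrickDecomposition 1 κ} {G : Plane ≃ₜ Plane} {z : β → Plane}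
  {X : β → Fin 3 → Set Plane}

lemma patch_shift_meeting (k : ℤ) {Y : Set Plane} :
    D.patch (D.shift (k * N) '' D.meeting Y) = Tr (k * N) '' D.star Y := by
  rw [patch_image_shift, mul_one, BrickDecomposition.star]

lemma pairwise_disjoint_shift_meeting (hX : ∀ e, D.IsSite G (z e) (X e))
    (hsep : ∀ e e' k k', (e, k) ≠ (e', k') → ∀ j j',
      Disjoint (Tr (k * N) '' D.star (X e j)) (Tr (k' * N) '' D.star (X e' j'))) :
    Pairwise (Disjoint on fun a : β × ℤ × Fin 3 ↦
      D.shift (a.2.1 * N) '' D.meeting (X a.1 a.2.2)) := by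
  rintro ⟨e, k, j⟩ ⟨e', k', j'⟩ h
  by_cases hek : (e, k) = (e', k')
  · obtain ⟨rfl, rfl⟩ := Prod.ext_iff.mp hek
    exact (disjoint_image_iff (injective_shift _)).mpr
      ((hX e).disjoint fun hj : j = j' ↦ h (by rw [hj]))
  · refine disjoint_of_disjoint_patch (D := D) ?_ ?_
    · rintro _ ⟨c, hc, rfl⟩
      exact brick_shift (D := D) _ c ▸ (hc.mono inter_subset_left).image _
    · rw [patch_shift_meeting, patch_shift_meeting]
      exact hsep e e' k k' hek j j'

lemma exists_brickDecomposition_isAnchor_of_isSite (hGT : ∀ k, Function.Commute G (Tr k))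
    (hfree : ∀ c, IsFree G (D.brick c)) (hX : ∀ e, D.IsSite G (z e) (X e))
    (hbdd : ∀ e j, Bornology.IsBounded (X e j))
    (hsep : ∀ e e' k k', (e, k) ≠ (e', k') → ∀ j j',
      Disjoint (Tr (k * N) '' D.star (X e j)) (Tr (k' * N) '' D.star (X e' j'))) :
    ∃ (ι : Type) (D' : BrickDecomposition N ι) (b : β → ℤ → ι), (∀ i, IsFree G (D'.brick i)) ∧
      ∀ e, D'.IsAnchor G (b e) ∧ D'.IsAnchor G.symm (b e) ∧ z e ∈ interior (D'.brick (b e 0)) := by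
  set S : β × ℤ × Fin 3 → Set κ := fun (e, k, j) ↦ D.shift (k * N) '' D.meeting (X e j)
  have hpatch (e k j) : D.patch (S (e, k, j)) = Tr (k * N) '' D.star (X e j) :=
    patch_shift_meeting k
  have hS : Pairwise (Disjoint on S) := pairwise_disjoint_shift_meeting hX hsep
  have hconn : ∀ a, IsPreconnected (interior (D.patch (S a))) := fun (e, k, j) ↦ by
    rw [hpatch, ← coe_deckHomeomorph, ← Homeomorph.image_interior]
    exact (isPreconnected_interior_star ((hX e).isPreconnected j)).image _
      (Homeomorph.continuous _).continuousOn
  have hshift (k : ℤ) : ∀ a, MapsTo (D.shift (k * N)) (S a) (S (a.1, k + a.2.1, a.2.2)) := by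
    rintro ⟨e, l, j⟩ _ ⟨c, hc, rfl⟩
    exact ⟨c, hc, by rw [add_mul, D.shift_add]⟩
  set D' : BrickDecomposition N (β × ℤ × Fin 3 ⊕ κ) := D.merge S hS
    (fun a ↦ (finite_meeting (hbdd a.1 a.2.2)).image _) hconn (fun k a ↦ (a.1, k + a.2.1, a.2.2))
    (by simp) (by simp [add_assoc]) hshift
  have hbrick (e j) : D'.brick (.inl (e, 0, j)) = D.star (X e j) := by
    change D.patch (S (e, 0, j)) = _
    rw [hpatch, zero_mul, funext Tr_zero, image_id']
  refine ⟨_, D', fun e k ↦ .inl (e, k, 0), ?_, fun e ↦ ⟨⟨fun k l ↦ ?_, .inl (e, 0, 1), ?_, ?_⟩,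
    ⟨fun k l ↦ ?_, .inl (e, 0, 2), ?_, ?_⟩, ?_⟩⟩
  · rintro (⟨e, k, j⟩ | c)
    · change IsFree G (D.patch (S (e, k, j)))
      rw [hpatch]
      exact ((hX e).isFree j).image_Tr hGT _
    · refine (hfree c).mono (iUnion₂_subset ?_)
      rintro _ ⟨rfl, -⟩
      rfl
  all_goals simp only [Hits, hbrick]
  · exact congrArg (fun m ↦ Sum.inl (e, m, 0)) (add_comm k l)
  · exact (hX e).inter_nonempty 1
  · exact (hX e).exists_apply_mem
  · exact congrArg (fun m ↦ Sum.inl (e, m, 0)) (add_comm k l)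
  · exact (hX e).inter_nonempty 2
  · exact (hX e).exists_symm_apply_mem
  · exact subset_interior_star (hX e).mem

end Merge

/-! ### Recurrence -/

section Recurrence

-- By finiteness some `r : A` is the value of `φ` at returns to every neighbourhood of `z`.
-- Composing such returns realizes the multiples of `r`, one of which is zero.
lemma exists_apply_mem_and_map_eq_zero {M A X : Type*} [AddMonoid M] [AddGroup A] [Finite A]
    [TopologicalSpace X] {act : M → X → X} (hact : ∀ m, Continuous (act m))
    (hadd : ∀ m m' x, act (m + m') x = act m (act m' x)) (φ : M →+ A) {S : AddSubsemigroup M}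
    {z : X} (hrec : ∀ V, IsOpen V → z ∈ V → ∃ m ∈ S, act m z ∈ V) {V : Set X} (hV : IsOpen V)
    (hz : z ∈ V) : ∃ m ∈ S, φ m = 0 ∧ act m z ∈ V := by
  obtain ⟨r, hr⟩ : ∃ r, ∀ V, IsOpen V → z ∈ V → ∃ m ∈ S, φ m = r ∧ act m z ∈ V := by
    by_contra! h
    choose V hV hz hVr using h
    obtain ⟨m, hm, hmV⟩ := hrec (⋂ r, V r) (isOpen_iInter_of_finite hV) (mem_iInter.mpr hz)
    exact hVr (φ m) m hm rfl (mem_iInter.mp hmV _)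
  have hmul (n : ℕ) : ∃ m ∈ S, φ m = (n + 1) • r ∧ act m z ∈ V := by
    induction n with
    | zero => simpa using hr V hV hz
    | succ n ih =>
      obtain ⟨m, hm, hφm, hmz⟩ := ih
      obtain ⟨m', hm', hφm', hm'z⟩ := hr _ (hV.preimage (hact m)) hmz
      exact ⟨m + m', S.add_mem hm hm', by rw [map_add, hφm, hφm', succ_nsmul _ (n + 1)],
        by rwa [hadd]⟩
  have hmul' := hmul (addOrderOf r - 1)
  rwa [Nat.sub_add_cancel (addOrderOf_pos r), addOrderOf_nsmul_eq_zero] at hmul'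

variable {f : Ann ≃ₜ Ann} {F : Plane ≃ₜ Plane}

lemma isOpenMap_prj : IsOpenMap prj := QuotientAddGroup.isOpenMap_coe.prodMap IsOpenMap.id

lemma IsLift.prj_iterate (hF : IsLift f F) (n : ℕ) (x : Plane) : prj (F^[n] x) = f^[n] (prj x) :=
  (show Function.Semiconj prj F f from hF).iterate_right n x

lemma IsLift.exists_Tr_iterate_mem (hF : IsLift f F) {z : Plane} {φ : ℕ → ℕ} (hφ : ∀ k, 0 < φ k)
    (hret : Tendsto (fun k ↦ f^[φ k] (prj z)) atTop (𝓝 (prj z))) {p : ℤ} {q : ℕ} (hq : 0 < q)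
    {σ : ℤ} (hdrift : Tendsto (fun k ↦ σ * (φ k * (p / q : ℝ) - ((F^[φ k] z).1 - z.1))) atTop atTop)
    {V : Set Plane} (hV : IsOpen V) (hz : z ∈ V) :
    ∃ n : ℕ, 0 < n ∧ ∃ a : ℤ, 0 < σ * (p * n - q * a) ∧ Tr (-a) (F^[n] z) ∈ V := by
  have hnhds : prj '' (V ∩ Metric.ball z 1) ∈ 𝓝 (prj z) := (isOpenMap_prj _
    (hV.inter Metric.isOpen_ball)).mem_nhds (mem_image_of_mem _ ⟨hz, Metric.mem_ball_self one_pos⟩)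
  obtain ⟨k, ⟨v, ⟨hvV, hvz⟩, hv⟩, hk⟩ :=
    ((hret.eventually hnhds).and (hdrift.eventually_gt_atTop |(σ : ℝ)|)).exists
  rw [← hF.prj_iterate, prj_eq_prj_iff] at hv
  obtain ⟨b, rfl⟩ := hv
  refine ⟨φ k, hφ k, -b, ?_, by rwa [neg_neg]⟩
  have hq₀ : (0 : ℝ) < q := Nat.cast_pos.mpr hq
  have hdist : |(F^[φ k] z).1 + b - z.1| ≤ 1 := by
    rw [← Real.dist_eq]
    exact (le_max_left _ _).trans (Metric.mem_ball.mp hvz).le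
  have hσ : -(σ * ((F^[φ k] z).1 + b - z.1)) ≤ |(σ : ℝ)| := by
    refine (neg_le_abs _).trans ?_
    rw [abs_mul]
    exact mul_le_of_le_one_right (abs_nonneg _) hdist
  have hpos : (0 : ℝ) < q * (σ * (φ k * (p / q) + b)) := mul_pos hq₀ (by linarith)
  have hcast : (q * (σ * (φ k * (p / q) + b)) : ℝ) = ((σ * (p * φ k - q * -b) : ℤ) : ℝ) := by
    push_cast
    field_simp
    ring
  exact_mod_cast hcast ▸ hpos

lemma IsLift.exists_Tr_iterate_mem_of_sInf_lt (hF : IsLift f F) {z : Plane} {p : ℤ} {q : ℕ}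
    (hq : 0 < q) (h : sInf (ESet f F (prj z) z) < ((p / q : ℝ) : EReal)) {V : Set Plane}
    (hV : IsOpen V) (hz : z ∈ V) :
    ∃ n : ℕ, 0 < n ∧ ∃ a : ℤ, 0 < 1 * (p * n - q * a) ∧ Tr (-a) (F^[n] z) ∈ V := by
  obtain ⟨ρ, ⟨φ, hφ, hφ₀, hret, hρ⟩, hlt⟩ := sInf_lt_iff.mp h
  obtain ⟨r, hρr, hrp⟩ := EReal.lt_iff_exists_real_btwn.mp hlt
  refine hF.exists_Tr_iterate_mem hφ₀ hret hq (tendsto_atTop_mono' _ ?_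
    ((tendsto_natCast_atTop_atTop.comp hφ.tendsto_atTop).const_mul_atTop
      (sub_pos.mpr (EReal.coe_lt_coe_iff.mp hrp)))) hV hz
  filter_upwards [hρ.eventually (gt_mem_nhds hρr)] with k hk
  rw [EReal.coe_lt_coe_iff, div_lt_iff₀ (Nat.cast_pos.mpr (hφ₀ k))] at hk
  simp only [Function.comp_apply, Int.cast_one]
  linarith

lemma IsLift.exists_Tr_iterate_mem_of_lt_sSup (hF : IsLift f F) {z : Plane} {p : ℤ} {q : ℕ}
    (hq : 0 < q) (h : ((p / q : ℝ) : EReal) < sSup (ESet f F (prj z) z)) {V : Set Plane}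
    (hV : IsOpen V) (hz : z ∈ V) :
    ∃ n : ℕ, 0 < n ∧ ∃ a : ℤ, 0 < -1 * (p * n - q * a) ∧ Tr (-a) (F^[n] z) ∈ V := by
  obtain ⟨ρ, ⟨φ, hφ, hφ₀, hret, hρ⟩, hlt⟩ := lt_sSup_iff.mp h
  obtain ⟨r, hpr, hrρ⟩ := EReal.lt_iff_exists_real_btwn.mp hlt
  refine hF.exists_Tr_iterate_mem hφ₀ hret hq (tendsto_atTop_mono' _ ?_
    ((tendsto_natCast_atTop_atTop.comp hφ.tendsto_atTop).const_mul_atTop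
      (sub_pos.mpr (EReal.coe_lt_coe_iff.mp hpr)))) hV hz
  filter_upwards [hρ.eventually (lt_mem_nhds hrρ)] with k hk
  rw [EReal.coe_lt_coe_iff, lt_div_iff₀ (Nat.cast_pos.mpr (hφ₀ k))] at hk
  simp only [Function.comp_apply, Int.cast_neg, Int.cast_one]
  linarith

lemma Tr_iterate (k : ℤ) (n : ℕ) : (Tr k)^[n] = Tr (n * k) := by
  induction n with
  | zero => simp [funext_iff, Tr_zero]
  | succ n ih =>
    funext x
    rw [Function.iterate_succ_apply', ih, Tr_Tr, Nat.cast_succ, add_one_mul, add_comm]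

lemma exists_Tr_mul_iterate_mem {F : Plane → Plane} (hF : Continuous F)
    (hFT : ∀ k, Function.Commute F (Tr k)) {z : Plane} {p σ : ℤ} {q N : ℕ} (hq : 0 < q) (hN : 0 < N)
    (hret : ∀ V, IsOpen V → z ∈ V →
      ∃ n : ℕ, 0 < n ∧ ∃ a : ℤ, 0 < σ * (p * n - q * a) ∧ Tr (-a) (F^[n] z) ∈ V)
    {V : Set Plane} (hV : IsOpen V) (hz : z ∈ V) :
    ∃ n : ℕ, 0 < n ∧ ∃ k : ℤ, 0 < σ * k ∧ Tr (k * N) ((Tr (-p) ∘ F^[q])^[n] z) ∈ V := by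
  have : NeZero N := ⟨hN.ne'⟩
  have : NeZero q := ⟨hq.ne'⟩
  let S : AddSubsemigroup (ℕ × ℤ) :=
    { carrier := {m | 0 < m.1 ∧ 0 < σ * (p * m.1 - q * m.2)}
      add_mem' := fun {m m'} hm hm' ↦ ⟨Nat.add_pos_left hm.1 _, by
        have hadd := add_pos hm.2 hm'.2
        rw [Prod.fst_add, Prod.snd_add, Nat.cast_add]
        linarith⟩ }
  have hact (m : ℕ × ℤ) : Continuous fun x ↦ Tr (-m.2) (F^[m.1] x) :=
    (continuous_Tr _).comp (hF.iterate m.1)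
  obtain ⟨⟨n, a⟩, ⟨hn, hna⟩, hzero, hnaV⟩ := exists_apply_mem_and_map_eq_zero
    (S := S) hact
    (fun m m' x ↦ by
      rw [((hFT _).iterate_left m.1).eq, Tr_Tr, ← Function.iterate_add_apply, Prod.snd_add, neg_add,
        Prod.fst_add])
    ((Nat.castAddMonoidHom (ZMod (q * N))).prodMap (Int.castAddHom (ZMod N)))
    (fun V hV hz ↦ by
      obtain ⟨n, hn, a, hna, hV⟩ := hret V hV hz
      exact ⟨(n, a), ⟨hn, hna⟩, hV⟩) hV hz
  obtain ⟨hn₀, ha₀⟩ := Prod.ext_iff.mp hzero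
  obtain ⟨n, rfl⟩ := (ZMod.natCast_eq_zero_iff _ _).mp hn₀
  obtain ⟨a, rfl⟩ := (ZMod.intCast_zmod_eq_zero_iff_dvd _ _).mp ha₀
  refine ⟨N * n, Nat.mul_pos hN (Nat.pos_of_mul_pos_left hn), p * n - a, ?_, ?_⟩
  · have hqN : (0 : ℤ) < q * N := by exact_mod_cast Nat.mul_pos hq hN
    refine pos_of_mul_pos_right (a := (q * N : ℤ)) ?_ hqN.le
    refine hna.trans_eq ?_
    push_cast
    ring
  · have hshift : (p * n - a) * N + ((N * n : ℕ) : ℤ) * -p = -(N * a) := by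
      push_cast
      ring
    rw [((hFT (-p)).iterate_left q).symm.comp_iterate, Function.comp_apply, Tr_iterate, Tr_Tr,
      ← Function.iterate_mul, ← mul_assoc, hshift]
    exact hnaV

end Recurrence

section PeriodicPoint

lemma disjoint_image_Tr {A B : Set Plane} {R : ℝ} (hA : A ⊆ Metric.ball 0 R)
    (hB : B ⊆ Metric.ball 0 R) {k k' : ℤ} (hk : 2 * R ≤ |(k - k' : ℝ)|) :
    Disjoint (Tr k '' A) (Tr k' '' B) := by
  have hfst {x : Plane} (hx : x ∈ Metric.ball 0 R) : |x.1| < R :=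
    (norm_fst_le x).trans_lt (mem_ball_zero_iff.mp hx)
  rw [disjoint_left]
  rintro _ ⟨x, hx, rfl⟩ ⟨y, hy, hyx⟩
  have hsub : (k - k' : ℝ) = y.1 - x.1 := by linarith [congrArg Prod.fst hyx, show
    (Tr k x).1 = x.1 + k from rfl, show (Tr k' y).1 = y.1 + k' from rfl]
  rw [hsub] at hk
  linarith [abs_sub y.1 x.1, hfst (hA hx), hfst (hB hy)]

lemma one_le_abs_mul_add_sub_mul_add {n : ℕ} {e e' : Fin n} {k k' : ℤ} (h : (e, k) ≠ (e', k')) :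
    1 ≤ |(k * n + e - (k' * n + e') : ℤ)| := by
  have : NeZero n := ⟨(Fin.pos e).ne'⟩
  refine Int.one_le_abs (sub_ne_zero.mpr fun heq ↦ h ?_)
  exact Prod.swap_injective ((Int.divModEquiv n).symm.injective (a₁ := (k, e)) (a₂ := (k', e')) heq)

variable {G : Plane ≃ₜ Plane}

lemma exists_brickDecomposition_isSite (hGT : ∀ k, Function.Commute G (Tr k))
    (hfix : ∀ x, G x ≠ x) {β : Type*} [Finite β] (z : β → Plane) :
    ∃ (κ : Type) (D : BrickDecomposition 1 κ) (X : β → Fin 3 → Set Plane) (R : ℝ),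
      (∀ c, IsFree G (D.brick c)) ∧ (∀ e, D.IsSite G (z e) (X e)) ∧
      ∀ e j, D.star (X e j) ⊆ Metric.ball 0 R := by
  choose μ hμ C hC hsite using fun e ↦ exists_isSite hfix (z e)
  obtain ⟨ν, hνμ, hν⟩ : ∃ ν : ℝ, (∀ e, ν < μ e) ∧ 0 < ν :=
    ((eventually_all.mpr fun e ↦ (gt_mem_nhds (hμ e)).filter_mono nhdsWithin_le_nhds).and
      self_mem_nhdsWithin).exists (f := 𝓝[>] (0 : ℝ))
  obtain ⟨κ, D, hfree, hD⟩ := exists_brickDecomposition G.continuous hGT hfix hν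
  choose X hX hXC using fun e ↦
    hsite e (D := D) fun c x hx y hy ↦ (hD c x hx y hy).trans (hνμ e)
  obtain ⟨R, -, hR⟩ := (Bornology.isBounded_iUnion.mpr fun e ↦
    (hC e).thickening (δ := ν)).exists_pos_norm_lt
  exact ⟨κ, D, X, R, hfree, hX, fun e j x hx ↦ mem_ball_zero_iff.mpr <| hR x <|
    mem_iUnion.mpr ⟨e, Metric.thickening_subset_of_subset ν (hXC e j)
      (BrickDecomposition.IsFine.star_subset_thickening hD hx)⟩⟩

-- The `e`-th point is moved by `e * L` and the period is `n * L`, with `L` large compared with the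
-- sites, so that the translates of the sites stay apart.
lemma exists_brickDecomposition_isAnchor (hGT : ∀ k, Function.Commute G (Tr k))
    (hfix : ∀ x, G x ≠ x) {n : ℕ} (hn : 0 < n) (z : Fin n → Plane) :
    ∃ (N : ℕ) (ι : Type) (D : BrickDecomposition N ι) (b : Fin n → ℤ → ι) (l : Fin n → ℤ),
      0 < N ∧ (∀ i, IsFree G (D.brick i)) ∧
      ∀ e, D.IsAnchor G (b e) ∧ D.IsAnchor G.symm (b e) ∧
        Tr (l e) (z e) ∈ interior (D.brick (b e 0)) := by
  obtain ⟨κ, D, X, R, hfree, hX, hR⟩ := exists_brickDecomposition_isSite hGT hfix z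
  obtain ⟨L, hL⟩ := exists_nat_gt (max (2 * R) 0)
  have hL₀ : (0 : ℝ) < L := (le_max_right _ _).trans_lt hL
  have hsite (e : Fin n) : D.IsSite G (Tr (e * L) (z e)) fun j ↦ Tr (e * L) '' X e j := by
    simpa only [mul_one] using (hX e).image_Tr hGT (e * L)
  have hstar (e : Fin n) (k : ℤ) (j) : Tr (k * (n * L : ℕ)) '' D.star (Tr (e * L) '' X e j) =
      Tr ((k * n + e) * L) '' D.star (X e j) := by
    have h := BrickDecomposition.star_image_Tr (D := D) (X := X e j) (e * L)
    rw [mul_one] at h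
    rw [h, image_image]
    simp only [Tr_Tr]
    congr! 2
    push_cast
    ring
  obtain ⟨ι, D', b, hfree', hb⟩ := exists_brickDecomposition_isAnchor_of_isSite (N := (n * L : ℕ))
    hGT hfree hsite
    (fun e j ↦ (Isometry.of_dist_eq (dist_Tr _)).lipschitz.isBounded_image
      (Metric.isBounded_ball.subset (BrickDecomposition.subset_star.trans (hR e j))))
    fun e e' k k' hek j j' ↦ by
      rw [hstar, hstar]
      refine disjoint_image_Tr (hR e j) (hR e' j') ((le_max_left _ _).trans (hL.le.trans ?_))
      push_cast
      rw [← sub_mul, abs_mul, abs_of_pos hL₀]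
      exact le_mul_of_one_le_left hL₀.le (by exact_mod_cast one_le_abs_mul_add_sub_mul_add hek)
  exact ⟨n * L, ι, D', b, fun e ↦ e * L, Nat.mul_pos hn (Nat.cast_pos.mp hL₀), hfree', hb⟩

lemma BrickDecomposition.IsAnchor.transGen_hits {N : ℤ} {ι : Type*} {D : BrickDecomposition N ι}
    {G : Plane → Plane} {b : ℤ → ι} (hb : D.IsAnchor G b) (hGT : ∀ k, Function.Commute G (Tr k))
    {z : Plane} {l k : ℤ} {n : ℕ} (hn : 0 < n) (hz : Tr l z ∈ D.brick (b 0))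
    (hGz : Tr l (Tr (k * N) (G^[n] z)) ∈ D.brick (b 0)) :
    Relation.TransGen (D.Hits G) (b 0) (b (-k)) := by
  obtain ⟨n, rfl⟩ := Nat.exists_eq_add_of_le' hn
  refine transGen_hits_of_iterate_mem (n := n) hz ?_
  have hmem := D.mapsTo_Tr (-k) _ hGz
  rwa [hb.shift_apply, zero_add, Tr_Tr, Tr_Tr, neg_mul, neg_add_cancel_comm,
    ← (hGT l).iterate_left] at hmem

theorem IsLift.exists_iterate_eq_Tr {f : Ann ≃ₜ Ann} {F : Plane ≃ₜ Plane} (hF : IsLift f F)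
    (hiso : IsotopicToId f) (hf : IntersectionProperty f) {z₁ z₂ : Plane} {p : ℤ} {q : ℕ}
    (hq : 0 < q) (hz₁ : sInf (ESet f F (prj z₁) z₁) < ((p / q : ℝ) : EReal))
    (hz₂ : ((p / q : ℝ) : EReal) < sSup (ESet f F (prj z₂) z₂)) : ∃ x, F^[q] x = Tr p x := by
  by_contra! h
  have hG := hF.isConservativeLift hiso hf p hq
  have hcoe := coe_deckHomeomorph_mul_pow F (-p) q
  set G := deckHomeomorph (-p) * F ^ q
  have hGT := hG.commute_Tr
  have hfix (x : Plane) : G x ≠ x := fun hx ↦ h x <| by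
    rw [← congrArg (Tr p) hx, hcoe, Function.comp_apply, Tr_Tr, add_neg_cancel, Tr_zero]
  obtain ⟨N, ι, D, b, l, hN, hfree, hb⟩ :=
    exists_brickDecomposition_isAnchor hGT hfix two_pos ![z₁, z₂]
  obtain ⟨⟨hb₁, hb₁_symm, hz₁b⟩, hb₂, hb₂_symm, hz₂b⟩ := And.intro (hb 0) (hb 1)
  have hFT := hF.commute_Tr hiso
  obtain ⟨n₁, hn₁, M₁, hM₁, hret₁⟩ := exists_Tr_mul_iterate_mem F.continuous hFT hq hN
    (fun V ↦ hF.exists_Tr_iterate_mem_of_sInf_lt hq hz₁)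
    (isOpen_interior.preimage (continuous_Tr _)) hz₁b
  obtain ⟨n₂, hn₂, M₂, hM₂, hret₂⟩ := exists_Tr_mul_iterate_mem F.continuous hFT hq hN
    (fun V ↦ hF.exists_Tr_iterate_mem_of_lt_sSup hq hz₂)
    (isOpen_interior.preimage (continuous_Tr _)) hz₂b
  rw [← hcoe] at hret₁ hret₂
  exact BrickDecomposition.false_of_transGen_hits hG hfix (Nat.cast_ne_zero.mpr hN.ne') hfree
    hb₁ hb₁_symm hb₂ hb₂_symm (M := M₁) (M' := -M₂) (by lia) (by lia)
    (hb₁.transGen_hits hGT hn₁ (interior_subset hz₁b) (interior_subset hret₁))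
    (hb₂.transGen_hits hGT hn₂ (interior_subset hz₂b) (interior_subset hret₂))

end PeriodicPoint

/-- Proposition 4.2: if `z₁, z₂` are positively recurrent points with
`ρ⁻(F;z₁) < ρ⁺(F;z₂)`, then for every irreducible rational `p/q` strictly in between,
there exists a periodic point of period `q` with rotation number `p/q`. -/
theorem rational_in_rotation_gap_periodic_point
    (f : Ann ≃ₜ Ann) (F : Plane ≃ₜ Plane)
    (hiso : IsotopicToId f) (hint : IntersectionProperty f) (hlift : IsLift f F)
    (z₁ z₂ : Ann) (zt₁ zt₂ : Plane) (hzt₁ : prj zt₁ = z₁) (hzt₂ : prj zt₂ = z₂)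
    (hrec₁ : PosRec ⇑f z₁) (hrec₂ : PosRec ⇑f z₂)
    (hgap : sInf (ESet ⇑f ⇑F z₁ zt₁) < sSup (ESet ⇑f ⇑F z₂ zt₂))
    (p : ℤ) (q : ℕ) (hq : 0 < q) (hcop : Nat.Coprime p.natAbs q)
    (hleft : sInf (ESet ⇑f ⇑F z₁ zt₁) < (((p : ℝ) / (q : ℝ) : ℝ) : EReal))
    (hright : (((p : ℝ) / (q : ℝ) : ℝ) : EReal) < sSup (ESet ⇑f ⇑F z₂ zt₂)) :
    ∃ z : Ann, (⇑f)^[q] z = z ∧ ∀ zt : Plane, prj zt = z → (⇑F)^[q] zt = Tr p zt := by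
  subst hzt₁ hzt₂
  obtain ⟨x, hx⟩ := hlift.exists_iterate_eq_Tr hiso hint hq hleft hright
  have hper : prj (F^[q] x) = prj x := prj_eq_prj_iff.mpr ⟨p, hx⟩
  refine ⟨prj x, by rwa [← hlift.prj_iterate], fun y hy ↦ ?_⟩
  obtain ⟨k, rfl⟩ := prj_eq_prj_iff.mp hy
  rw [(hlift.commute_Tr hiso k).iterate_left q, hx, commute_Tr_Tr]
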